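/- For every integer j ≥ 0, the space S_{j,1}(Γ₂) of Siegel cusp forms of degree 2 and weight (j,1) on Γ₂ = Sp(4,ℤ) is zero. -/

import Mathlib

noncomputable section

open Matrix Complex Filter Topology

/-- The standard symplectic form matrix of size 4. -/
def J4 : Matrix (Fin 4) (Fin 4) ℤ := !![0,0,1,0; 0,0,0,1; -1,0,0,0; 0,-1,0,0]

/-- The Siegel modular group `Γ₂ = Sp(4,ℤ)`, as a set of 4×4 integer matrices. -/
def Sp4Z : Set (Matrix (Fin 4) (Fin 4) ℤ) := {γ | γᵀ * J4 * γ = J4}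

/-- The principal congruence subgroup `Γ₂[2]` of level 2. -/
def Sp4Z2 : Set (Matrix (Fin 4) (Fin 4) ℤ) :=
  {γ | γ ∈ Sp4Z ∧ ∀ i j, ((γ i j : ZMod 2) = if i = j then 1 else 0)}

/-- The Siegel upper half space of degree 2: symmetric 2×2 complex matrices with
positive definite imaginary part (encoded as functions `Fin 2 → Fin 2 → ℂ`). -/
def H2 : Set (Fin 2 → Fin 2 → ℂ) :=
  {τ | (Matrix.of τ).IsSymm ∧ (Matrix.of fun i j => (τ i j).im).PosDef}

/-- The four 2×2 blocks of a 4×4 integer matrix, as complex matrices. -/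
def blk (γ : Matrix (Fin 4) (Fin 4) ℤ) (r s : Fin 2) : Matrix (Fin 2) (Fin 2) ℂ :=
  Matrix.of fun i j =>
    ((γ ⟨2 * (r : ℕ) + (i : ℕ), by have h1 := r.isLt; have h2 := i.isLt; omega⟩
        ⟨2 * (s : ℕ) + (j : ℕ), by have h1 := s.isLt; have h2 := j.isLt; omega⟩ : ℤ) : ℂ)

/-- The factor `cτ + d`. -/
def den (γ : Matrix (Fin 4) (Fin 4) ℤ) (τ : Fin 2 → Fin 2 → ℂ) : Matrix (Fin 2) (Fin 2) ℂ :=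
  blk γ 1 0 * Matrix.of τ + blk γ 1 1

/-- The action `γ·τ = (aτ+b)(cτ+d)⁻¹` of `Sp(4)` on the Siegel upper half space. -/
def moeb (γ : Matrix (Fin 4) (Fin 4) ℤ) (τ : Fin 2 → Fin 2 → ℂ) : Fin 2 → Fin 2 → ℂ :=
  fun i j => ((blk γ 0 0 * Matrix.of τ + blk γ 0 1) * (den γ τ)⁻¹) i j

/-- Matrix coefficients of the `j`-th symmetric power of the standard representation of
`GL(2,ℂ)`, in the basis `x₁^(j-i) x₂^i`. -/
def symCoeff (j : ℕ) (m : Matrix (Fin 2) (Fin 2) ℂ) (l i : Fin (j + 1)) : ℂ :=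
  (((Polynomial.C (m 0 0) + Polynomial.C (m 1 0) * Polynomial.X) ^ (j - (l : ℕ)) *
    (Polynomial.C (m 0 1) + Polynomial.C (m 1 1) * Polynomial.X) ^ (l : ℕ)).coeff i)

/-- The `j`-th symmetric power `Sym^j(m)` acting on coordinate vectors. -/
def symAct (j : ℕ) (m : Matrix (Fin 2) (Fin 2) ℂ) (v : Fin (j + 1) → ℂ) : Fin (j + 1) → ℂ :=
  fun i => ∑ l, symCoeff j m l i * v l

lemma symAct_add (j : ℕ) (m : Matrix (Fin 2) (Fin 2) ℂ) (v w : Fin (j + 1) → ℂ) :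
    symAct j m (v + w) = symAct j m v + symAct j m w := by
  funext i
  simp [symAct, mul_add, Finset.sum_add_distrib]

lemma symAct_smul (j : ℕ) (m : Matrix (Fin 2) (Fin 2) ℂ) (a : ℂ) (v : Fin (j + 1) → ℂ) :
    symAct j m (a • v) = a • symAct j m v := by
  funext i
  simp only [symAct, Pi.smul_apply, smul_eq_mul, Finset.mul_sum]
  exact Finset.sum_congr rfl fun l _ => by ring

lemma symAct_zero (j : ℕ) (m : Matrix (Fin 2) (Fin 2) ℂ) : symAct j m 0 = 0 := by
  funext i; simp [symAct]

/-- The weight `(j,k)` automorphy action `Sym^j(m) ⊗ det(m)^k`. -/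
def wt (j : ℕ) (k : ℤ) (m : Matrix (Fin 2) (Fin 2) ℂ) (v : Fin (j + 1) → ℂ) :
    Fin (j + 1) → ℂ :=
  (m.det ^ k) • symAct j m v

lemma wt_add (j : ℕ) (k : ℤ) (m : Matrix (Fin 2) (Fin 2) ℂ) (v w : Fin (j + 1) → ℂ) :
    wt j k m (v + w) = wt j k m v + wt j k m w := by
  simp [wt, symAct_add, smul_add]

lemma wt_smul (j : ℕ) (k : ℤ) (m : Matrix (Fin 2) (Fin 2) ℂ) (a : ℂ) (v : Fin (j + 1) → ℂ) :
    wt j k m (a • v) = a • wt j k m v := by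
  rw [wt, wt, symAct_smul, smul_comm]

lemma wt_zero (j : ℕ) (k : ℤ) (m : Matrix (Fin 2) (Fin 2) ℂ) : wt j k m 0 = 0 := by
  simp [wt, symAct_zero]

/-- The slash operation `(F|γ)(τ) = Sym^j(cτ+d)⁻¹ det(cτ+d)⁻ᵏ F(γ·τ)`. -/
def slashS (j : ℕ) (k : ℤ) (γ : Matrix (Fin 4) (Fin 4) ℤ)
    (F : (Fin 2 → Fin 2 → ℂ) → (Fin (j + 1) → ℂ)) (τ : Fin 2 → Fin 2 → ℂ) :
    Fin (j + 1) → ℂ :=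
  ((den γ τ).det ^ (-k)) • symAct j ((den γ τ)⁻¹) (F (moeb γ τ))

lemma slashS_add (j : ℕ) (k : ℤ) (γ : Matrix (Fin 4) (Fin 4) ℤ)
    (F G : (Fin 2 → Fin 2 → ℂ) → (Fin (j + 1) → ℂ)) (τ : Fin 2 → Fin 2 → ℂ) :
    slashS j k γ (F + G) τ = slashS j k γ F τ + slashS j k γ G τ := by
  simp [slashS, symAct_add, smul_add]

lemma slashS_smul (j : ℕ) (k : ℤ) (γ : Matrix (Fin 4) (Fin 4) ℤ) (a : ℂ)
    (F : (Fin 2 → Fin 2 → ℂ) → (Fin (j + 1) → ℂ)) (τ : Fin 2 → Fin 2 → ℂ) :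
    slashS j k γ (a • F) τ = a • slashS j k γ F τ := by
  simp only [slashS, Pi.smul_apply, symAct_smul]
  rw [smul_comm]

lemma slashS_zero (j : ℕ) (k : ℤ) (γ : Matrix (Fin 4) (Fin 4) ℤ) (τ : Fin 2 → Fin 2 → ℂ) :
    slashS j k γ (0 : (Fin 2 → Fin 2 → ℂ) → (Fin (j + 1) → ℂ)) τ = 0 := by
  simp [slashS, symAct_zero]

/-- The diagonal point `diag(τ₁,τ₂)` of the Siegel upper half space. -/
def diagH (τ₁ τ₂ : ℂ) : Fin 2 → Fin 2 → ℂ :=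
  fun i j => if i = j then (if i = 0 then τ₁ else τ₂) else 0

/-- `F` is a Siegel cusp form of degree 2 and weight `(j,k)` on `Γ`, with character `χ`:
holomorphic on `ℍ₂`, transforming by `F(γ·τ) = χ(γ) Sym^j(cτ+d) det(cτ+d)^k F(τ)` for `γ ∈ Γ`,
with `(F|γ)(diag(τ₁,it)) → 0` as `t → ∞` for every `γ ∈ Γ₂`, and (normalization) vanishing
off `ℍ₂`. -/
def IsSiegelCuspForm (j : ℕ) (k : ℤ) (Γ : Set (Matrix (Fin 4) (Fin 4) ℤ))
    (χ : Matrix (Fin 4) (Fin 4) ℤ → ℂ)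
    (F : (Fin 2 → Fin 2 → ℂ) → (Fin (j + 1) → ℂ)) : Prop :=
  DifferentiableOn ℂ F H2 ∧
  (∀ γ ∈ Γ, ∀ τ ∈ H2, F (moeb γ τ) = χ γ • wt j k (den γ τ) (F τ)) ∧
  (∀ γ ∈ Sp4Z, ∀ τ₁ : ℂ, 0 < τ₁.im →
    Tendsto (fun t : ℝ => slashS j k γ F (diagH τ₁ (t * Complex.I))) atTop (𝓝 0)) ∧
  (∀ τ, τ ∉ H2 → F τ = 0)

/-- The space `S_{j,k}(Γ, χ)` of Siegel cusp forms of degree 2 and weight `(j,k)` on `Γ`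
with character `χ`, as a complex vector space. -/
def SiegelCusp (j : ℕ) (k : ℤ) (Γ : Set (Matrix (Fin 4) (Fin 4) ℤ))
    (χ : Matrix (Fin 4) (Fin 4) ℤ → ℂ) :
    Submodule ℂ ((Fin 2 → Fin 2 → ℂ) → (Fin (j + 1) → ℂ)) where
  carrier := {F | IsSiegelCuspForm j k Γ χ F}
  add_mem' := by
    rintro F G hF hG
    refine ⟨hF.1.add hG.1, ?_, ?_, ?_⟩
    · intro γ hγ τ hτ
      show F (moeb γ τ) + G (moeb γ τ) = χ γ • wt j k (den γ τ) (F τ + G τ)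
      rw [wt_add, smul_add, hF.2.1 γ hγ τ hτ, hG.2.1 γ hγ τ hτ]
    · intro γ hγ τ₁ hτ
      have h := (hF.2.2.1 γ hγ τ₁ hτ).add (hG.2.2.1 γ hγ τ₁ hτ)
      rw [add_zero] at h
      exact h.congr fun t => (slashS_add j k γ F G _).symm
    · intro τ hτ
      show F τ + G τ = 0
      rw [hF.2.2.2 τ hτ, hG.2.2.2 τ hτ, add_zero]
  zero_mem' := by
    refine ⟨?_, ?_, ?_, ?_⟩
    · exact differentiableOn_const 0
    · intro γ hγ τ hτ
      show (0 : Fin (j + 1) → ℂ) = χ γ • wt j k (den γ τ) 0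
      rw [wt_zero, smul_zero]
    · intro γ hγ τ₁ hτ
      have : (fun t : ℝ => slashS j k γ (0 : (Fin 2 → Fin 2 → ℂ) → (Fin (j + 1) → ℂ))
          (diagH τ₁ (t * Complex.I))) = fun _ => 0 := by
        funext t; exact slashS_zero j k γ _
      rw [this]
      exact tendsto_const_nhds
    · intro τ _; rfl
  smul_mem' := by
    rintro a F hF
    refine ⟨hF.1.const_smul a, ?_, ?_, ?_⟩
    · intro γ hγ τ hτ
      show a • F (moeb γ τ) = χ γ • wt j k (den γ τ) (a • F τ)
      rw [hF.2.1 γ hγ τ hτ, wt_smul, smul_comm]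
    · intro γ hγ τ₁ hτ
      have h := (hF.2.2.1 γ hγ τ₁ hτ).const_smul a
      rw [smul_zero] at h
      exact h.congr fun t => (slashS_smul j k γ a F _).symm
    · intro τ hτ
      show a • F τ = 0
      rw [hF.2.2.2 τ hτ, smul_zero]

/-- `ε` is (on `Γ₂`) the unique nontrivial homomorphism `Γ₂ → {±1}`. -/
def IsEps (ε : Matrix (Fin 4) (Fin 4) ℤ → ℂ) : Prop :=
  (∀ γ ∈ Sp4Z, ε γ = 1 ∨ ε γ = -1) ∧
  (∀ γ ∈ Sp4Z, ∀ δ ∈ Sp4Z, ε (γ * δ) = ε γ * ε δ) ∧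
  (∃ γ ∈ Sp4Z, ε γ ≠ 1)

/-!
The Fourier–Jacobi coefficients of the last coordinate of a Siegel cusp form `F` of weight `(j, 1)`
are Jacobi cusp forms of weight `1` and some index `m > 0`. The Taylor coefficients at `z = 0` of
such a form `φ` are quasi-modular, which has two consequences: the Fourier coefficients of `φ` lie
in a finitely generated subgroup of `ℂ`, and the forms of index `m` with coefficients in a given
such subgroup form a finitely generated abelian group. For a prime `p` the Hecke operator `heckeN`
acts on this group, hence is a root of a monic integer polynomial there. If `p ∤ m` is ramified in
`ℚ(√-D)`, where `D = 4nm - r² > 0`, then `heckeN - (p + 1)` acts on the coefficients at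
`(p²ᵏn, pᵏr)`, `k ≥ 0`, essentially as `x_k ↦ p x_{k+1} + x_{k-1}`. Modulo `p` this is the shift
operator, which no monic polynomial annihilates on a nonzero sequence; so the coefficients are
infinitely divisible by `p` and vanish. Now let `A(T)` be a Fourier coefficient of `F` with
`D = 4 det T`, and let `p` be a prime ramified in `ℚ(√-D)`. Moving `T` by `SL₂(ℤ)` makes its last
diagonal entry prime to `p` up to the content of `T`, and the vanishing of the last coordinate at
sufficiently many such translates gives `A(T) = 0`.
-/

section TridiagonalOperator

open Polynomial

lemma map_aeval_of_intertwines {R V W : Type*} [CommSemiring R] [AddCommMonoid V]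
    [AddCommMonoid W] [Module R V] [Module R W] {A : Module.End R V} {B : Module.End R W}
    {f : V →ₗ[R] W} (h : ∀ v, f (A v) = B (f v)) (P : R[X]) (v : V) :
    f (aeval A P v) = aeval B P (f v) := by
  have hpow (n : ℕ) (v : V) : f ((A ^ n) v) = (B ^ n) (f v) :=
    (LinearMap.congr_fun
      (Module.End.commute_pow_left_of_commute (LinearMap.ext fun v => (h v).symm) n) v).symm
  induction P using Polynomial.induction_on' with
  | add p q hp hq => simp [hp, hq]
  | monomial n a => simp [aeval_monomial, hpow]

lemma aeval_mulLeft_apply {R A : Type*} [CommSemiring R] [Semiring A] [Algebra R A] (a b : A)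
    (P : R[X]) : aeval (LinearMap.mulLeft R a) P b = aeval a P * b :=
  LinearMap.congr_fun (aeval_algHom_apply (Algebra.lmul R A) a P) b

lemma aeval_powerSeries_X {R S : Type*} [CommSemiring R] [CommSemiring S] [Algebra R S]
    (P : R[X]) :
    aeval (PowerSeries.X : PowerSeries S) P =
      ((P.map (algebraMap R S) : S[X]) : PowerSeries S) := by
  have hX : coeToPowerSeries.algHom S (X : R[X]) = PowerSeries.X := by
    simp [coeToPowerSeries.algHom_apply]
  rw [← hX, aeval_algHom_apply, aeval_X_left_apply, coeToPowerSeries.algHom_apply]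
  simp

/-- The operator `x_k ↦ p x_{k+1} + x_{k-1}` on sequences in `G`, with the convention `x_{-1} = 0`.
Modulo `p` it is the right shift. -/
def tridiagonalOp (p : ℤ) (G : Type*) [AddCommGroup G] : Module.End ℤ (ℕ → G) where
  toFun x k := p • x (k + 1) + if k = 0 then 0 else x (k - 1)
  map_add' x y := by
    funext k
    by_cases h : k = 0
    · simp [h]
    · simp only [Pi.add_apply, smul_add, if_neg h]
      abel
  map_smul' a x := by
    funext k; by_cases h : k = 0 <;> simp [h, smul_comm a p]

variable {p : ℕ} [Fact p.Prime] {P : ℤ[X]}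

lemma dvd_of_aeval_tridiagonalOp_eq_zero (hP : P.map (Int.castRingHom (ZMod p)) ≠ 0) {x : ℕ → ℤ}
    (hx : aeval (tridiagonalOp p ℤ) P x = 0) (k : ℕ) : (p : ℤ) ∣ x k := by
  let reduction : (ℕ → ℤ) →ₗ[ℤ] PowerSeries (ZMod p) :=
    AddMonoidHom.toIntLinearMap
      { toFun x := PowerSeries.mk fun k => (x k : ZMod p)
        map_zero' := by ext; simp
        map_add' x y := by ext; simp }
  have intertwines (v : ℕ → ℤ) : reduction (tridiagonalOp p ℤ v) =
      LinearMap.mulLeft ℤ (PowerSeries.X : PowerSeries (ZMod p)) (reduction v) := by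
    ext k
    cases k <;> simp [reduction, tridiagonalOp, PowerSeries.coeff_succ_X_mul]
  have hmul := map_aeval_of_intertwines intertwines P x
  replace hmul := hmul.trans (aeval_mulLeft_apply PowerSeries.X (reduction x) P)
  rw [hx, map_zero, aeval_powerSeries_X] at hmul
  have hzero : reduction x = 0 :=
    (mul_eq_zero.mp hmul.symm).resolve_left (mt Polynomial.coe_eq_zero_iff.mp hP)
  have hcoeff := congrArg (PowerSeries.coeff k) hzero
  simp only [reduction, AddMonoidHom.coe_toIntLinearMap, AddMonoidHom.coe_mk, ZeroHom.coe_mk,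
    PowerSeries.coeff_mk, map_zero] at hcoeff
  exact (ZMod.intCast_zmod_eq_zero_iff_dvd _ _).mp hcoeff

lemma pow_dvd_of_aeval_tridiagonalOp_eq_zero (hP : P.map (Int.castRingHom (ZMod p)) ≠ 0) (n : ℕ)
    {x : ℕ → ℤ} (hx : aeval (tridiagonalOp p ℤ) P x = 0) (k : ℕ) : (p : ℤ) ^ n ∣ x k := by
  induction n generalizing x with
  | zero => simp
  | succ n ih =>
    choose y hy using dvd_of_aeval_tridiagonalOp_eq_zero hP hx
    have hxy : x = (p : ℤ) • y := funext hy
    rw [hxy, map_smul] at hx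
    have hp : (p : ℤ) ≠ 0 := mod_cast (Fact.out : p.Prime).ne_zero
    rw [hy, pow_succ']
    exact mul_dvd_mul_left _ (ih ((smul_eq_zero.mp hx).resolve_left hp))

lemma eq_zero_of_aeval_tridiagonalOp_int_eq_zero (hP : P.map (Int.castRingHom (ZMod p)) ≠ 0)
    {x : ℕ → ℤ} (hx : aeval (tridiagonalOp p ℤ) P x = 0) : x = 0 := by
  funext k
  by_contra hk
  have hfin : FiniteMultiplicity (p : ℤ) (x k) :=
    Int.finiteMultiplicity_iff.mpr ⟨by simpa using (Fact.out : p.Prime).ne_one, hk⟩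
  obtain ⟨n, hn⟩ := hfin
  exact hn (pow_dvd_of_aeval_tridiagonalOp_eq_zero hP (n + 1) hx k)

lemma eq_zero_of_aeval_tridiagonalOp_eq_zero {G : Type*} [AddCommGroup G] [Module.Free ℤ G]
    (hP : P.map (Int.castRingHom (ZMod p)) ≠ 0) {x : ℕ → G}
    (hx : aeval (tridiagonalOp p G) P x = 0) : x = 0 := by
  let b := Module.Free.chooseBasis ℤ G
  have hcoord (i : Module.Free.ChooseBasisIndex ℤ G) : (fun k => b.coord i (x k)) = 0 := by
    have intertwines (v : ℕ → G) : (b.coord i).compLeft ℕ (tridiagonalOp p G v) =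
        tridiagonalOp p ℤ ((b.coord i).compLeft ℕ v) := by
      funext k
      by_cases h : k = 0 <;> simp [tridiagonalOp, h]
    have haeval := map_aeval_of_intertwines intertwines P x
    rw [hx, map_zero] at haeval
    exact eq_zero_of_aeval_tridiagonalOp_int_eq_zero hP haeval.symm
  exact funext fun k => b.ext_elem fun i => by simpa using congrFun (hcoord i) k

end TridiagonalOperator

section JacobiForms

/-- The normalized exponential `e(x) = exp(2πix)`. -/
def expTwoPiI (x : ℂ) : ℂ := Complex.exp (2 * Real.pi * I * x)

lemma expTwoPiI_add (x y : ℂ) : expTwoPiI (x + y) = expTwoPiI x * expTwoPiI y := by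
  rw [expTwoPiI, mul_add, Complex.exp_add]; rfl

lemma expTwoPiI_zero : expTwoPiI 0 = 1 := by simp [expTwoPiI]

lemma expTwoPiI_ne_zero (x : ℂ) : expTwoPiI x ≠ 0 := Complex.exp_ne_zero _

lemma expTwoPiI_intCast (n : ℤ) : expTwoPiI n = 1 := by
  rw [expTwoPiI, Complex.exp_eq_one_iff]
  exact ⟨n, by ring⟩

lemma expTwoPiI_natCast_mul (n : ℕ) (x : ℂ) : expTwoPiI (n * x) = expTwoPiI x ^ n := by
  rw [expTwoPiI, expTwoPiI, ← Complex.exp_nat_mul]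
  ring_nf

lemma norm_expTwoPiI (x : ℂ) : ‖expTwoPiI x‖ = Real.exp (-(2 * Real.pi * x.im)) := by
  rw [expTwoPiI, Complex.norm_exp]
  simp

lemma neg_one_div_im_pos {τ : ℂ} (hτ : 0 < τ.im) : 0 < (-1 / τ).im := by
  have hτ0 : τ ≠ 0 := fun h => by simp [h] at hτ
  simpa [Complex.div_im, neg_div] using div_pos hτ (Complex.normSq_pos.mpr hτ0)

/-- The term `c(n, r) qⁿ ζʳ`, with `q = e(τ)` and `ζ = e(z)`, of a Fourier–Jacobi series. -/
def jacobiTerm (c : ℤ → ℤ → ℂ) (τ z : ℂ) (t : ℤ × ℤ) : ℂ :=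
  c t.1 t.2 * expTwoPiI (t.1 * τ + t.2 * z)

/-- The Fourier–Jacobi series `∑ c(n, r) qⁿ ζʳ`; it is `0` by convention where it diverges. -/
def jacobiSeries (c : ℤ → ℤ → ℂ) (τ z : ℂ) : ℂ := ∑' t, jacobiTerm c τ z t

/-- `c` is the array of Fourier coefficients of a Jacobi cusp form of weight `1` and index `m` on
the full Jacobi group. The lattice `ℤτ` acts through the symmetry `shift` of the coefficients, and
`slash_S` is the transformation law under the generator `τ ↦ -1/τ` of `SL(2,ℤ)`; invariance under
`τ ↦ τ + 1` and `z ↦ z + 1` is built into the Fourier expansion. -/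
structure IsJacobiCuspForm (m : ℤ) (c : ℤ → ℤ → ℂ) : Prop where
  support : ∀ n r, c n r ≠ 0 → r ^ 2 < 4 * n * m
  summable : ∀ τ z : ℂ, 0 < τ.im → Summable (jacobiTerm c τ z)
  shift : ∀ n r, c (n + r + m) (r + 2 * m) = c n r
  slash_S : ∀ τ z : ℂ, 0 < τ.im →
    jacobiSeries c (-1 / τ) (z / τ) = τ * expTwoPiI (m * z ^ 2 / τ) * jacobiSeries c τ z

lemma jacobiSeries_add_int (c : ℤ → ℤ → ℂ) (τ z : ℂ) (a b : ℤ) :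
    jacobiSeries c (τ + a) (z + b) = jacobiSeries c τ z := by
  refine tsum_congr fun t => ?_
  rw [jacobiTerm, jacobiTerm, show (t.1 : ℂ) * (τ + a) + t.2 * (z + b) =
    (t.1 * τ + t.2 * z) + ((t.1 * a + t.2 * b : ℤ) : ℂ) by push_cast; ring, expTwoPiI_add,
    expTwoPiI_intCast, mul_one]

/-- The translation `(n, r) ↦ (n + rl + ml², r + 2ml)` through which `z ↦ z + lτ` acts on the
exponents of a Jacobi form of index `m`. It preserves the discriminant `4nm - r²`. -/
def heisenbergShift (m l : ℤ) : ℤ × ℤ ≃ ℤ × ℤ where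
  toFun t := (t.1 + t.2 * l + m * l ^ 2, t.2 + 2 * m * l)
  invFun t := (t.1 - t.2 * l + m * l ^ 2, t.2 - 2 * m * l)
  left_inv t := by ext <;> simp; ring
  right_inv t := by ext <;> simp; ring

lemma heisenbergShift_apply (m l n r : ℤ) :
    heisenbergShift m l (n, r) = (n + r * l + m * l ^ 2, r + 2 * m * l) := rfl

lemma heisenbergShift_heisenbergShift (m k l : ℤ) (t : ℤ × ℤ) :
    heisenbergShift m k (heisenbergShift m l t) = heisenbergShift m (k + l) t := by
  simp only [heisenbergShift, Equiv.coe_fn_mk, Prod.mk.injEq]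
  constructor <;> ring

lemma discriminant_heisenbergShift (m l : ℤ) (t : ℤ × ℤ) :
    4 * (heisenbergShift m l t).1 * m - (heisenbergShift m l t).2 ^ 2 = 4 * t.1 * m - t.2 ^ 2 := by
  simp only [heisenbergShift, Equiv.coe_fn_mk]
  ring

namespace IsJacobiCuspForm

variable {m : ℤ} {c c' : ℤ → ℤ → ℂ}

lemma hasSum (h : IsJacobiCuspForm m c) {τ : ℂ} (z : ℂ) (hτ : 0 < τ.im) :
    HasSum (jacobiTerm c τ z) (jacobiSeries c τ z) := (h.summable τ z hτ).hasSum

lemma of_hasSum {Φ : ℂ → ℂ → ℂ} (support : ∀ n r, c n r ≠ 0 → r ^ 2 < 4 * n * m)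
    (shift : ∀ n r, c (n + r + m) (r + 2 * m) = c n r)
    (hasSum : ∀ τ z : ℂ, 0 < τ.im → HasSum (jacobiTerm c τ z) (Φ τ z))
    (slash_S : ∀ τ z : ℂ, 0 < τ.im →
      Φ (-1 / τ) (z / τ) = τ * expTwoPiI (m * z ^ 2 / τ) * Φ τ z) :
    IsJacobiCuspForm m c where
  support := support
  summable τ z hτ := (hasSum τ z hτ).summable
  shift := shift
  slash_S τ z hτ := by
    have hΦ {τ : ℂ} (z : ℂ) (hτ : 0 < τ.im) : jacobiSeries c τ z = Φ τ z :=
      (hasSum τ z hτ).tsum_eq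
    rw [hΦ _ (neg_one_div_im_pos hτ), hΦ _ hτ, slash_S τ z hτ]

lemma zero (m : ℤ) : IsJacobiCuspForm m 0 :=
  of_hasSum (Φ := 0) (by simp) (by simp)
    (fun τ z _ => hasSum_zero.congr_fun fun t => by simp [jacobiTerm]) (by simp)

lemma add (h : IsJacobiCuspForm m c) (h' : IsJacobiCuspForm m c') :
    IsJacobiCuspForm m (c + c') := by
  refine of_hasSum (Φ := fun τ z => jacobiSeries c τ z + jacobiSeries c' τ z) (fun n r hc => ?_)
    (fun n r => by simp [h.shift, h'.shift]) (fun τ z hτ => ?_) (fun τ z hτ => ?_)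
  · by_cases h0 : c n r = 0
    · exact h'.support n r (by simpa [h0] using hc)
    · exact h.support n r h0
  · exact ((h.hasSum z hτ).add (h'.hasSum z hτ)).congr_fun fun t => by simp [jacobiTerm, add_mul]
  · rw [h.slash_S _ _ hτ, h'.slash_S _ _ hτ, mul_add]

lemma smul (h : IsJacobiCuspForm m c) (a : ℂ) : IsJacobiCuspForm m (a • c) := by
  refine of_hasSum (Φ := fun τ z => a * jacobiSeries c τ z)
    (fun n r hc => h.support n r (right_ne_zero_of_mul hc)) (fun n r => by simp [h.shift])
    (fun τ z hτ => ?_) (fun τ z hτ => ?_)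
  · exact ((h.hasSum z hτ).mul_left a).congr_fun fun t => by simp [jacobiTerm, mul_assoc]
  · rw [h.slash_S _ _ hτ]
    ring

lemma apply_heisenbergShift (h : IsJacobiCuspForm m c) (l n r : ℤ) :
    c (n + r * l + m * l ^ 2) (r + 2 * m * l) = c n r := by
  induction l using Int.induction_on with
  | zero => simp
  | succ i ih =>
    rw [← ih, ← h.shift (n + r * i + m * (i : ℤ) ^ 2)]
    congr 1 <;> ring
  | pred i ih =>
    rw [← ih, ← h.shift (n + r * (-i - 1) + m * (-(i : ℤ) - 1) ^ 2)]
    congr 1 <;> ring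

lemma jacobiSeries_add_mul_tau (h : IsJacobiCuspForm m c) (τ z : ℂ) (l : ℤ) :
    jacobiSeries c τ (z + l * τ) =
      expTwoPiI (-(m * (l ^ 2 * τ + 2 * l * z))) * jacobiSeries c τ z := by
  rw [jacobiSeries, jacobiSeries, ← tsum_mul_left,
    ← (heisenbergShift m l).tsum_eq (fun t => expTwoPiI _ * jacobiTerm c τ z t)]
  refine tsum_congr fun t => ?_
  simp only [jacobiTerm, heisenbergShift, Equiv.coe_fn_mk]
  rw [h.apply_heisenbergShift, mul_left_comm, ← expTwoPiI_add]
  congr 2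
  push_cast
  ring

end IsJacobiCuspForm

section ModularInvariance

open UpperHalfPlane MatrixGroups

variable {m : ℤ} {c : ℤ → ℤ → ℂ}

/-- The automorphy factor `(cτ + d) e(mcz²/(cτ + d))` of weight `1` and index `m` for the action
`γ·(τ, z) = (γτ, z/(cτ + d))` of `SL(2,ℤ)`. -/
def jacobiFactor (m : ℤ) (γ : SL(2, ℤ)) (τ : ℍ) (z : ℂ) : ℂ :=
  denom γ τ * expTwoPiI (m * γ 1 0 * z ^ 2 / denom γ τ)

lemma jacobiFactor_ne_zero (m : ℤ) (γ : SL(2, ℤ)) (τ : ℍ) (z : ℂ) :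
    jacobiFactor m γ τ z ≠ 0 :=
  mul_ne_zero (denom_ne_zero _ _) (expTwoPiI_ne_zero _)

lemma denom_SL_mul (γ γ' : SL(2, ℤ)) (τ : ℍ) :
    denom (γ * γ' : SL(2, ℤ)) τ = denom γ (γ' • τ : ℍ) * denom γ' τ := by
  rw [map_mul, map_mul, denom_cocycle_σ, σ]
  simp [ModularGroup.sl_moeb]

lemma jacobiFactor_mul (m : ℤ) (γ γ' : SL(2, ℤ)) (τ : ℍ) (z : ℂ) :
    jacobiFactor m (γ * γ') τ z =
      jacobiFactor m γ (γ' • τ) (z / denom γ' τ) * jacobiFactor m γ' τ z := by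
  have hJ : denom γ (γ' • τ : ℍ) ≠ 0 := denom_ne_zero _ _
  have hJ' : denom γ' τ ≠ 0 := denom_ne_zero _ _
  have hlower : ((γ * γ') 1 0 : ℂ) * denom γ' τ =
      γ 1 0 + γ' 1 0 * (denom γ (γ' • τ : ℍ) * denom γ' τ) := by
    have hdet : (γ' 0 0 * γ' 1 1 - γ' 0 1 * γ' 1 0 : ℂ) = 1 := by
      exact_mod_cast (det_fin_two _).symm.trans γ'.det_coe
    have hrow (j : Fin 2) : (γ * γ') 1 j = γ 1 0 * γ' 0 j + γ 1 1 * γ' 1 j := by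
      simp [Matrix.mul_apply]
    rw [← denom_SL_mul, ModularGroup.denom_apply, ModularGroup.denom_apply, hrow, hrow]
    push_cast
    linear_combination (γ 1 0 : ℂ) * hdet
  rw [jacobiFactor, jacobiFactor, jacobiFactor, mul_mul_mul_comm, ← expTwoPiI_add, denom_SL_mul]
  congr 2
  field_simp
  linear_combination m * z ^ 2 * hlower

/-- Invariance of `f` under the weight `1`, index `m` slash action of `γ`. -/
def IsJacobiInvariant (m : ℤ) (f : ℂ → ℂ → ℂ) (γ : SL(2, ℤ)) : Prop :=
  ∀ (τ : ℍ) (z : ℂ), f (γ • τ : ℍ) (z / denom γ τ) = jacobiFactor m γ τ z * f τ z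

namespace IsJacobiInvariant

variable {f : ℂ → ℂ → ℂ} {γ γ' : SL(2, ℤ)}

lemma mul (h : IsJacobiInvariant m f γ) (h' : IsJacobiInvariant m f γ') :
    IsJacobiInvariant m f (γ * γ') := fun τ z => by
  rw [mul_smul, denom_SL_mul, mul_comm, ← div_div, h, h', jacobiFactor_mul, mul_assoc]

lemma one (m : ℤ) (f : ℂ → ℂ → ℂ) : IsJacobiInvariant m f 1 := fun τ z => by
  simp [jacobiFactor, expTwoPiI_zero]

lemma inv (h : IsJacobiInvariant m f γ) : IsJacobiInvariant m f γ⁻¹ := fun τ z => by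
  have hcocycle := jacobiFactor_mul m γ γ⁻¹ τ z
  have hinv := h (γ⁻¹ • τ) (z / denom (γ⁻¹ : SL(2, ℤ)) τ)
  rw [div_div, mul_comm (denom _ _), ← denom_SL_mul, smul_inv_smul, mul_inv_cancel] at hinv
  rw [mul_inv_cancel] at hcocycle
  have hone := one m f τ z
  rw [one_smul] at hone
  refine mul_left_cancel₀ (jacobiFactor_ne_zero m γ (γ⁻¹ • τ) (z / denom (γ⁻¹ : SL(2, ℤ)) τ)) ?_
  rw [← hinv, hone, hcocycle, mul_assoc]

end IsJacobiInvariant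

lemma IsJacobiCuspForm.isJacobiInvariant (h : IsJacobiCuspForm m c) (γ : SL(2, ℤ)) :
    IsJacobiInvariant m (jacobiSeries c) γ := by
  have hγ : γ ∈ Subgroup.closure {ModularGroup.S, ModularGroup.T} := by
    rw [SpecialLinearGroup.SL2Z_generators]
    trivial
  induction hγ using Subgroup.closure_induction with
  | mem γ hγ =>
    obtain rfl | rfl := hγ <;> intro τ z
    all_goals
      simp only [coe_specialLinearGroup_apply, jacobiFactor, ModularGroup.denom_apply]
    · simpa [ModularGroup.S] using h.slash_S τ z τ.im_pos
    · simpa [ModularGroup.T, expTwoPiI_zero] using jacobiSeries_add_int c τ z 1 0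
  | one => exact .one _ _
  | mul _ _ _ _ hγ hγ' => exact hγ.mul hγ'
  | inv _ _ hγ => exact hγ.inv

lemma IsJacobiCuspForm.jacobiSeries_moebius (h : IsJacobiCuspForm m c) {a b c' d : ℤ}
    (hdet : a * d - b * c' = 1) {τ : ℂ} (z : ℂ) (hτ : 0 < τ.im) :
    jacobiSeries c ((a * τ + b) / (c' * τ + d)) (z / (c' * τ + d)) =
      (c' * τ + d) * expTwoPiI (m * c' * z ^ 2 / (c' * τ + d)) * jacobiSeries c τ z := by
  have hγ (γ : SL(2, ℤ)) (τ : ℍ) :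
      jacobiSeries c ((γ 0 0 * τ + γ 0 1) / (γ 1 0 * τ + γ 1 1)) (z / (γ 1 0 * τ + γ 1 1)) =
        (γ 1 0 * τ + γ 1 1) * expTwoPiI (m * γ 1 0 * z ^ 2 / (γ 1 0 * τ + γ 1 1)) *
          jacobiSeries c τ z := by
    have hinv := h.isJacobiInvariant γ τ z
    simp only [coe_specialLinearGroup_apply, jacobiFactor, ModularGroup.denom_apply] at hinv
    simpa using hinv
  simpa using hγ ⟨!![a, b; c', d], by rwa [det_fin_two_of]⟩ ⟨τ, hτ⟩

end ModularInvariance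

end JacobiForms

section HeckeOperators

lemma periodic_apply_val {p : ℕ} [NeZero p] {α : Type*} {g : ℤ → α}
    (hg : Function.Periodic g (p : ℤ)) {x : ZMod p} {a : ℤ} (h : (a : ZMod p) = x) :
    g x.val = g a := by
  rw [← h, ZMod.val_intCast, Int.emod_def, mul_comm]
  exact hg.sub_zsmul_eq (a / p)

lemma sum_expTwoPiI_mul_div (p : ℕ) [NeZero p] (n : ℤ) :
    ∑ b : ZMod p, expTwoPiI (n * (b.val : ℤ) / p) = if (p : ℤ) ∣ n then (p : ℂ) else 0 := by
  have h (b : ZMod p) : expTwoPiI (n * (b.val : ℤ) / p) = ZMod.stdAddChar (b * (n : ZMod p)) := by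
    have := ZMod.stdAddChar_coe (N := p) (b.val * n)
    rw [Int.cast_mul, Int.cast_natCast, ZMod.natCast_zmod_val] at this
    rw [this, expTwoPiI]
    push_cast
    ring_nf
  simp_rw [h, AddChar.sum_mulShift _ (ZMod.isPrimitive_stdAddChar p),
    ZMod.intCast_zmod_eq_zero_iff_dvd, ZMod.card, Nat.cast_ite, Nat.cast_zero]

/-- The Fourier coefficients of `φ(τ, pz)`. -/
def heckeU (p : ℕ) (c : ℤ → ℤ → ℂ) (n r : ℤ) : ℂ := if (p : ℤ) ∣ r then c n (r / p) else 0

/-- The summand of the operator `heckeW` attached to the translation `heisenbergShift m l`. -/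
def heckeWTerm (p : ℕ) (m : ℤ) (c : ℤ → ℤ → ℂ) (l : ℤ) (t : ℤ × ℤ) : ℂ :=
  if (p : ℤ) ∣ (heisenbergShift m l t).1 then
    c ((heisenbergShift m l t).1 / p) (heisenbergShift m l t).2
  else 0

/-- The index-lowering operator `W_p`, from Jacobi forms of index `pm` to index `m`. It averages
over the coset representatives `(1 b; 0 p)` together with the translations `u/p`, and `(p 0; 0 1)`
together with the translations `-lτ`. -/
def heckeW (p : ℕ) [NeZero p] (m : ℤ) (c : ℤ → ℤ → ℂ) (n r : ℤ) : ℂ :=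
  p * c (p * n) (p * r) + ∑ l : ZMod p, heckeWTerm p m c l.val (n, r)

/-- The index-raising operator `V_p`, from Jacobi forms of index `m` to index `pm`. -/
def heckeV (p : ℕ) (c : ℤ → ℤ → ℂ) (n r : ℤ) : ℂ :=
  c (p * n) r + if (p : ℤ) ∣ n ∧ (p : ℤ) ∣ r then c (n / p) (r / p) else 0

/-- The index-preserving Hecke operator `W_p ∘ V_p`. -/
def heckeN (p : ℕ) [NeZero p] (m : ℤ) (c : ℤ → ℤ → ℂ) : ℤ → ℤ → ℂ := heckeW p m (heckeV p c)

lemma hasSum_heckeU {p : ℕ} (hp : 0 < p) {m : ℤ} {c : ℤ → ℤ → ℂ} (h : IsJacobiCuspForm m c)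
    {τ : ℂ} (z : ℂ) (hτ : 0 < τ.im) :
    HasSum (jacobiTerm (heckeU p c) τ z) (jacobiSeries c τ (p * z)) := by
  have hp0 : (p : ℤ) ≠ 0 := by exact_mod_cast hp.ne'
  have hinj : Function.Injective fun t : ℤ × ℤ => (t.1, (p : ℤ) * t.2) :=
    Function.injective_id.prodMap (mul_right_injective₀ hp0)
  rw [← hinj.hasSum_iff]
  · refine (h.hasSum (p * z) hτ).congr_fun fun t => ?_
    simp only [jacobiTerm, Function.comp, heckeU, dvd_mul_right, if_true,
      Int.mul_ediv_cancel_left _ hp0]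
    push_cast
    ring_nf
  · intro t ht
    have hdvd : ¬ (p : ℤ) ∣ t.2 := by
      rintro ⟨k, hk⟩
      exact ht ⟨(t.1, k), by ext <;> simp [hk]⟩
    simp [jacobiTerm, heckeU, hdvd]

lemma IsJacobiCuspForm.heckeU {m : ℤ} {c : ℤ → ℤ → ℂ} (h : IsJacobiCuspForm m c) {p : ℕ}
    (hp : 0 < p) : IsJacobiCuspForm (p ^ 2 * m) (heckeU p c) := by
  have hp0 : (p : ℤ) ≠ 0 := by exact_mod_cast hp.ne'
  refine of_hasSum (fun n r hc => ?_) (fun n r => ?_) (fun τ z => hasSum_heckeU hp h z)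
    (fun τ z hτ => ?_)
  · rw [_root_.heckeU, ite_ne_right_iff] at hc
    obtain ⟨⟨k, rfl⟩, hc⟩ := hc
    rw [Int.mul_ediv_cancel_left _ hp0] at hc
    have hp2 : (0 : ℤ) < (p : ℤ) ^ 2 := by positivity
    nlinarith [mul_lt_mul_of_pos_left (h.support _ _ hc) hp2]
  · have hdvd : (p : ℤ) ∣ r + 2 * (p ^ 2 * m) ↔ (p : ℤ) ∣ r := by
      rw [Int.dvd_add_left ⟨2 * p * m, by ring⟩]
    simp only [_root_.heckeU, hdvd]
    split_ifs with hr
    · obtain ⟨k, rfl⟩ := hr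
      rw [show (p : ℤ) * k + 2 * (p ^ 2 * m) = p * (k + 2 * m * p) by ring,
        Int.mul_ediv_cancel_left _ hp0, Int.mul_ediv_cancel_left _ hp0,
        ← h.apply_heisenbergShift p n k]
      congr 1
      ring
    · rfl
  · rw [← mul_div_assoc, h.slash_S _ _ hτ]
    push_cast
    ring_nf

section CosetSums

variable {p : ℕ} [NeZero p] {m : ℤ} {c : ℤ → ℤ → ℂ} {τ : ℂ}

/-- The value `φ((τ + b)/p, (z + u)/p)` of the Jacobi series of `c`. -/
def upperCosetTerm (p : ℕ) (c : ℤ → ℤ → ℂ) (τ z : ℂ) (b u : ℤ) : ℂ :=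
  jacobiSeries c ((τ + b) / p) ((z + u) / p)

/-- The value `φ(pτ, z - lτ) e(m(l²τ - 2lz))` for the Jacobi series `φ` of `c`. -/
def diagCosetTerm (p : ℕ) (m : ℤ) (c : ℤ → ℤ → ℂ) (τ z : ℂ) (l : ℤ) : ℂ :=
  jacobiSeries c (p * τ) (z - l * τ) * expTwoPiI (m * (l ^ 2 * τ - 2 * l * z))

lemma add_intCast_div_natCast_im_pos (hτ : 0 < τ.im) (b : ℤ) : 0 < ((τ + b) / p : ℂ).im := by
  have hp : (0 : ℝ) < p := by exact_mod_cast NeZero.pos p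
  rw [Complex.div_natCast_im, Complex.add_im, Complex.intCast_im, add_zero]
  positivity

lemma natCast_mul_im_pos (hτ : 0 < τ.im) : 0 < (p * τ : ℂ).im := by
  have hp : (0 : ℝ) < p := by exact_mod_cast NeZero.pos p
  rw [← nsmul_eq_mul, Complex.smul_im, nsmul_eq_mul]
  positivity

lemma sum_jacobiTerm_upperCoset (p : ℕ) [NeZero p] (c : ℤ → ℤ → ℂ) (τ z : ℂ) (t : ℤ × ℤ) :
    ∑ b : ZMod p, ∑ u : ZMod p,
      jacobiTerm c ((τ + (b.val : ℤ)) / p) ((z + (u.val : ℤ)) / p) t =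
    c t.1 t.2 * expTwoPiI ((t.1 * τ + t.2 * z) / p) *
      ((if (p : ℤ) ∣ t.1 then (p : ℂ) else 0) * (if (p : ℤ) ∣ t.2 then (p : ℂ) else 0)) := by
  rw [← sum_expTwoPiI_mul_div, ← sum_expTwoPiI_mul_div, Finset.sum_mul_sum, Finset.mul_sum]
  refine Finset.sum_congr rfl fun b _ => ?_
  rw [Finset.mul_sum]
  refine Finset.sum_congr rfl fun u _ => ?_
  rw [jacobiTerm, mul_assoc, ← expTwoPiI_add, ← expTwoPiI_add]
  ring_nf

lemma hasSum_sum_upperCosetTerm (h : IsJacobiCuspForm (p * m) c) (z : ℂ) (hτ : 0 < τ.im) :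
    HasSum (fun t : ℤ × ℤ => p * c (p * t.1) (p * t.2) * expTwoPiI (t.1 * τ + t.2 * z))
      (1 / p * ∑ b : ZMod p, ∑ u : ZMod p, upperCosetTerm p c τ z b.val u.val) := by
  have hp0 : (p : ℤ) ≠ 0 := by exact_mod_cast NeZero.ne p
  have hpc : (p : ℂ) ≠ 0 := by exact_mod_cast NeZero.ne p
  have hinj : Function.Injective fun t : ℤ × ℤ => ((p : ℤ) * t.1, (p : ℤ) * t.2) :=
    (mul_right_injective₀ hp0).prodMap (mul_right_injective₀ hp0)
  have hsum : HasSum _ (1 / (p : ℂ) * ∑ b : ZMod p, ∑ u : ZMod p,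
      upperCosetTerm p c τ z b.val u.val) :=
    (hasSum_sum fun b _ => hasSum_sum fun u _ =>
      h.hasSum _ (add_intCast_div_natCast_im_pos hτ _)).mul_left _
  simp only [sum_jacobiTerm_upperCoset] at hsum
  rw [← hinj.hasSum_iff] at hsum
  · refine hsum.congr_fun fun t => ?_
    simp only [Function.comp, dvd_mul_right, if_true]
    push_cast
    rw [show ((p : ℂ) * t.1 * τ + p * t.2 * z) / p = t.1 * τ + t.2 * z by field_simp]
    field_simp
  · intro t ht
    have hdvd : ¬ ((p : ℤ) ∣ t.1 ∧ (p : ℤ) ∣ t.2) := by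
      rintro ⟨⟨k, hk⟩, ⟨l, hl⟩⟩
      exact ht ⟨(k, l), by ext <;> simp [hk, hl]⟩
    rcases not_and_or.mp hdvd with h | h <;> simp [h]

lemma hasSum_diagCosetTerm (h : IsJacobiCuspForm (p * m) c) (z : ℂ) (hτ : 0 < τ.im) (l : ℤ) :
    HasSum (fun t : ℤ × ℤ => heckeWTerm p m c l t * expTwoPiI (t.1 * τ + t.2 * z))
      (diagCosetTerm p m c τ z l) := by
  have hp0 : (p : ℤ) ≠ 0 := by exact_mod_cast NeZero.ne p
  have hinj : Function.Injective fun t : ℤ × ℤ => ((p : ℤ) * t.1, t.2) :=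
    (mul_right_injective₀ hp0).prodMap Function.injective_id
  rw [← (heisenbergShift m l).symm.hasSum_iff, ← hinj.hasSum_iff]
  · refine ((h.hasSum (z - l * τ) (natCast_mul_im_pos hτ)).mul_right
      (expTwoPiI (m * (l ^ 2 * τ - 2 * l * z)))).congr_fun fun t => ?_
    simp only [Function.comp, heckeWTerm, Equiv.apply_symm_apply, dvd_mul_right, if_true,
      Int.mul_ediv_cancel_left _ hp0, jacobiTerm]
    rw [mul_assoc (c t.1 t.2), ← expTwoPiI_add]
    simp only [heisenbergShift, Equiv.coe_fn_symm_mk]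
    push_cast
    ring_nf
  · intro t ht
    have hdvd : ¬ (p : ℤ) ∣ t.1 := by
      rintro ⟨k, hk⟩
      exact ht ⟨(k, t.2), by ext <;> simp [hk]⟩
    simp [heckeWTerm, hdvd]

lemma hasSum_heckeW (h : IsJacobiCuspForm (p * m) c) (z : ℂ) (hτ : 0 < τ.im) :
    HasSum (jacobiTerm (heckeW p m c) τ z)
      (1 / p * ∑ b : ZMod p, ∑ u : ZMod p, upperCosetTerm p c τ z b.val u.val +
        ∑ l : ZMod p, diagCosetTerm p m c τ z l.val) := by
  refine ((hasSum_sum_upperCosetTerm h z hτ).add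
    (hasSum_sum fun l _ => hasSum_diagCosetTerm h z hτ l.val)).congr_fun fun t => ?_
  rw [jacobiTerm, heckeW, add_mul, Finset.sum_mul]

lemma upperCosetTerm_periodic (p : ℕ) [NeZero p] (c : ℤ → ℤ → ℂ) (τ z : ℂ) (b : ℤ) :
    Function.Periodic (upperCosetTerm p c τ z b) (p : ℤ) := fun u => by
  have hpc : (p : ℂ) ≠ 0 := by exact_mod_cast NeZero.ne p
  rw [upperCosetTerm, upperCosetTerm, ← jacobiSeries_add_int c ((τ + b) / p) ((z + u) / p) 0 1]
  congr 1
  · push_cast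
    ring
  · push_cast
    field_simp
    ring

omit [NeZero p] in
lemma diagCosetTerm_periodic (h : IsJacobiCuspForm (p * m) c) (τ z : ℂ) :
    Function.Periodic (diagCosetTerm p m c τ z) (p : ℤ) := fun l => by
  have hlattice := h.jacobiSeries_add_mul_tau (p * τ) (z - l * τ) (-1)
  rw [diagCosetTerm, diagCosetTerm, show z - ((l + p : ℤ) : ℂ) * τ =
    z - l * τ + ((-1 : ℤ) : ℂ) * (p * τ) by push_cast; ring, hlattice, mul_right_comm,
    ← expTwoPiI_add, mul_comm]
  congr 2
  push_cast
  ring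

lemma diagCosetTerm_S (h : IsJacobiCuspForm (p * m) c) (z : ℂ) (hτ : 0 < τ.im) (l : ℤ) :
    diagCosetTerm p m c (-1 / τ) (z / τ) l =
      τ / p * expTwoPiI (m * z ^ 2 / τ) * upperCosetTerm p c τ z 0 l := by
  have hpc : (p : ℂ) ≠ 0 := by exact_mod_cast NeZero.ne p
  have ht : τ ≠ 0 := by rintro rfl; simp at hτ
  have hS := h.slash_S (τ / p) ((z + l) / p)
    (by simpa using add_intCast_div_natCast_im_pos (p := p) hτ 0)
  rw [diagCosetTerm, upperCosetTerm, Int.cast_zero, add_zero,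
    show (p : ℂ) * (-1 / τ) = -1 / (τ / p) by field_simp,
    show z / τ - l * (-1 / τ) = (z + l) / p / (τ / p) by field_simp; ring, hS, mul_right_comm,
    mul_assoc (τ / p), ← expTwoPiI_add]
  congr 3
  push_cast
  field_simp
  ring

lemma upperCosetTerm_zero_S (h : IsJacobiCuspForm (p * m) c) (z : ℂ) (hτ : 0 < τ.im) (u : ℤ) :
    upperCosetTerm p c (-1 / τ) (z / τ) 0 u =
      p * τ * expTwoPiI (m * z ^ 2 / τ) * diagCosetTerm p m c τ z (-u) := by
  have hpc : (p : ℂ) ≠ 0 := by exact_mod_cast NeZero.ne p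
  have ht : τ ≠ 0 := by rintro rfl; simp at hτ
  have hS := h.slash_S (p * τ) (z + u * τ) (natCast_mul_im_pos hτ)
  rw [diagCosetTerm, upperCosetTerm, Int.cast_zero, add_zero,
    show -1 / τ / p = -1 / (p * τ) by field_simp,
    show (z / τ + u) / p = (z + u * τ) / (p * τ) by field_simp, hS,
    show z - ((-u : ℤ) : ℂ) * τ = z + u * τ by push_cast; ring, mul_assoc,
    mul_assoc _ (expTwoPiI _), mul_left_comm (expTwoPiI (m * z ^ 2 / τ)), ← expTwoPiI_add,
    mul_comm (expTwoPiI _)]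
  congr 3
  push_cast
  field_simp
  ring

/-- `S` maps the coset of `(1 b; 0 p)` to that of `(1 b'; 0 p)`: here `bb' ≡ -1 (mod p)`, and the
identity `(1 b; 0 p) S = (b k; p -b') (1 b'; 0 p)` holds up to scalars. -/
lemma upperCosetTerm_S (h : IsJacobiCuspForm (p * m) c) (z : ℂ) (hτ : 0 < τ.im) {b b' k : ℤ}
    (hb : b * b' + k * p = -1) (u : ℤ) :
    upperCosetTerm p c (-1 / τ) (z / τ) b u =
      τ * expTwoPiI (m * z ^ 2 / τ) * upperCosetTerm p c τ z b' (-u * b') := by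
  have hpc : (p : ℂ) ≠ 0 := by exact_mod_cast NeZero.ne p
  have ht : τ ≠ 0 := by rintro rfl; simp at hτ
  have hbc : (b * b' + k * p : ℂ) = -1 := by exact_mod_cast hb
  have hden : ((p : ℤ) : ℂ) * ((τ + b') / p) + (-b' : ℤ) = τ := by
    push_cast
    field_simp
    ring
  have hγ := h.jacobiSeries_moebius (a := b) (b := k) (c' := p) (d := -b') (by linarith)
    ((z - u * b') / p + u * ((τ + b') / p)) (add_intCast_div_natCast_im_pos (p := p) hτ b')
  rw [hden, h.jacobiSeries_add_mul_tau] at hγ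
  rw [upperCosetTerm, upperCosetTerm, show (-1 / τ + b) / p = (b * ((τ + b') / p) + k) / τ by
      field_simp; linear_combination -hbc,
    show (z / τ + u) / p = ((z - u * b') / p + u * ((τ + b') / p)) / τ by field_simp; ring, hγ,
    show z + ((-u * b' : ℤ) : ℂ) = z - u * b' by push_cast; ring, ← mul_assoc, mul_assoc τ,
    ← expTwoPiI_add, ← mul_one (expTwoPiI (m * z ^ 2 / τ)), ← expTwoPiI_intCast (m * u ^ 2 * b'),
    ← expTwoPiI_add]
  congr 3
  push_cast
  field_simp
  ring

end CosetSums

section Slash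

variable {p : ℕ} [Fact p.Prime] {m : ℤ} {c : ℤ → ℤ → ℂ} {τ : ℂ}

lemma sum_diagCosetTerm_S (h : IsJacobiCuspForm (p * m) c) (z : ℂ) (hτ : 0 < τ.im) :
    ∑ l : ZMod p, diagCosetTerm p m c (-1 / τ) (z / τ) l.val =
      τ / p * expTwoPiI (m * z ^ 2 / τ) * ∑ u : ZMod p, upperCosetTerm p c τ z 0 u.val := by
  rw [Finset.mul_sum]
  exact Finset.sum_congr rfl fun l _ => diagCosetTerm_S h z hτ _

lemma sum_upperCosetTerm_zero_S (h : IsJacobiCuspForm (p * m) c) (z : ℂ) (hτ : 0 < τ.im) :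
    ∑ u : ZMod p, upperCosetTerm p c (-1 / τ) (z / τ) 0 u.val =
      p * τ * expTwoPiI (m * z ^ 2 / τ) * ∑ l : ZMod p, diagCosetTerm p m c τ z l.val := by
  rw [← Equiv.sum_comp (Equiv.neg (ZMod p)), Finset.mul_sum]
  refine Finset.sum_congr rfl fun u _ => ?_
  rw [upperCosetTerm_zero_S h z hτ]
  congr 1
  rw [periodic_apply_val (diagCosetTerm_periodic h τ z)]
  simp

lemma sum_upperCosetTerm_unit_S (h : IsJacobiCuspForm (p * m) c) (z : ℂ) (hτ : 0 < τ.im) :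
    ∑ b ∈ Finset.univ.erase (0 : ZMod p), ∑ u : ZMod p,
        upperCosetTerm p c (-1 / τ) (z / τ) b.val u.val =
      τ * expTwoPiI (m * z ^ 2 / τ) * ∑ b ∈ Finset.univ.erase (0 : ZMod p), ∑ u : ZMod p,
        upperCosetTerm p c τ z b.val u.val := by
  rw [Finset.mul_sum]
  refine Finset.sum_nbij' (fun b => -b⁻¹) (fun b => -b⁻¹) (by simp) (by simp) (by simp [inv_neg])
    (by simp [inv_neg]) fun b hb => ?_
  have hb0 : b ≠ 0 := by simpa using hb
  obtain ⟨k, hk⟩ : (p : ℤ) ∣ -1 - (b.val : ℤ) * ((-b⁻¹).val : ℤ) := by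
    rw [← ZMod.intCast_zmod_eq_zero_iff_dvd]
    push_cast
    simp [hb0]
  have hne : - -b⁻¹ ≠ 0 := by simpa using hb0
  rw [← Equiv.sum_comp (Equiv.mulRight₀ _ hne) fun u => upperCosetTerm p c τ z (-b⁻¹).val u.val,
    Finset.mul_sum]
  refine Finset.sum_congr rfl fun u _ => ?_
  rw [upperCosetTerm_S h z hτ (b' := (-b⁻¹).val) (k := k) (by linarith)]
  congr 1
  rw [periodic_apply_val (upperCosetTerm_periodic p c τ z _)]
  simp

end Slash

lemma heckeWTerm_periodic {p : ℕ} [NeZero p] {m : ℤ} {c : ℤ → ℤ → ℂ}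
    (h : IsJacobiCuspForm (p * m) c) (t : ℤ × ℤ) :
    Function.Periodic (fun l => heckeWTerm p m c l t) (p : ℤ) := fun l => by
  have hp0 : (p : ℤ) ≠ 0 := by exact_mod_cast NeZero.ne p
  simp only [heckeWTerm]
  rw [add_comm, ← heisenbergShift_heisenbergShift]
  obtain ⟨n, r⟩ := heisenbergShift m l t
  rw [heisenbergShift_apply]
  have hdvd : (p : ℤ) ∣ n + r * p + m * p ^ 2 ↔ (p : ℤ) ∣ n := by
    rw [add_assoc, Int.dvd_add_left ⟨r + m * p, by ring⟩]
  simp only [hdvd]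
  split_ifs with hn
  · obtain ⟨k, rfl⟩ := hn
    rw [show (p : ℤ) * k + r * p + m * p ^ 2 = p * (k + r + p * m) by ring,
      Int.mul_ediv_cancel_left _ hp0, Int.mul_ediv_cancel_left _ hp0, ← h.shift k]
    congr 1
    ring
  · rfl

namespace IsJacobiCuspForm

variable {p : ℕ} [Fact p.Prime] {m : ℤ} {c : ℤ → ℤ → ℂ}

lemma heckeWTerm_eq_zero (h : IsJacobiCuspForm (p * m) c) {t : ℤ × ℤ}
    (ht : 4 * t.1 * m ≤ t.2 ^ 2) (l : ℤ) : heckeWTerm p m c l t = 0 := by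
  have hp0 : (p : ℤ) ≠ 0 := by exact_mod_cast NeZero.ne p
  rw [heckeWTerm, ite_eq_right_iff]
  rintro ⟨k, hk⟩
  have hdisc := discriminant_heisenbergShift m l t
  rw [hk] at hdisc ⊢
  rw [Int.mul_ediv_cancel_left _ hp0]
  by_contra hc
  linarith [h.support _ _ hc]

lemma heckeW_add_shift (h : IsJacobiCuspForm (p * m) c) (n r : ℤ) :
    heckeW p m c (n + r + m) (r + 2 * m) = heckeW p m c n r := by
  rw [heckeW, heckeW]
  congr 1
  · rw [← h.shift (p * n)]
    ring_nf
  · rw [← Equiv.sum_comp (Equiv.addRight (1 : ZMod p)) fun l => heckeWTerm p m c l.val (n, r)]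
    refine Finset.sum_congr rfl fun l _ => ?_
    rw [Equiv.coe_addRight, periodic_apply_val (heckeWTerm_periodic h (n, r))
      (a := l.val + 1) (by simp), heckeWTerm, heckeWTerm, ← heisenbergShift_heisenbergShift,
      heisenbergShift_apply m 1]
    simp

lemma heckeW (h : IsJacobiCuspForm (p * m) c) : IsJacobiCuspForm m (heckeW p m c) := by
  have hpc : (p : ℂ) ≠ 0 := by exact_mod_cast NeZero.ne p
  refine of_hasSum (fun n r hc => ?_) h.heckeW_add_shift (fun τ z => hasSum_heckeW h z)
    (fun τ z hτ => ?_)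
  · contrapose! hc
    have hdilate : c (p * n) (p * r) = 0 := by
      by_contra hne
      nlinarith [h.support _ _ hne, mul_le_mul_of_nonneg_left hc (sq_nonneg (p : ℤ))]
    simp [_root_.heckeW, hdilate, h.heckeWTerm_eq_zero (t := (n, r)) hc]
  · rw [← Finset.add_sum_erase _ _ (Finset.mem_univ (0 : ZMod p)),
      ← Finset.add_sum_erase Finset.univ (fun b : ZMod p => ∑ u : ZMod p,
        upperCosetTerm p c τ z b.val u.val) (Finset.mem_univ 0), sum_diagCosetTerm_S h z hτ,
      sum_upperCosetTerm_unit_S h z hτ]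
    simp only [ZMod.val_zero, Nat.cast_zero]
    rw [sum_upperCosetTerm_zero_S h z hτ]
    field_simp
    ring

lemma heckeW_heckeU (h : IsJacobiCuspForm m c) :
    _root_.heckeW p (p * m) (_root_.heckeU p c) = (p : ℂ) • _root_.heckeV p c := by
  have hp0 : (p : ℤ) ≠ 0 := by exact_mod_cast NeZero.ne p
  funext n r
  have hterm (l : ℤ) : heckeWTerm p (p * m) (_root_.heckeU p c) l (n, r) =
      if (p : ℤ) ∣ n ∧ (p : ℤ) ∣ r then c (n / p) (r / p) else 0 := by
    rw [heckeWTerm, _root_.heckeU, heisenbergShift_apply]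
    by_cases hr : (p : ℤ) ∣ r
    · obtain ⟨s, rfl⟩ := hr
      have hn : (p : ℤ) ∣ n + p * s * l + p * m * l ^ 2 ↔ (p : ℤ) ∣ n := by
        rw [add_assoc, Int.dvd_add_left ⟨s * l + m * l ^ 2, by ring⟩]
      simp only [hn, dvd_mul_right, and_true]
      split_ifs with hn
      · obtain ⟨k, rfl⟩ := hn
        rw [show (p : ℤ) * k + p * s * l + p * m * l ^ 2 = p * (k + s * l + m * l ^ 2) by ring,
          show (p : ℤ) * s + 2 * (p * m) * l = p * (s + 2 * m * l) by ring]
        simp only [Int.mul_ediv_cancel_left _ hp0, h.apply_heisenbergShift]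
      · next hs => exact absurd ⟨s + 2 * m * l, by ring⟩ hs
      · rfl
    · have hr' : ¬ (p : ℤ) ∣ r + 2 * (p * m) * l := by
        rwa [Int.dvd_add_left ⟨2 * m * l, by ring⟩]
      simp [hr, hr']
  simp [_root_.heckeW, hterm, _root_.heckeU, _root_.heckeV, Int.mul_ediv_cancel_left _ hp0, mul_add]

lemma heckeV (h : IsJacobiCuspForm m c) : IsJacobiCuspForm (p * m) (heckeV p c) := by
  have hpc : (p : ℂ) ≠ 0 := by exact_mod_cast NeZero.ne p
  have hU := h.heckeU (NeZero.pos p)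
  rw [sq, mul_assoc] at hU
  simpa [h.heckeW_heckeU, smul_smul, hpc] using hU.heckeW.smul (1 / p)

lemma heckeN (h : IsJacobiCuspForm m c) : IsJacobiCuspForm m (heckeN p m c) := h.heckeV.heckeW

lemma heckeWTerm_heckeV (h : IsJacobiCuspForm m c) {l : ℤ} {t : ℤ × ℤ}
    (hl : (p : ℤ) ∣ (heisenbergShift m l t).1) :
    heckeWTerm p m (_root_.heckeV p c) l t = c t.1 t.2 +
      if (p : ℤ) ^ 2 ∣ (heisenbergShift m l t).1 ∧ (p : ℤ) ∣ (heisenbergShift m l t).2 then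
        c ((heisenbergShift m l t).1 / p ^ 2) ((heisenbergShift m l t).2 / p) else 0 := by
  have hp0 : (0 : ℤ) < p := by exact_mod_cast NeZero.pos p
  rw [heckeWTerm, if_pos hl, _root_.heckeV, Int.mul_ediv_cancel' hl]
  congr 1
  · exact h.apply_heisenbergShift _ _ _
  · obtain ⟨k, hk⟩ := hl
    rw [hk, Int.mul_ediv_cancel_left _ hp0.ne', sq, Int.mul_ediv_mul_of_pos _ _ hp0]
    simp only [mul_dvd_mul_iff_left hp0.ne']

lemma heckeN_apply (h : IsJacobiCuspForm m c) {n r : ℤ} {l₀ : ZMod p}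
    (hl : ∀ l : ZMod p, (p : ℤ) ∣ (heisenbergShift m l.val (n, r)).1 ↔ l = l₀) :
    _root_.heckeN p m c n r = p * c (p ^ 2 * n) (p * r) + (p + 1) * c n r +
      if (p : ℤ) ^ 2 ∣ (heisenbergShift m l₀.val (n, r)).1 ∧
          (p : ℤ) ∣ (heisenbergShift m l₀.val (n, r)).2 then
        c ((heisenbergShift m l₀.val (n, r)).1 / p ^ 2)
          ((heisenbergShift m l₀.val (n, r)).2 / p) else 0 := by
  have hp0 : (p : ℤ) ≠ 0 := by exact_mod_cast NeZero.ne p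
  have hterm (l : ZMod p) (hne : l ≠ l₀) :
      heckeWTerm p m (_root_.heckeV p c) l.val (n, r) = 0 := if_neg ((hl l).not.mpr hne)
  rw [_root_.heckeN, _root_.heckeW, Finset.sum_eq_single l₀ (fun l _ => hterm l) (by simp),
    h.heckeWTerm_heckeV ((hl l₀).mpr rfl), _root_.heckeV, if_pos ⟨⟨n, rfl⟩, ⟨r, rfl⟩⟩,
    Int.mul_ediv_cancel_left _ hp0, Int.mul_ediv_cancel_left _ hp0, ← mul_assoc, ← sq]
  ring

end IsJacobiCuspForm

end HeckeOperators

section FinitelyGeneratedCoefficients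

open UpperHalfPlane ModularForm ModularFormClass MatrixGroups EisensteinSeries

/-- The power series over `A` all of whose coefficients lie in a common finitely generated
`R`-submodule of `A`. -/
def fgCoeffSubalgebra (R A : Type*) [CommSemiring R] [CommSemiring A] [Algebra R A] :
    Subalgebra A (PowerSeries A) where
  carrier := {a | ∃ M : Submodule R A, M.FG ∧ ∀ n, a.coeff n ∈ M}
  add_mem' := by
    rintro a b ⟨M, hM, ha⟩ ⟨M', hM', hb⟩
    exact ⟨M ⊔ M', hM.sup hM', fun n => map_add (PowerSeries.coeff n) a b ▸
      add_mem (Submodule.mem_sup_left (ha n)) (Submodule.mem_sup_right (hb n))⟩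
  mul_mem' := by
    rintro a b ⟨M, hM, ha⟩ ⟨M', hM', hb⟩
    exact ⟨M * M', hM.mul hM', fun n => PowerSeries.coeff_mul n a b ▸
      sum_mem fun i _ => Submodule.mul_mem_mul (ha i.1) (hb i.2)⟩
  algebraMap_mem' x := by
    refine ⟨Submodule.span R {x}, Submodule.fg_span_singleton x, fun n => ?_⟩
    rw [PowerSeries.algebraMap_apply, Algebra.algebraMap_self, RingHom.id_apply,
      PowerSeries.coeff_C]
    split_ifs
    exacts [Submodule.mem_span_singleton_self x, zero_mem _]

lemma qExpansion_E_mem_fgCoeffSubalgebra {k : ℕ} (hk : 3 ≤ k) (hk2 : Even k) :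
    qExpansion 1 (E hk) ∈ fgCoeffSubalgebra ℤ ℂ := by
  set x : ℂ := -(2 * k / bernoulli k)
  refine ⟨Submodule.span ℤ {1, x}, Submodule.fg_span (Set.toFinite _), fun n => ?_⟩
  rw [E_qExpansion_coeff hk hk2]
  split_ifs
  · exact Submodule.subset_span (by simp)
  · have hx : x ∈ Submodule.span ℤ {1, x} := Submodule.subset_span (by simp)
    simpa [mul_comm, x] using
      Submodule.smul_mem _ (ArithmeticFunction.sigma (k - 1) n : ℤ) hx

lemma qExpansion_discriminant_mem_fgCoeffSubalgebra :
    qExpansion 1 discriminant ∈ fgCoeffSubalgebra ℤ ℂ := by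
  have hdisc : discriminant = ((1 / 1728 : ℂ) • (ModularForm.mcast (by decide) (E₄.pow 3) -
      ModularForm.mcast (by decide) (E₆.pow 2) : ModularForm 𝒮ℒ 12) : ModularForm 𝒮ℒ 12) := by
    funext z
    have hE₄ : (E₄.pow 3) z = E₄ z ^ 3 := by rw [ModularForm.coe_pow]; rfl
    have hE₆ : (E₆.pow 2) z = E₆ z ^ 2 := by rw [ModularForm.coe_pow]; rfl
    rw [discriminant_eq_E₄_cube_sub_E₆_sq]
    simp [hE₄, hE₆, div_eq_inv_mul]
  rw [hdisc, FunLike.coe_smul, ModularForm.qExpansion_smul one_pos one_mem_strictPeriods_SL,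
    FunLike.coe_sub, ModularForm.qExpansion_sub one_pos one_mem_strictPeriods_SL]
  simp only [coe_mcast, ModularForm.qExpansion_pow one_pos one_mem_strictPeriods_SL]
  exact Subalgebra.smul_mem _ (sub_mem (pow_mem (qExpansion_E_mem_fgCoeffSubalgebra _ ⟨2, rfl⟩) 3)
    (pow_mem (qExpansion_E_mem_fgCoeffSubalgebra _ ⟨3, rfl⟩) 2)) _

lemma exists_qExpansion_eq_E_add_discriminant_mul {k : ℕ} (hk : 3 ≤ k) (hk2 : Even k)
    (f : ModularForm 𝒮ℒ k) : ∃ (a : ℂ) (g : ModularForm 𝒮ℒ (k - 12)),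
      qExpansion 1 f = a • qExpansion 1 (E hk) + qExpansion 1 discriminant * qExpansion 1 g := by
  set a := (qExpansion 1 f).coeff 0
  have hsub : qExpansion 1 (f - a • E hk : ModularForm 𝒮ℒ k) =
      qExpansion 1 f - a • qExpansion 1 (E hk) := by
    rw [FunLike.coe_sub, ModularForm.qExpansion_sub one_pos one_mem_strictPeriods_SL,
      FunLike.coe_smul, ModularForm.qExpansion_smul one_pos one_mem_strictPeriods_SL]
  have hcusp : (qExpansion 1 (f - a • E hk : ModularForm 𝒮ℒ k)).coeff 0 = 0 := by
    rw [hsub, map_sub, PowerSeries.coeff_smul, E_qExpansion_coeff_zero hk hk2, smul_eq_mul,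
      mul_one, sub_self]
  exact ⟨a, _, by
    rw [← qExpansion_eq_qExpansion_discriminant_mul _ hcusp, hsub, add_sub_cancel]⟩

lemma qExpansion_mem_fgCoeffSubalgebra_of_lt (N : ℕ) (k : ℤ) (hk : k < N) (f : ModularForm 𝒮ℒ k) :
    qExpansion 1 f ∈ fgCoeffSubalgebra ℤ ℂ := by
  induction N generalizing k with
  | zero =>
    rw [ModularFormClass.levelOne_neg_weight_eq_zero (by simpa using hk) f, qExpansion_zero]
    exact zero_mem _
  | succ N ih =>
    have of_eq_zero (hf : f = 0) : qExpansion 1 f ∈ fgCoeffSubalgebra ℤ ℂ := by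
      rw [hf, FunLike.coe_zero, qExpansion_zero]
      exact zero_mem _
    rcases Int.even_or_odd k with hk2 | hk2
    · rcases lt_trichotomy k 0 with hk0 | rfl | hk0
      · exact ih k (by omega) f
      · obtain ⟨a, ha⟩ := levelOne_weight_zero_const f
        have hf : (f : ℍ → ℂ) = (a • (1 : ModularForm 𝒮ℒ 0) : ModularForm 𝒮ℒ 0) := by
          funext z
          simp [ha]
        rw [hf, FunLike.coe_smul, ModularForm.qExpansion_smul one_pos one_mem_strictPeriods_SL,
          ModularForm.qExpansion_one]
        exact Subalgebra.smul_mem _ (one_mem _) a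
      · rcases eq_or_ne k 2 with rfl | hk_two
        · exact of_eq_zero (rank_zero_iff_forall_zero.mp levelOne_weight_two_rank_zero f)
        · lift k to ℕ using hk0.le
          norm_cast at hk2
          have hk3 : 3 ≤ k := by
            obtain ⟨a, rfl⟩ := hk2
            omega
          obtain ⟨a, g, hf⟩ := exists_qExpansion_eq_E_add_discriminant_mul hk3 hk2 f
          rw [hf]
          exact add_mem (Subalgebra.smul_mem _ (qExpansion_E_mem_fgCoeffSubalgebra hk3 hk2) a)
            (mul_mem qExpansion_discriminant_mem_fgCoeffSubalgebra
              (ih _ (by push_cast at hk ⊢; omega) g))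
    · exact of_eq_zero (ModularForm.levelOne_odd_weight_eq_zero hk2 f)

lemma qExpansion_mem_fgCoeffSubalgebra {k : ℤ} (f : ModularForm 𝒮ℒ k) :
    qExpansion 1 f ∈ fgCoeffSubalgebra ℤ ℂ :=
  qExpansion_mem_fgCoeffSubalgebra_of_lt (k.toNat + 1) k (by push_cast; omega) f

end FinitelyGeneratedCoefficients

section QSeries

open UpperHalfPlane ModularForm ModularFormClass MatrixGroups
open scoped Manifold

/-- The function `f` on the upper half plane is the sum of the `q`-series with coefficients `a`. -/
def HasQSeries (f : ℍ → ℂ) (a : PowerSeries ℂ) : Prop :=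
  ∀ τ : ℍ, HasSum (fun n : ℕ => a.coeff n * expTwoPiI τ ^ n) (f τ)

namespace HasQSeries

variable {f g : ℍ → ℂ} {a b : PowerSeries ℂ}

lemma add (hf : HasQSeries f a) (hg : HasQSeries g b) : HasQSeries (f + g) (a + b) := fun τ =>
  ((hf τ).add (hg τ)).congr_fun fun n => by rw [map_add, add_mul]

lemma smul (x : ℂ) (hf : HasQSeries f a) : HasQSeries (x • f) (x • a) := fun τ =>
  ((hf τ).mul_left x).congr_fun fun n => by rw [PowerSeries.coeff_smul, smul_eq_mul, mul_assoc]

lemma one : HasQSeries 1 1 := fun τ =>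
  (hasSum_ite_eq (0 : ℕ) (1 : ℂ)).congr_fun fun n => by
    rw [PowerSeries.coeff_one]
    split_ifs with h <;> simp [h]

lemma zero : HasQSeries 0 0 := by simpa using one.smul 0

lemma mul (hf : HasQSeries f a) (hg : HasQSeries g b) : HasQSeries (f * g) (a * b) := fun τ => by
  have hfn := (hf τ).summable.norm
  have hgn := (hg τ).summable.norm
  have hprod := tsum_mul_tsum_eq_tsum_sum_antidiagonal_of_summable_norm hfn hgn
  have hsum := (summable_norm_sum_mul_antidiagonal_of_summable_norm hfn hgn).of_norm.hasSum
  rw [← hprod, (hf τ).tsum_eq, (hg τ).tsum_eq] at hsum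
  refine hsum.congr_fun fun n => ?_
  rw [PowerSeries.coeff_mul, Finset.sum_mul]
  refine Finset.sum_congr rfl fun x hx => ?_
  rw [← Finset.HasAntidiagonal.mem_antidiagonal.mp hx, pow_add]
  ring

lemma pow (hf : HasQSeries f a) (n : ℕ) : HasQSeries (f ^ n) (a ^ n) := by
  induction n with
  | zero => simpa using one
  | succ n ih => rw [pow_succ, pow_succ]; exact ih.mul hf

lemma sum {ι : Type*} {s : Finset ι} {f : ι → ℍ → ℂ} {a : ι → PowerSeries ℂ}
    (h : ∀ i ∈ s, HasQSeries (f i) (a i)) : HasQSeries (∑ i ∈ s, f i) (∑ i ∈ s, a i) := by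
  classical
  induction s using Finset.induction_on with
  | empty => simpa using zero
  | insert i s hi ih =>
    rw [Finset.sum_insert hi, Finset.sum_insert hi]
    exact (h i (by simp)).add (ih fun j hj => h j (by simp [hj]))

lemma differentiableOn_tsum (hf : HasQSeries f a) {ε : ℝ} (hε : 0 < ε) :
    DifferentiableOn ℂ (fun z => ∑' n : ℕ, a.coeff n * expTwoPiI z ^ n) {z | ε < z.im} := by
  refine differentiableOn_tsum_of_summable_norm
    (hf ⟨ε * Complex.I, by simpa using hε⟩).summable.norm
    (fun n => ?_) (isOpen_lt continuous_const continuous_im) (fun n z hz => ?_)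
  · refine DifferentiableOn.const_mul (DifferentiableOn.pow ?_ n) _
    unfold expTwoPiI
    fun_prop
  · rw [norm_mul, norm_mul, norm_pow, norm_pow, norm_expTwoPiI, norm_expTwoPiI]
    gcongr
    simpa using (le_of_lt hz : ε ≤ z.im)

lemma mdifferentiable (hf : HasQSeries f a) : MDiff f := by
  rw [UpperHalfPlane.mdifferentiable_iff]
  intro z hz
  have hopen (ε : ℝ) : IsOpen {z : ℂ | ε < z.im} := isOpen_lt continuous_const continuous_im
  have hz2 : z.im / 2 < z.im := half_lt_self hz
  have hdiff := (hf.differentiableOn_tsum (half_pos hz)).differentiableAt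
    ((hopen _).mem_nhds hz2)
  refine (hdiff.congr_of_eventuallyEq ?_).differentiableWithinAt
  filter_upwards [(hopen 0).mem_nhds hz] with w hw
  rw [Function.comp, ofComplex_apply_of_im_pos hw]
  exact (hf ⟨w, hw⟩).tsum_eq.symm

lemma apply_one_vadd (hf : HasQSeries f a) (τ : ℍ) : f ((1 : ℝ) +ᵥ τ) = f τ := by
  have hexp : expTwoPiI (((1 : ℝ) +ᵥ τ : ℍ) : ℂ) = expTwoPiI τ := by
    rw [coe_vadd, expTwoPiI_add]
    simpa using congr_arg (· * expTwoPiI τ) (expTwoPiI_intCast 1)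
  have hsum := hf ((1 : ℝ) +ᵥ τ)
  rw [hexp] at hsum
  exact hsum.unique (hf τ)

lemma slash_eq (hf : HasQSeries f a) {k : ℤ}
    (hS : ∀ τ : ℍ, f (ModularGroup.S • τ) = (τ : ℂ) ^ k * f τ) (γ : SL(2, ℤ)) : f ∣[k] γ = f := by
  refine SlashInvariantForm.slash_action_generators_SL2Z ?_ ?_ γ <;> funext τ
  · rw [SL_slash_apply, hS, ModularGroup.denom_S, mul_right_comm, ← zpow_add₀ (ne_zero τ)]
    simp
  · rw [SL_slash_apply, modular_T_smul, ModularGroup.denom_apply, hf.apply_one_vadd]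
    simp [ModularGroup.T]

lemma exists_modularForm (hf : HasQSeries f a) {k : ℤ}
    (hS : ∀ τ : ℍ, f (ModularGroup.S • τ) = (τ : ℂ) ^ k * f τ) :
    ∃ g : ModularForm 𝒮ℒ k, qExpansion 1 g = a := by
  have hsum (τ : ℍ) : HasSum (fun m => a.coeff m • Function.Periodic.qParam 1 τ ^ m) (f τ) :=
    (hf τ).congr_fun fun n => by simp [Function.Periodic.qParam, expTwoPiI]
  let g : ModularForm 𝒮ℒ k :=
    { toFun := f
      slash_action_eq' := by
        rintro A ⟨γ, rfl⟩
        exact hf.slash_eq hS γ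
      holo' := hf.mdifferentiable
      bdd_at_cusps' := by
        intro c hc
        rw [Subgroup.IsArithmetic.isCusp_iff_isCusp_SL2Z] at hc
        rw [OnePoint.isBoundedAt_iff_forall_SL2Z hc]
        intro γ _
        rw [hf.slash_eq hS γ]
        exact isBoundedAtImInfty_of_hasSum_qExpansion one_pos hsum }
  refine ⟨g, PowerSeries.ext fun n => ?_⟩
  exact (ModularFormClass.qExpansion_coeff_unique (f := g) one_pos one_mem_strictPeriods_SL
    hsum n).symm

end HasQSeries

end QSeries

section Exponential

open scoped Nat
open Finset.HasAntidiagonal (antidiagonal mem_antidiagonal)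

variable {ι : Type*} {a w : ι → ℂ}

lemma hasSum_pow_div_factorial (z : ℂ) : HasSum (fun n : ℕ => z ^ n / n !) (Complex.exp z) := by
  rw [Complex.exp_eq_exp_ℂ]
  exact NormedSpace.expSeries_div_hasSum_exp z

lemma summable_mul_pow_div_factorial (h : Summable fun i => ‖a i‖ * Real.exp ‖w i‖) :
    Summable fun x : ι × ℕ => a x.1 * (w x.1 ^ x.2 / x.2 !) := by
  have hexp (i : ι) : HasSum (fun n : ℕ => ‖a i * (w i ^ n / n !)‖) (‖a i‖ * Real.exp ‖w i‖) := by
    rw [Real.exp_eq_exp_ℝ]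
    refine ((NormedSpace.expSeries_div_hasSum_exp ‖w i‖).mul_left ‖a i‖).congr_fun fun n => ?_
    simp
  refine Summable.of_norm ((summable_prod_of_nonneg fun _ => norm_nonneg _).mpr
    ⟨fun i => (hexp i).summable, ?_⟩)
  simpa only [(hexp _).tsum_eq] using h

lemma summable_mul_pow_div_factorial_right (h : Summable fun i => ‖a i‖ * Real.exp ‖w i‖) (n : ℕ) :
    Summable fun i => a i * (w i ^ n / n !) :=
  (summable_mul_pow_div_factorial h).comp_injective (i := fun i => (i, n))
    (Prod.mk_left_injective n)

lemma hasSum_tsum_mul_pow_div_factorial (h : Summable fun i => ‖a i‖ * Real.exp ‖w i‖) :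
    HasSum (fun n : ℕ => ∑' i, a i * (w i ^ n / n !)) (∑' i, a i * Complex.exp (w i)) := by
  have hsum := (summable_mul_pow_div_factorial h).hasSum
  have hexp := hsum.prod_fiberwise fun i => (hasSum_pow_div_factorial (w i)).mul_left (a i)
  rw [hexp.tsum_eq]
  exact ((Equiv.prodComm ℕ ι).hasSum_iff.mpr hsum).prod_fiberwise fun n =>
    (summable_mul_pow_div_factorial_right h n).hasSum

lemma eq_of_hasSum_mul_pow {a b : ℕ → ℂ} {f : ℂ → ℂ} (ha : ∀ z, HasSum (fun n => a n * z ^ n) (f z))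
    (hb : ∀ z, HasSum (fun n => b n * z ^ n) (f z)) : a = b := by
  have key {a : ℕ → ℂ} (ha : ∀ z, HasSum (fun n => a n * z ^ n) (f z)) :
      HasFPowerSeriesAt f (FormalMultilinearSeries.ofScalars ℂ a) 0 :=
    hasFPowerSeriesAt_iff.mpr (Eventually.of_forall fun z => by simpa [mul_comm] using ha z)
  funext n
  simpa using congrArg (fun p => FormalMultilinearSeries.coeff p n)
    ((key ha).eq_formalMultilinearSeries (key hb))

lemma hasSum_mul_pow_cauchyProduct {a b : ℕ → ℂ} {z s t : ℂ}
    (ha : HasSum (fun n => a n * z ^ n) s) (hb : HasSum (fun n => b n * z ^ n) t) :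
    HasSum (fun n => (∑ ij ∈ antidiagonal n, a ij.1 * b ij.2) * z ^ n) (s * t) := by
  have hprod := tsum_mul_tsum_eq_tsum_sum_antidiagonal_of_summable_norm
    ha.summable.norm hb.summable.norm
  have hsum := (summable_norm_sum_mul_antidiagonal_of_summable_norm
    ha.summable.norm hb.summable.norm).of_norm.hasSum
  rw [← hprod, ha.tsum_eq, hb.tsum_eq] at hsum
  refine hsum.congr_fun fun n => ?_
  rw [Finset.sum_mul]
  refine Finset.sum_congr rfl fun ij hij => ?_
  rw [← mem_antidiagonal.mp hij, pow_add]
  ring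

end Exponential

section GaussianConvolution

open scoped Nat
open Finset.HasAntidiagonal (antidiagonal mem_antidiagonal)
open UpperHalfPlane

variable {A : Type*} [CommRing A] [Algebra ℂ A]

/-- The coefficient of `zⁱ` in `exp(xz²)`. -/
def gaussianCoeff (x : A) (i : ℕ) : A := if Even i then ((i / 2)! : ℂ)⁻¹ • x ^ (i / 2) else 0

/-- The coefficient of `z^ν` in `exp(xz²) ∑ M n zⁿ`. -/
def gaussianConvolution (x : A) (M : ℕ → A) (ν : ℕ) : A :=
  ∑ ij ∈ antidiagonal ν, gaussianCoeff x ij.1 * M ij.2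

lemma gaussianConvolution_apply {X : Type*} (f : X → ℂ) (M : ℕ → X → ℂ) (ν : ℕ) (x : X) :
    gaussianConvolution f M ν x = gaussianConvolution (f x) (fun n => M n x) ν := by
  simp only [gaussianConvolution, Finset.sum_apply, Pi.mul_apply]
  refine Finset.sum_congr rfl fun ij _ => ?_
  unfold gaussianCoeff
  split_ifs <;> simp

lemma gaussianConvolution_eq_sum_add (x : A) (M : ℕ → A) (ν : ℕ) :
    gaussianConvolution x M ν =
      ∑ ij ∈ (antidiagonal ν).erase (0, ν), gaussianCoeff x ij.1 * M ij.2 + M ν := by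
  rw [gaussianConvolution, ← Finset.sum_erase_add _ _ (a := (0, ν)) (by simp)]
  simp [gaussianCoeff]

lemma mem_of_gaussianConvolution_mem {x : A} {M : ℕ → A} {S : Submodule ℂ A} {N : ℕ}
    (hS : ∀ i, ∀ a ∈ S, gaussianCoeff x i * a ∈ S)
    (hM : ∀ ν < N, gaussianConvolution x M ν ∈ S) {ν : ℕ} (hν : ν < N) :
    M ν ∈ S := by
  induction ν using Nat.strong_induction_on with
  | _ ν ih =>
  have hconv := hM ν hν
  rw [gaussianConvolution_eq_sum_add] at hconv
  refine (Submodule.add_mem_iff_right S (sum_mem fun ij hij => hS _ _ ?_)).mp hconv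
  obtain ⟨hne, hadd⟩ := Finset.mem_erase.mp hij
  rw [mem_antidiagonal] at hadd
  have hlt : ij.2 < ν := lt_of_le_of_ne (by omega) fun h => hne (Prod.ext (by omega) h)
  exact ih ij.2 hlt (hlt.trans hν)

lemma gaussianCoeff_mem {S : Subalgebra ℂ A} {x : A} (hx : x ∈ S) (i : ℕ) :
    gaussianCoeff x i ∈ S := by
  unfold gaussianCoeff
  split_ifs
  exacts [S.smul_mem (pow_mem hx _) _, zero_mem S]

lemma HasQSeries.gaussianConvolution {f : ℍ → ℂ} {a : PowerSeries ℂ} {M : ℕ → ℍ → ℂ}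
    {b : ℕ → PowerSeries ℂ} (hf : HasQSeries f a) (hM : ∀ n, HasQSeries (M n) (b n)) (ν : ℕ) :
    HasQSeries (gaussianConvolution f M ν) (gaussianConvolution a b ν) := by
  refine HasQSeries.sum fun ij _ => HasQSeries.mul ?_ (hM ij.2)
  unfold gaussianCoeff
  split_ifs
  exacts [(hf.pow _).smul _, HasQSeries.zero]

lemma hasSum_gaussianCoeff_mul_pow (x z : ℂ) :
    HasSum (fun i => gaussianCoeff x i * z ^ i) (Complex.exp (x * z ^ 2)) := by
  have hinj : Function.Injective (fun k : ℕ => 2 * k) := fun a b hab => by simpa using hab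
  rw [← hinj.hasSum_iff]
  · refine (hasSum_pow_div_factorial (x * z ^ 2)).congr_fun fun k => ?_
    simp [gaussianCoeff, mul_pow, ← pow_mul]
    ring
  · intro i hi
    rw [gaussianCoeff, if_neg, zero_mul]
    rintro ⟨k, rfl⟩
    exact hi ⟨k, two_mul k⟩

lemma hasSum_gaussianConvolution_mul_pow {M : ℕ → ℂ} {z s : ℂ} (x : ℂ)
    (hM : HasSum (fun n => M n * z ^ n) s) :
    HasSum (fun ν => gaussianConvolution x M ν * z ^ ν) (Complex.exp (x * z ^ 2) * s) :=
  hasSum_mul_pow_cauchyProduct (hasSum_gaussianCoeff_mul_pow x z) hM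

end GaussianConvolution

section Moments

open scoped Nat
open UpperHalfPlane Polynomial

/-- The moment `∑ c(n, r) Q(r) qⁿ` of a Fourier–Jacobi series, where `q = e(τ)`. -/
def jacobiMoment (c : ℤ → ℤ → ℂ) (Q : ℂ[X]) (τ : ℍ) : ℂ :=
  ∑' t : ℤ × ℤ, c t.1 t.2 * expTwoPiI (t.1 * τ) * Q.eval (t.2 : ℂ)

/-- The `q`-series of the moments of a Jacobi cusp form of index `m`, linearly in the polynomial.
The range of summation contains all `r` with `r² < 4nm`. -/
def momentSeries (m : ℤ) (c : ℤ → ℤ → ℂ) : ℂ[X] →ₗ[ℂ] PowerSeries ℂ where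
  toFun Q := PowerSeries.mk fun n =>
    ∑ r ∈ Finset.Icc (-(4 * n * m)) (4 * n * m), c n r * Q.eval (r : ℂ)
  map_add' P Q := by ext; simp [mul_add, Finset.sum_add_distrib]
  map_smul' a Q := by ext; simp [Finset.mul_sum, mul_left_comm]

lemma coeff_momentSeries (m : ℤ) (c : ℤ → ℤ → ℂ) (Q : ℂ[X]) (n : ℕ) :
    (momentSeries m c Q).coeff n =
      ∑ r ∈ Finset.Icc (-(4 * n * m)) (4 * n * m), c n r * Q.eval (r : ℂ) :=
  PowerSeries.coeff_mk n fun n : ℕ =>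
    ∑ r ∈ Finset.Icc (-(4 * n * m)) (4 * n * m), c n r * Q.eval (r : ℂ)

/-- The polynomial `(2πiX)^ν / ν!`, whose value at `r` is the coefficient of `z^ν` in `e(rz)`. -/
def expMonomial (ν : ℕ) : ℂ[X] := monomial ν ((2 * Real.pi * Complex.I) ^ ν / ν !)

lemma eval_expMonomial (ν : ℕ) (x : ℂ) :
    (expMonomial ν).eval x = (2 * Real.pi * Complex.I * x) ^ ν / ν ! := by
  rw [expMonomial, eval_monomial, mul_pow _ x, div_mul_eq_mul_div]

lemma monomial_eq_smul_expMonomial (ν : ℕ) (a : ℂ) :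
    monomial ν a = (a / ((2 * Real.pi * Complex.I) ^ ν / ν !)) • expMonomial ν := by
  rw [expMonomial, smul_monomial, smul_eq_mul, div_mul_cancel₀]
  have : (ν ! : ℂ) ≠ 0 := mod_cast ν.factorial_ne_zero
  simp [Real.pi_ne_zero, this]

lemma map_mem_of_forall_expMonomial {V : Type*} [AddCommGroup V] [Module ℂ V] {S : Submodule ℂ V}
    {f : ℂ[X] →ₗ[ℂ] V} {Q : ℂ[X]} (hf : ∀ ν ≤ Q.natDegree, f (expMonomial ν) ∈ S) : f Q ∈ S := by
  rw [Q.as_sum_range, map_sum]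
  refine sum_mem fun ν hν => ?_
  rw [monomial_eq_smul_expMonomial, map_smul]
  exact S.smul_mem _ (hf ν (Nat.lt_succ_iff.mp (Finset.mem_range.mp hν)))

namespace IsJacobiCuspForm

variable {m : ℤ} {c : ℤ → ℤ → ℂ}

lemma mem_Icc_of_ne_zero (h : IsJacobiCuspForm m c) {n r : ℤ} (hc : c n r ≠ 0) :
    r ∈ Finset.Icc (-(4 * n * m)) (4 * n * m) := by
  have hr := h.support n r hc
  have hpos := Int.le_self_sq r
  have hneg := Int.le_self_sq (-r)
  rw [neg_sq] at hneg
  exact Finset.mem_Icc.mpr ⟨by omega, by omega⟩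

lemma summable_norm_mul_exp (h : IsJacobiCuspForm m c) {τ : ℂ} (hτ : 0 < τ.im) (z : ℂ) :
    Summable fun t : ℤ × ℤ => ‖c t.1 t.2 * expTwoPiI (t.1 * τ)‖ *
      Real.exp ‖2 * Real.pi * Complex.I * (t.2 * z)‖ := by
  refine Summable.of_nonneg_of_le (fun t => by positivity) (fun t => ?_)
    ((h.summable τ (‖z‖ * Complex.I) hτ).norm.add (h.summable τ (-(‖z‖ * Complex.I)) hτ).norm)
  have hnorm : ‖2 * Real.pi * Complex.I * (t.2 * z)‖ = 2 * Real.pi * (|(t.2 : ℝ)| * ‖z‖) := by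
    simp [abs_of_pos Real.pi_pos]
  have hexp : Real.exp ‖2 * Real.pi * Complex.I * (t.2 * z)‖ ≤
      ‖expTwoPiI (t.2 * (‖z‖ * Complex.I))‖ + ‖expTwoPiI (t.2 * -(‖z‖ * Complex.I))‖ := by
    rw [hnorm, norm_expTwoPiI, norm_expTwoPiI]
    rcases abs_cases (t.2 : ℝ) with ⟨habs, -⟩ | ⟨habs, -⟩ <;> rw [habs]
    · exact (le_of_eq (by simp)).trans (le_add_of_nonneg_left (Real.exp_nonneg _))
    · exact (le_of_eq (by simp)).trans (le_add_of_nonneg_right (Real.exp_nonneg _))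
  simp only [jacobiTerm, expTwoPiI_add, ← mul_assoc (c _ _), norm_mul _ (expTwoPiI (t.2 * _)),
    ← mul_add]
  gcongr

lemma summable_jacobiMoment_expMonomial (h : IsJacobiCuspForm m c) (ν : ℕ) (τ : ℍ) :
    Summable fun t : ℤ × ℤ =>
      c t.1 t.2 * expTwoPiI (t.1 * τ) * (expMonomial ν).eval (t.2 : ℂ) := by
  refine (summable_mul_pow_div_factorial_right (h.summable_norm_mul_exp τ.im_pos 1) ν).congr
    fun t => ?_
  rw [eval_expMonomial, mul_one]

lemma hasSum_jacobiMoment_mul_pow (h : IsJacobiCuspForm m c) (τ : ℍ) (z : ℂ) :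
    HasSum (fun ν => jacobiMoment c (expMonomial ν) τ * z ^ ν) (jacobiSeries c τ z) := by
  convert (hasSum_tsum_mul_pow_div_factorial (h.summable_norm_mul_exp τ.im_pos z)) using 1
  · funext ν
    rw [jacobiMoment, ← tsum_mul_right]
    refine tsum_congr fun t => ?_
    rw [eval_expMonomial]
    ring
  · refine tsum_congr fun t => ?_
    rw [jacobiTerm, expTwoPiI_add, mul_assoc, expTwoPiI, expTwoPiI, mul_assoc (2 * _)]

lemma hasSum_mul_eval (h : IsJacobiCuspForm m c) (n : ℤ) (Q : ℂ[X]) (x : ℂ) :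
    HasSum (fun r : ℤ => c n r * x * Q.eval (r : ℂ))
      ((∑ r ∈ Finset.Icc (-(4 * n * m)) (4 * n * m), c n r * Q.eval (r : ℂ)) * x) := by
  rw [Finset.sum_mul]
  refine (hasSum_sum_of_ne_finset_zero fun r hr => ?_).congr_fun fun r => mul_right_comm _ _ _
  rw [not_imp_comm.mp h.mem_Icc_of_ne_zero hr, zero_mul, zero_mul]

lemma hasQSeries_jacobiMoment (h : IsJacobiCuspForm m c) (hm : 0 < m) (ν : ℕ) :
    HasQSeries (jacobiMoment c (expMonomial ν)) (momentSeries m c (expMonomial ν)) := by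
  intro τ
  have hsum := (h.summable_jacobiMoment_expMonomial ν τ).hasSum.prod_fiberwise fun n =>
    h.hasSum_mul_eval n (expMonomial ν) (expTwoPiI (n * τ))
  rw [← (Nat.cast_injective (R := ℤ)).hasSum_iff] at hsum
  · exact hsum.congr_fun fun n => by
      rw [coeff_momentSeries, ← expTwoPiI_natCast_mul]
      simp
  · intro n hn
    refine mul_eq_zero_of_left (Finset.sum_eq_zero fun r _ => mul_eq_zero_of_left ?_ _) _
    by_contra hc
    have hn0 : 0 < n := by nlinarith [sq_nonneg r, h.support n r hc]
    exact hn ⟨n.toNat, by simp [hn0.le]⟩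

end IsJacobiCuspForm

end Moments

section CorrectedTaylorCoefficients

open UpperHalfPlane EisensteinSeries ModularForm MatrixGroups Polynomial

lemma E2_S_smul (τ : ℍ) :
    E2 (ModularGroup.S • τ) = τ ^ 2 * E2 τ - 6 * Complex.I * τ / Real.pi := by
  have hslash := congrFun (E2_slash_action ModularGroup.S) τ
  rw [SL_slash_apply, ModularGroup.denom_S] at hslash
  simp only [Pi.sub_apply, Pi.smul_apply, D2_S, riemannZeta_two, _root_.zpow_neg,
    smul_eq_mul] at hslash
  have hτ := ne_zero τ
  have hpi : (Real.pi : ℂ) ≠ 0 := by simp [Real.pi_ne_zero]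
  norm_cast at hslash ⊢
  push_cast at hslash ⊢
  field_simp at hslash ⊢
  linear_combination hslash

/-- The `q`-expansion `1 - 24 ∑ σ(n) qⁿ` of the quasi-modular Eisenstein series of weight `2`. -/
def E2Series : PowerSeries ℂ :=
  PowerSeries.mk fun n => if n = 0 then 1 else -24 * (ArithmeticFunction.sigma 1 n : ℂ)

lemma hasQSeries_E2 : HasQSeries E2 E2Series := fun τ =>
  (hasSum_qExpansion_E2 (z := τ)).congr_fun fun n => by simp [E2Series, expTwoPiI]

lemma E2Series_mem_fgCoeffSubalgebra : E2Series ∈ fgCoeffSubalgebra ℤ ℂ := by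
  refine ⟨Submodule.span ℤ {1}, Submodule.fg_span_singleton _, fun n => ?_⟩
  rw [E2Series, PowerSeries.coeff_mk, Submodule.mem_span_singleton]
  refine ⟨if n = 0 then 1 else -24 * (ArithmeticFunction.sigma 1 n : ℤ), ?_⟩
  split_ifs <;> simp

/-- The constant `κ` for which `exp(κ E₂(τ) z²) φ(τ, z)` transforms under `τ ↦ -1/τ` without the
factor `e(mz²/τ)`, for `φ` of index `m`. -/
def e2Constant (m : ℤ) : ℂ := Real.pi ^ 2 * m / 3

lemma exp_E2_S_smul_mul_expTwoPiI (m : ℤ) (τ : ℍ) (z : ℂ) :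
    Complex.exp (e2Constant m * E2 (ModularGroup.S • τ) * (z / τ) ^ 2) * expTwoPiI (m * z ^ 2 / τ) =
      Complex.exp (e2Constant m * E2 τ * z ^ 2) := by
  have hτ : (τ : ℂ) ≠ 0 := ne_zero τ
  have hpi : (Real.pi : ℂ) ≠ 0 := by simp [Real.pi_ne_zero]
  rw [E2_S_smul, expTwoPiI, ← Complex.exp_add, e2Constant]
  congr 1
  field_simp
  ring

/-- The Taylor coefficients in `z` of `exp(κ E₂(τ) z²) φ(τ, z)`, with `κ = e2Constant m`. -/
def correctedTaylorCoeff (m : ℤ) (c : ℤ → ℤ → ℂ) : ℕ → ℍ → ℂ :=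
  gaussianConvolution (e2Constant m • E2) fun ν => jacobiMoment c (expMonomial ν)

/-- The `q`-series of `correctedTaylorCoeff m c`. -/
def correctedTaylorSeries (m : ℤ) (c : ℤ → ℤ → ℂ) : ℕ → PowerSeries ℂ :=
  gaussianConvolution (e2Constant m • E2Series) fun ν => momentSeries m c (expMonomial ν)

namespace IsJacobiCuspForm

variable {m : ℤ} {c : ℤ → ℤ → ℂ}

lemma hasSum_correctedTaylorCoeff (h : IsJacobiCuspForm m c) (τ : ℍ) (z : ℂ) :
    HasSum (fun ν => correctedTaylorCoeff m c ν τ * z ^ ν)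
      (Complex.exp (e2Constant m * E2 τ * z ^ 2) * jacobiSeries c τ z) := by
  simpa only [correctedTaylorCoeff, gaussianConvolution_apply] using!
    hasSum_gaussianConvolution_mul_pow (e2Constant m * E2 τ) (h.hasSum_jacobiMoment_mul_pow τ z)

lemma correctedTaylorCoeff_S_smul (h : IsJacobiCuspForm m c) (ν : ℕ) (τ : ℍ) :
    correctedTaylorCoeff m c ν (ModularGroup.S • τ) =
      (τ : ℂ) ^ ((ν + 1 : ℕ) : ℤ) * correctedTaylorCoeff m c ν τ := by
  have hτ : (τ : ℂ) ≠ 0 := ne_zero τ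
  have hS : ((ModularGroup.S • τ : ℍ) : ℂ) = -1 / τ := by
    rw [modular_S_smul]
    simp [neg_div, inv_neg]
  have hsum (z : ℂ) : HasSum
      (fun ν => (τ : ℂ)⁻¹ ^ (ν + 1) * correctedTaylorCoeff m c ν (ModularGroup.S • τ) * z ^ ν)
      (Complex.exp (e2Constant m * E2 τ * z ^ 2) * jacobiSeries c τ z) := by
    have hS' := (h.hasSum_correctedTaylorCoeff (ModularGroup.S • τ) (z / τ)).mul_left ((τ : ℂ)⁻¹)
    rw [hS, h.slash_S τ z τ.im_pos] at hS'
    have hval : Complex.exp (e2Constant m * E2 τ * z ^ 2) * jacobiSeries c τ z = (τ : ℂ)⁻¹ *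
        (Complex.exp (e2Constant m * E2 (ModularGroup.S • τ) * (z / τ) ^ 2) *
          (τ * expTwoPiI (m * z ^ 2 / τ) * jacobiSeries c τ z)) := by
      rw [← exp_E2_S_smul_mul_expTwoPiI]
      field_simp
    rw [hval]
    refine hS'.congr_fun fun ν => ?_
    rw [div_eq_mul_inv, mul_pow]
    ring
  have hcoeff := congrFun (eq_of_hasSum_mul_pow (h.hasSum_correctedTaylorCoeff τ) hsum) ν
  rw [hcoeff, zpow_natCast, ← mul_assoc, ← mul_pow, mul_inv_cancel₀ hτ, one_pow, one_mul]

lemma exists_qExpansion_eq_correctedTaylorSeries (h : IsJacobiCuspForm m c) (hm : 0 < m) (ν : ℕ) :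
    ∃ g : ModularForm 𝒮ℒ ((ν + 1 : ℕ) : ℤ), qExpansion 1 g = correctedTaylorSeries m c ν :=
  ((hasQSeries_E2.smul _).gaussianConvolution (h.hasQSeries_jacobiMoment hm) ν).exists_modularForm
    (h.correctedTaylorCoeff_S_smul ν)

lemma momentSeries_mem_fgCoeffSubalgebra (h : IsJacobiCuspForm m c) (hm : 0 < m) (Q : ℂ[X]) :
    momentSeries m c Q ∈ fgCoeffSubalgebra ℤ ℂ := by
  refine map_mem_of_forall_expMonomial (S := (fgCoeffSubalgebra ℤ ℂ).toSubmodule) fun ν _ => ?_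
  refine mem_of_gaussianConvolution_mem (x := e2Constant m • E2Series)
    (M := fun ν => momentSeries m c (expMonomial ν))
    (fun i _ ha => (fgCoeffSubalgebra ℤ ℂ).mul_mem (gaussianCoeff_mem
      (Subalgebra.smul_mem _ E2Series_mem_fgCoeffSubalgebra _) i) ha)
    (fun n _ => ?_) (Nat.lt_succ_self ν)
  obtain ⟨g, hg⟩ := h.exists_qExpansion_eq_correctedTaylorSeries hm n
  rw [← correctedTaylorSeries, ← hg]
  exact qExpansion_mem_fgCoeffSubalgebra g

lemma X_pow_dvd_correctedTaylorSeries {K : ℕ} (hc : ∀ n r : ℤ, n ≤ K → c n r = 0) (ν : ℕ) :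
    PowerSeries.X ^ (K + 1) ∣ correctedTaylorSeries m c ν := by
  rw [correctedTaylorSeries, gaussianConvolution]
  refine Finset.dvd_sum fun ij _ => dvd_mul_of_dvd_right
    (PowerSeries.X_pow_dvd_iff.mpr fun n hn => ?_) _
  rw [coeff_momentSeries]
  refine Finset.sum_eq_zero fun r _ => ?_
  rw [hc n r (by omega), zero_mul]

lemma momentSeries_eq_zero (h : IsJacobiCuspForm m c) (hm : 0 < m) {K : ℕ}
    (hc : ∀ n r : ℤ, n ≤ K → c n r = 0) {Q : ℂ[X]} (hQ : Q.natDegree < 12 * K) :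
    momentSeries m c Q = 0 := by
  refine (Submodule.mem_bot ℂ).mp (map_mem_of_forall_expMonomial fun ν hν => ?_)
  refine mem_of_gaussianConvolution_mem (x := e2Constant m • E2Series)
    (M := fun ν => momentSeries m c (expMonomial ν)) (fun i a ha => ?_) (fun n hn => ?_)
    (hν.trans_lt hQ)
  · rw [(Submodule.mem_bot ℂ).mp ha, mul_zero]
    exact zero_mem _
  obtain ⟨g, hg⟩ := h.exists_qExpansion_eq_correctedTaylorSeries hm n
  have hg0 : g = 0 := by
    refine ModularForm.sturm_bound_levelOne (lt_of_lt_of_le (b := ((K + 1 : ℕ) : ℕ∞)) ?_ ?_)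
    · rw [Int.toNat_natCast]
      norm_cast
      omega
    · rw [hg]
      exact PowerSeries.nat_le_order _ _
        (PowerSeries.X_pow_dvd_iff.mp (X_pow_dvd_correctedTaylorSeries hc n))
  rw [Submodule.mem_bot, ← correctedTaylorSeries, ← hg, hg0, FunLike.coe_zero, qExpansion_zero]

end IsJacobiCuspForm

end CorrectedTaylorCoefficients

section IntegerValuedInterpolation

open scoped Nat
open Polynomial

lemma exists_polynomial_eval_eq_choose (k : ℕ) :
    ∃ Q : ℂ[X], ∀ r : ℤ, Q.eval (r : ℂ) = (Ring.choose r k : ℤ) := by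
  refine ⟨C ((k ! : ℂ)⁻¹) * descPochhammer ℂ k, fun r => ?_⟩
  have hk : (k ! : ℂ) ≠ 0 := mod_cast k.factorial_ne_zero
  have heval := Ring.descPochhammer_eq_factorial_smul_choose r k
  rw [← eval_eq_smeval] at heval
  rw [eval_mul, eval_C, ← descPochhammer_eval_cast, heval, nsmul_eq_mul]
  push_cast
  field_simp

lemma choose_eq_zero_of_nonneg_of_lt {a : ℤ} {k : ℕ} (ha : 0 ≤ a) (hak : a < k) :
    Ring.choose a k = 0 := by
  lift a to ℕ using ha
  rw [Ring.choose_natCast, Nat.choose_eq_zero_of_lt (by exact_mod_cast hak), Nat.cast_zero]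

lemma exists_integerValued_interpolation {m s : ℤ} (hs : s ∈ Finset.Icc (-m) m) :
    ∃ (Q : ℂ[X]) (v : ℤ → ℤ), (∀ r : ℤ, Q.eval (r : ℂ) = v r) ∧
      ∀ r ∈ Finset.Icc (-m) m, v r = if r = s then 1 else 0 := by
  obtain ⟨hms, hsm⟩ := Finset.mem_Icc.mp hs
  obtain ⟨k, hk⟩ := Int.eq_ofNat_of_zero_le (show 0 ≤ s + m by omega)
  obtain ⟨l, hl⟩ := Int.eq_ofNat_of_zero_le (show 0 ≤ m - s by omega)
  obtain ⟨P, hP⟩ := exists_polynomial_eval_eq_choose k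
  obtain ⟨P', hP'⟩ := exists_polynomial_eval_eq_choose l
  refine ⟨P.comp (X + C (m : ℂ)) * P'.comp (C (m : ℂ) - X),
    fun r => Ring.choose (r + m) k * Ring.choose (m - r) l, fun r => ?_, fun r hr => ?_⟩
  · have hadd := hP (r + m)
    have hsub := hP' (m - r)
    push_cast at hadd hsub
    simp [hadd, hsub]
  · obtain ⟨hmr, hrm⟩ := Finset.mem_Icc.mp hr
    dsimp only
    rcases lt_trichotomy r s with hrs | rfl | hrs
    · rw [if_neg hrs.ne, choose_eq_zero_of_nonneg_of_lt (a := r + m) (by omega) (by omega),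
        zero_mul]
    · rw [hk, hl, Ring.choose_natCast, Ring.choose_natCast]
      simp
    · rw [if_neg hrs.ne', choose_eq_zero_of_nonneg_of_lt (a := m - r) (by omega) (by omega),
        mul_zero]

end IntegerValuedInterpolation

section FiniteDetermination

open Polynomial

lemma exists_heisenbergShift_fst_lt {m : ℤ} {t : ℤ × ℤ}
    (ht : t.2 ∉ Finset.Icc (-m) m) : ∃ l, (heisenbergShift m l t).1 < t.1 := by
  rw [Finset.mem_Icc, not_and_or, not_le, not_le] at ht
  rcases ht with ht | ht
  · refine ⟨1, ?_⟩
    simp only [heisenbergShift, Equiv.coe_fn_mk]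
    omega
  · refine ⟨-1, ?_⟩
    simp only [heisenbergShift, Equiv.coe_fn_mk]
    omega

namespace IsJacobiCuspForm

variable {m : ℤ} {c : ℤ → ℤ → ℂ}

lemma apply_eq_zero_of_nonpos (h : IsJacobiCuspForm m c) (hm : 0 < m) {n : ℤ} (hn : n ≤ 0)
    (r : ℤ) : c n r = 0 := by
  by_contra hc
  nlinarith [sq_nonneg r, h.support n r hc]

lemma apply_mem_of_coeff_momentSeries_mem (h : IsJacobiCuspForm m c) {M : Submodule ℤ ℂ} {n : ℕ}
    {s : ℤ} {Q : ℂ[X]} {v : ℤ → ℤ} (hQ : ∀ r : ℤ, Q.eval (r : ℂ) = v r)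
    (hv : ∀ r ∈ Finset.Icc (-m) m, v r = if r = s then 1 else 0) (hs : s ∈ Finset.Icc (-m) m)
    (hM : (momentSeries m c Q).coeff n ∈ M) (hout : ∀ r ∉ Finset.Icc (-m) m, c n r ∈ M) :
    c n s ∈ M := by
  by_cases hcs : c n s = 0
  · exact hcs ▸ M.zero_mem
  rw [coeff_momentSeries, ← Finset.add_sum_erase _ _ (h.mem_Icc_of_ne_zero hcs), hQ, hv s hs,
    if_pos rfl, Int.cast_one, mul_one] at hM
  refine (Submodule.add_mem_iff_left M (M.sum_mem fun r hr => ?_)).mp hM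
  rw [hQ, mul_comm, ← zsmul_eq_mul]
  by_cases hr' : r ∈ Finset.Icc (-m) m
  · rw [hv r hr', if_neg (Finset.ne_of_mem_erase hr), zero_smul]
    exact M.zero_mem
  · exact M.smul_mem _ (hout r hr')

end IsJacobiCuspForm

lemma exists_finset_polynomial_forall_apply_mem {m : ℤ} (hm : 0 < m) :
    ∃ 𝒬 : Finset ℂ[X], ∀ c, IsJacobiCuspForm m c → ∀ M : Submodule ℤ ℂ,
      (∀ Q ∈ 𝒬, ∀ n, (momentSeries m c Q).coeff n ∈ M) → ∀ n r, c n r ∈ M := by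
  classical
  choose Q v hQ hv using fun s : Finset.Icc (-m) m => exists_integerValued_interpolation s.2
  refine ⟨Finset.univ.image Q, fun c h M hM n r => ?_⟩
  induction hk : n.toNat using Nat.strong_induction_on generalizing n r with
  | _ k ih =>
  rcases le_or_gt n 0 with hn | hn
  · exact h.apply_eq_zero_of_nonpos hm hn r ▸ M.zero_mem
  have hout (r : ℤ) (hr : r ∉ Finset.Icc (-m) m) : c n r ∈ M := by
    obtain ⟨l, hl⟩ := exists_heisenbergShift_fst_lt (t := (n, r)) hr
    rw [← h.apply_heisenbergShift l n r]
    exact ih _ (by simp only [heisenbergShift_apply] at hl; omega) _ _ rfl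
  by_cases hr : r ∈ Finset.Icc (-m) m
  · lift n to ℕ using hn.le
    exact h.apply_mem_of_coeff_momentSeries_mem (hQ ⟨r, hr⟩) (hv ⟨r, hr⟩) hr
      (hM _ (Finset.mem_image_of_mem _ (Finset.mem_univ _)) n) hout
  · exact hout r hr

lemma IsJacobiCuspForm.exists_fg_submodule {m : ℤ} {c : ℤ → ℤ → ℂ} (h : IsJacobiCuspForm m c)
    (hm : 0 < m) : ∃ M : Submodule ℤ ℂ, M.FG ∧ ∀ n r, c n r ∈ M := by
  obtain ⟨𝒬, h𝒬⟩ := exists_finset_polynomial_forall_apply_mem hm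
  choose M hfg hM using h.momentSeries_mem_fgCoeffSubalgebra hm
  exact ⟨⨆ Q ∈ 𝒬, M Q, Submodule.fg_biSup _ _ fun Q _ => hfg Q, h𝒬 c h _ fun Q hQ n =>
    (le_iSup₂_of_le Q hQ le_rfl : M Q ≤ _) (hM Q n)⟩

lemma exists_forall_eq_zero_of_forall_le {m : ℤ} (hm : 0 < m) :
    ∃ K : ℕ, ∀ c, IsJacobiCuspForm m c → (∀ n r : ℤ, n ≤ K → c n r = 0) → c = 0 := by
  obtain ⟨𝒬, h𝒬⟩ := exists_finset_polynomial_forall_apply_mem hm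
  refine ⟨𝒬.sup natDegree + 1, fun c h hc => ?_⟩
  funext n r
  refine (Submodule.mem_bot ℤ).mp (h𝒬 c h ⊥ (fun Q hQ n => ?_) n r)
  have hdeg : Q.natDegree ≤ 𝒬.sup natDegree := Finset.le_sup hQ
  rw [h.momentSeries_eq_zero hm hc (by omega), map_zero]
  exact zero_mem _

end FiniteDetermination

section CuspLattice

open Polynomial

/-- The Jacobi cusp forms of index `m` with Fourier coefficients in `M`. -/
def jacobiCuspLattice (m : ℤ) (M : Submodule ℤ ℂ) : Submodule ℤ (ℤ → ℤ → ℂ) where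
  carrier := {c | IsJacobiCuspForm m c ∧ ∀ n r, c n r ∈ M}
  add_mem' ha hb := ⟨ha.1.add hb.1, fun n r => M.add_mem (ha.2 n r) (hb.2 n r)⟩
  zero_mem' := ⟨IsJacobiCuspForm.zero m, fun _ _ => M.zero_mem⟩
  smul_mem' a c hc := ⟨Int.cast_smul_eq_zsmul ℂ a c ▸ hc.1.smul (a : ℂ),
    fun n r => M.smul_mem a (hc.2 n r)⟩

lemma finite_jacobiCuspLattice {m : ℤ} (hm : 0 < m) {M : Submodule ℤ ℂ} (hM : M.FG) :
    Module.Finite ℤ (jacobiCuspLattice m M) := by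
  obtain ⟨K, hK⟩ := exists_forall_eq_zero_of_forall_le hm
  have : Module.Finite ℤ M := Module.Finite.iff_fg.mpr hM
  let S := Finset.Icc (0 : ℤ) K ×ˢ Finset.Icc (-(4 * K * m)) (4 * K * m)
  let restrict : jacobiCuspLattice m M →ₗ[ℤ] (S → M) :=
    { toFun := fun v s => ⟨v.1 s.1.1 s.1.2, v.2.2 _ _⟩
      map_add' := fun _ _ => rfl
      map_smul' := fun _ _ => rfl }
  refine Module.Finite.of_injective restrict ((injective_iff_map_eq_zero _).mpr fun v hv => ?_)
  refine Subtype.ext (hK v.1 v.2.1 fun n r hn => ?_)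
  rcases le_or_gt n 0 with hn0 | hn0
  · exact v.2.1.apply_eq_zero_of_nonpos hm hn0 r
  by_contra hne
  have hr := Finset.mem_Icc.mp (v.2.1.mem_Icc_of_ne_zero hne)
  have hnK : 4 * n * m ≤ 4 * K * m := by gcongr
  have hS : (n, r) ∈ S := Finset.mem_product.mpr
    ⟨Finset.mem_Icc.mpr ⟨hn0.le, hn⟩, Finset.mem_Icc.mpr ⟨by omega, by omega⟩⟩
  exact hne (congrArg Subtype.val (congrFun hv ⟨(n, r), hS⟩))

variable {p : ℕ}

lemma heckeV_add (p : ℕ) (a b : ℤ → ℤ → ℂ) : heckeV p (a + b) = heckeV p a + heckeV p b := by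
  funext n r
  simp only [heckeV, Pi.add_apply]
  split_ifs <;> ring

lemma heckeW_add (p : ℕ) [NeZero p] (m : ℤ) (a b : ℤ → ℤ → ℂ) :
    heckeW p m (a + b) = heckeW p m a + heckeW p m b := by
  funext n r
  have hterm (l : ℤ) (t : ℤ × ℤ) :
      heckeWTerm p m (a + b) l t = heckeWTerm p m a l t + heckeWTerm p m b l t := by
    simp only [heckeWTerm, Pi.add_apply]
    split_ifs <;> simp
  simp only [heckeW, hterm, Pi.add_apply, Finset.sum_add_distrib]
  ring

lemma heckeN_add (p : ℕ) [NeZero p] (m : ℤ) (a b : ℤ → ℤ → ℂ) :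
    heckeN p m (a + b) = heckeN p m a + heckeN p m b := by
  rw [heckeN, heckeV_add, heckeW_add]
  rfl

lemma heckeV_mem {M : Submodule ℤ ℂ} {c : ℤ → ℤ → ℂ} (h : ∀ n r, c n r ∈ M) (n r : ℤ) :
    heckeV p c n r ∈ M := by
  unfold heckeV
  split_ifs
  exacts [M.add_mem (h _ _) (h _ _), M.add_mem (h _ _) M.zero_mem]

lemma heckeW_mem [NeZero p] {m : ℤ} {M : Submodule ℤ ℂ} {c : ℤ → ℤ → ℂ} (h : ∀ n r, c n r ∈ M)
    (n r : ℤ) : heckeW p m c n r ∈ M := by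
  rw [heckeW, ← nsmul_eq_mul]
  refine M.add_mem (M.nsmul_mem (h _ _) _) (M.sum_mem fun l _ => ?_)
  unfold heckeWTerm
  split_ifs
  exacts [h _ _, M.zero_mem]

/-- The operator `heckeN p m` on the Jacobi cusp forms with coefficients in `M`. -/
def heckeNLattice (p : ℕ) [Fact p.Prime] (m : ℤ) (M : Submodule ℤ ℂ) :
    Module.End ℤ (jacobiCuspLattice m M) :=
  (AddMonoidHom.mk' (fun v : jacobiCuspLattice m M =>
    (⟨heckeN p m v.1, v.2.1.heckeN, heckeW_mem (heckeV_mem v.2.2)⟩ : jacobiCuspLattice m M))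
    fun a b => Subtype.ext (heckeN_add p m a.1 b.1)).toIntLinearMap

/-- Restriction of the coefficients to the indices `(p²ᵏn, pᵏr)`. -/
def raySequence (p : ℕ) (m : ℤ) (M : Submodule ℤ ℂ) (n r : ℤ) :
    jacobiCuspLattice m M →ₗ[ℤ] (ℕ → M) where
  toFun v k := ⟨v.1 (p ^ (2 * k) * n) (p ^ k * r), v.2.2 _ _⟩
  map_add' _ _ := rfl
  map_smul' _ _ := rfl

theorem IsJacobiCuspForm.apply_ray_eq_zero {m : ℤ} {c : ℤ → ℤ → ℂ} (h : IsJacobiCuspForm m c)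
    (hm : 0 < m) {p : ℕ} [Fact p.Prime] {n r : ℤ}
    (hrec : ∀ v, IsJacobiCuspForm m v → ∀ k : ℕ,
      _root_.heckeN p m v (p ^ (2 * k) * n) (p ^ k * r) =
        p * v (p ^ (2 * (k + 1)) * n) (p ^ (k + 1) * r) +
          (p + 1) * v (p ^ (2 * k) * n) (p ^ k * r) +
        if k = 0 then 0 else v (p ^ (2 * (k - 1)) * n) (p ^ (k - 1) * r)) (k : ℕ) :
    c (p ^ (2 * k) * n) (p ^ k * r) = 0 := by
  obtain ⟨M, hM, hc⟩ := h.exists_fg_submodule hm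
  have := finite_jacobiCuspLattice hm hM
  have : Module.Finite ℤ M := Module.Finite.iff_fg.mpr hM
  let N : Module.End ℤ (jacobiCuspLattice m M) := heckeNLattice p m M - (p + 1 : ℤ) • 1
  obtain ⟨P, hP, hPN⟩ := LinearMap.exists_monic_and_aeval_eq_zero ℤ N
  have hray (v) : raySequence p m M n r (N v) = tridiagonalOp p M (raySequence p m M n r v) := by
    funext k
    apply Subtype.ext
    have hN : (raySequence p m M n r (N v) k : ℂ) =
      _root_.heckeN p m v.1 (p ^ (2 * k) * n) (p ^ k * r) -
        (p + 1 : ℤ) • v.1 (p ^ (2 * k) * n) (p ^ k * r) := rfl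
    rw [hN, hrec v.1 v.2.1 k, tridiagonalOp]
    rcases eq_or_ne k 0 with rfl | hk
    · simp [raySequence]
    · simp [raySequence, hk]
      ring
  have hzero := map_aeval_of_intertwines hray P ⟨c, h, hc⟩
  rw [hPN, LinearMap.zero_apply, map_zero] at hzero
  exact congrArg Subtype.val
    (congrFun (eq_zero_of_aeval_tridiagonalOp_eq_zero (hP.map _).ne_zero hzero.symm) k)

end CuspLattice

section Ramification

/-- The congruence condition for `p` to ramify in `ℚ(√-D)` when `D` has no square factor `p²` left
to split off; for `p = 2` this reads `-D ≡ 2, 3 mod 4`. -/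
def IsRamifiedFundamental (p : ℕ) (D : ℤ) : Prop :=
  (p = 2 ∧ (D % 4 = 1 ∨ D % 4 = 2)) ∨ (p ≠ 2 ∧ (p : ℤ) ∣ D ∧ ¬ (p : ℤ) ^ 2 ∣ D)

/-- The prime `p` ramifies in `ℚ(√-D)`. -/
def IsRamified (p : ℕ) (D : ℤ) : Prop :=
  ∃ (k : ℕ) (D₀ : ℤ), D = p ^ (2 * k) * D₀ ∧ IsRamifiedFundamental p D₀

variable {p : ℕ} {D : ℤ}

namespace IsRamified

lemma pow_mul (h : IsRamified p D) (a : ℕ) : IsRamified p (p ^ (2 * a) * D) := by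
  obtain ⟨k, D₀, rfl, hD₀⟩ := h
  exact ⟨a + k, D₀, by ring, hD₀⟩

lemma of_sq_mul [NeZero p] (h : IsRamified p (p ^ 2 * D)) : IsRamified p D := by
  obtain ⟨k, D₀, heq, hD₀⟩ := h
  rcases k with _ | k
  · rw [mul_zero, pow_zero, one_mul] at heq
    rcases hD₀ with ⟨rfl, hmod⟩ | ⟨_, _, hndvd⟩
    · push_cast at heq
      omega
    · exact absurd ⟨D, heq.symm⟩ hndvd
  · have hp : (p : ℤ) ^ 2 ≠ 0 := pow_ne_zero _ (mod_cast NeZero.ne p)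
    exact ⟨k, D₀, mul_left_cancel₀ hp (by rw [heq]; ring), hD₀⟩

lemma of_pow_mul [NeZero p] (a : ℕ) (h : IsRamified p (p ^ (2 * a) * D)) : IsRamified p D := by
  induction a with
  | zero => simpa using h
  | succ a ih => exact ih (of_sq_mul (by convert h using 1; ring))

lemma dvd (h : IsRamified p D) (hp : p ≠ 2) : (p : ℤ) ∣ D := by
  obtain ⟨k, D₀, rfl, ⟨hp2, _⟩ | ⟨_, hdvd, _⟩⟩ := h
  · exact absurd hp2 hp
  · exact hdvd.mul_left _

end IsRamified

lemma eq_one_or_eq_two_of_squarefree {a : ℕ} (ha : Squarefree a)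
    (h : ∀ p : ℕ, p.Prime → p ∣ a → p = 2) : a = 1 ∨ a = 2 := by
  have hsub : a.primeFactors ⊆ {2} := fun p hp => Finset.mem_singleton.mpr
    (h p (Nat.prime_of_mem_primeFactors hp) (Nat.dvd_of_mem_primeFactors hp))
  rw [← Nat.prod_primeFactors_of_squarefree ha]
  rcases Finset.subset_singleton_iff.mp hsub with h | h <;> simp [h]

lemma exists_prime_isRamified (hD : 0 < D) : ∃ p : ℕ, p.Prime ∧ IsRamified p D := by
  lift D to ℕ using hD.le
  obtain ⟨a, b, hab, ha⟩ := Nat.sq_mul_squarefree D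
  have hb : b ≠ 0 := by rintro rfl; simp_all
  by_cases h : ∃ p : ℕ, p.Prime ∧ p ∣ a ∧ p ≠ 2
  · obtain ⟨p, hp, hpa, hp2⟩ := h
    obtain ⟨k, b', hb', rfl⟩ := Nat.exists_eq_pow_mul_and_not_dvd hb p hp.ne_one
    refine ⟨p, hp, k, b' ^ 2 * a, by rw [← hab]; push_cast; ring,
      Or.inr ⟨hp2, (Int.natCast_dvd_natCast.mpr hpa).mul_left _, fun hd => ?_⟩⟩
    have hcop : (p ^ 2).Coprime (b' ^ 2) := .pow _ _ (hp.coprime_iff_not_dvd.mpr hb')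
    have hsq : p * p ∣ a := sq p ▸ hcop.dvd_of_dvd_mul_left (by exact_mod_cast hd)
    exact hp.ne_one (Nat.isUnit_iff.mp (ha p hsq))
  · push Not at h
    obtain ⟨k, b', hb', rfl⟩ := Nat.exists_eq_pow_mul_and_not_dvd hb 2 (by norm_num)
    refine ⟨2, Nat.prime_two, k, b' ^ 2 * a, by rw [← hab]; push_cast; ring, Or.inl ⟨rfl, ?_⟩⟩
    have hodd : (b' : ℤ) ^ 2 % 4 = 1 := Int.sq_mod_four_eq_one_of_odd (by
      rwa [Int.odd_coe_nat, ← Nat.not_even_iff_odd, even_iff_two_dvd])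
    rcases eq_one_or_eq_two_of_squarefree ha h with rfl | rfl <;> push_cast <;> omega

lemma even_of_isRamified_two {m n r : ℤ} (h : IsRamified 2 (4 * n * m - r ^ 2)) : Even r := by
  obtain ⟨k, D₀, hD, hD₀⟩ := h
  by_contra hr
  have hsq : r ^ 2 % 4 = 1 := Int.sq_mod_four_eq_one_of_odd (Int.not_even_iff_odd.mp hr)
  rcases k with _ | k
  · simp only [IsRamifiedFundamental, mul_zero, pow_zero, one_mul, mul_assoc] at hD hD₀
    omega
  · rw [show ((2 : ℕ) : ℤ) ^ (2 * (k + 1)) * D₀ = 4 * (2 ^ (2 * k) * D₀) by push_cast; ring,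
      mul_assoc] at hD
    omega

lemma zmodTwo_quadratic_eq_zero_iff {m : ℤ} (hm : ¬ (2 : ℤ) ∣ m) {r : ℤ} (hr : Even r)
    (n l : ZMod 2) : n + r * l + m * l ^ 2 = 0 ↔ l = n := by
  have hr0 : (r : ZMod 2) = 0 := (ZMod.intCast_zmod_eq_zero_iff_dvd r 2).mpr hr.two_dvd
  have hm1 : (m : ZMod 2) = 1 := by
    rw [← Int.cast_one, ZMod.intCast_eq_intCast_iff_dvd_sub]
    push_cast
    omega
  rw [hr0, hm1]
  revert n l
  decide

lemma IsRamified.exists_unique_dvd_heisenbergShift [Fact p.Prime] {m n r : ℤ} (hm : ¬ (p : ℤ) ∣ m)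
    (h : IsRamified p (4 * n * m - r ^ 2)) :
    ∃ l₀ : ZMod p, ∀ l : ZMod p, (p : ℤ) ∣ (heisenbergShift m l.val (n, r)).1 ↔ l = l₀ := by
  have hquad (l : ZMod p) : (p : ℤ) ∣ (heisenbergShift m l.val (n, r)).1 ↔
      (n + r * l + m * l ^ 2 : ZMod p) = 0 := by
    rw [← ZMod.intCast_zmod_eq_zero_iff_dvd, heisenbergShift_apply]
    push_cast
    rw [ZMod.natCast_zmod_val]
  simp only [hquad]
  rcases eq_or_ne p 2 with rfl | hp2
  · exact ⟨n, zmodTwo_quadratic_eq_zero_iff hm (even_of_isRamified_two h) n⟩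
  · have : NeZero (2 : ZMod p) := ⟨by
      rw [← Nat.cast_ofNat, Ne, ZMod.natCast_eq_zero_iff]
      exact fun hd => hp2 ((Nat.prime_dvd_prime_iff_eq Fact.out Nat.prime_two).mp hd)⟩
    have hm0 : (m : ZMod p) ≠ 0 := by rwa [Ne, ZMod.intCast_zmod_eq_zero_iff_dvd]
    have hD := (ZMod.intCast_zmod_eq_zero_iff_dvd _ p).mpr (h.dvd hp2)
    push_cast at hD
    have hdisc : discrim (m : ZMod p) r n = 0 := by
      rw [discrim]
      linear_combination -hD
    refine ⟨-r / (2 * m), fun l => ?_⟩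
    rw [← quadratic_eq_zero_iff_of_discrim_eq_zero hm0 hdisc l]
    ring_nf

end Ramification

section RamifiedCoefficients

namespace IsJacobiCuspForm

variable {m n r : ℤ} {c : ℤ → ℤ → ℂ}

lemma apply_eq_zero_of_discriminant_nonpos (h : IsJacobiCuspForm m c)
    (hD : 4 * n * m - r ^ 2 ≤ 0) : c n r = 0 := by
  by_contra hne
  linarith [h.support n r hne]

lemma apply_ray_eq_apply_ray_succ (h : IsJacobiCuspForm m c) {p : ℕ} {l n₁ r₁ : ℤ}
    (hn : (heisenbergShift m l (n, r)).1 = p ^ 2 * n₁)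
    (hr : (heisenbergShift m l (n, r)).2 = p * r₁) (k : ℕ) :
    c (p ^ (2 * k) * n) (p ^ k * r) = c (p ^ (2 * (k + 1)) * n₁) (p ^ (k + 1) * r₁) := by
  rw [heisenbergShift_apply] at hn hr
  rw [← h.apply_heisenbergShift (p ^ k * l)]
  congr 1
  · rw [show (p : ℤ) ^ (2 * (k + 1)) * n₁ = p ^ (2 * k) * (p ^ 2 * n₁) by ring, ← hn]
    ring
  · rw [show (p : ℤ) ^ (k + 1) * r₁ = p ^ k * (p * r₁) by ring, ← hr]
    ring

variable {p : ℕ} [Fact p.Prime]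

lemma heckeN_apply_ray_succ (h : IsJacobiCuspForm m c) (hm : ¬ (p : ℤ) ∣ m)
    (hram : IsRamified p (4 * n * m - r ^ 2)) (k : ℕ) :
    _root_.heckeN p m c (p ^ (2 * (k + 1)) * n) (p ^ (k + 1) * r) =
      p * c (p ^ (2 * (k + 1 + 1)) * n) (p ^ (k + 1 + 1) * r) +
        (p + 1) * c (p ^ (2 * (k + 1)) * n) (p ^ (k + 1) * r) +
      c (p ^ (2 * k) * n) (p ^ k * r) := by
  have hp : (p : ℤ) ≠ 0 := mod_cast NeZero.ne p
  have hn : (p : ℤ) ^ (2 * (k + 1)) * n = p ^ 2 * (p ^ (2 * k) * n) := by ring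
  have hr : (p : ℤ) ^ (k + 1) * r = p * (p ^ k * r) := by ring
  have hram' : IsRamified p (4 * (p ^ (2 * (k + 1)) * n) * m - (p ^ (k + 1) * r) ^ 2) := by
    convert hram.pow_mul (k + 1) using 1
    ring
  obtain ⟨l₀, hl₀⟩ := hram'.exists_unique_dvd_heisenbergShift hm
  obtain rfl : 0 = l₀ := (hl₀ 0).mp (by
    simp only [heisenbergShift_apply, ZMod.val_zero, Nat.cast_zero]
    exact ⟨p ^ (2 * k + 1) * n, by ring⟩)
  rw [heckeN_apply h hl₀]
  simp only [heisenbergShift_apply, ZMod.val_zero, Nat.cast_zero, mul_zero, add_zero,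
    zero_pow two_ne_zero]
  rw [if_pos ⟨⟨_, hn⟩, ⟨_, hr⟩⟩, hn, hr, Int.mul_ediv_cancel_left _ (pow_ne_zero 2 hp),
    Int.mul_ediv_cancel_left _ hp, ← hn, ← hr]
  congr 4 <;> ring

lemma heckeN_apply_ray (h : IsJacobiCuspForm m c) (hm : ¬ (p : ℤ) ∣ m)
    (hram : IsRamified p (4 * n * m - r ^ 2)) {l₀ : ZMod p}
    (hl₀ : ∀ l : ZMod p, (p : ℤ) ∣ (heisenbergShift m l.val (n, r)).1 ↔ l = l₀)
    (hprim : ¬ ((p : ℤ) ^ 2 ∣ (heisenbergShift m l₀.val (n, r)).1 ∧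
      (p : ℤ) ∣ (heisenbergShift m l₀.val (n, r)).2)) (k : ℕ) :
    _root_.heckeN p m c (p ^ (2 * k) * n) (p ^ k * r) =
      p * c (p ^ (2 * (k + 1)) * n) (p ^ (k + 1) * r) +
        (p + 1) * c (p ^ (2 * k) * n) (p ^ k * r) +
      if k = 0 then 0 else c (p ^ (2 * (k - 1)) * n) (p ^ (k - 1) * r) := by
  rcases k with _ | k
  · simp only [mul_zero, pow_zero, one_mul, if_true, zero_add, mul_one, pow_one]
    rw [heckeN_apply h hl₀, if_neg hprim]
  · rw [heckeN_apply_ray_succ h hm hram, if_neg k.succ_ne_zero, Nat.add_sub_cancel]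

-- Descent on the discriminant: a Heisenberg shift with `p² ∣ n` and `p ∣ r` replaces it by its
-- quotient by `p²`, and if there is none then the ray recurrence starts at `k = 0`.
theorem apply_ray_eq_zero_of_isRamified (h : IsJacobiCuspForm m c) (hm0 : 0 < m)
    (hm : ¬ (p : ℤ) ∣ m) (hram : IsRamified p (4 * n * m - r ^ 2)) (k : ℕ) :
    c (p ^ (2 * k) * n) (p ^ k * r) = 0 := by
  induction hN : (4 * n * m - r ^ 2).toNat using Nat.strong_induction_on generalizing n r k with
  | _ N ih =>
  obtain ⟨l₀, hl₀⟩ := hram.exists_unique_dvd_heisenbergShift hm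
  by_cases hprim : (p : ℤ) ^ 2 ∣ (heisenbergShift m l₀.val (n, r)).1 ∧
      (p : ℤ) ∣ (heisenbergShift m l₀.val (n, r)).2
  · obtain ⟨⟨n₁, hn₁⟩, ⟨r₁, hr₁⟩⟩ := hprim
    have hD : 4 * n * m - r ^ 2 = p ^ 2 * (4 * n₁ * m - r₁ ^ 2) := by
      rw [← discriminant_heisenbergShift m l₀.val (n, r), hn₁, hr₁]
      ring
    rw [h.apply_ray_eq_apply_ray_succ hn₁ hr₁]
    rcases le_or_gt (4 * n₁ * m - r₁ ^ 2) 0 with hD₁ | hD₁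
    · refine h.apply_eq_zero_of_discriminant_nonpos ?_
      calc _ = (p : ℤ) ^ (2 * (k + 1)) * (4 * n₁ * m - r₁ ^ 2) := by ring
        _ ≤ 0 := mul_nonpos_of_nonneg_of_nonpos (by positivity) hD₁
    · have hp : (1 : ℤ) < p ^ 2 := one_lt_pow₀ (mod_cast (Fact.out : p.Prime).one_lt) two_ne_zero
      refine ih _ ?_ (IsRamified.of_sq_mul (hD ▸ hram)) _ rfl
      rw [← hN, Int.toNat_lt_toNat (by rw [hD]; positivity), hD]
      exact lt_mul_of_one_lt_left hD₁ hp
  · exact h.apply_ray_eq_zero hm0 (fun v hv => hv.heckeN_apply_ray hm hram hl₀ hprim) k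

lemma sum_heckeWTerm_eq_zero (h : IsJacobiCuspForm (p * m) c) {B : ℤ}
    (hB : ∀ n r, IsRamified p (4 * n * (p * m) - r ^ 2) → 4 * n * (p * m) - r ^ 2 < p ^ 2 * B →
      c n r = 0)
    (hram : IsRamified p (4 * n * m - r ^ 2)) (hle : 4 * n * m - r ^ 2 ≤ B) :
    ∑ l : ZMod p, heckeWTerm p m c l.val (n, r) = 0 := by
  have hp : (1 : ℤ) < p ^ 2 := one_lt_pow₀ (mod_cast (Fact.out : p.Prime).one_lt) two_ne_zero
  refine Finset.sum_eq_zero fun l _ => ?_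
  rw [heckeWTerm]
  split_ifs with hdvd
  · obtain ⟨t, ht⟩ := hdvd
    rw [ht, Int.mul_ediv_cancel_left _ (by exact_mod_cast NeZero.ne p)]
    have hD : 4 * t * (p * m) - (heisenbergShift m l.val (n, r)).2 ^ 2 = 4 * n * m - r ^ 2 := by
      rw [← discriminant_heisenbergShift m l.val (n, r), ht]
      ring
    rcases le_or_gt (4 * n * m - r ^ 2) 0 with hD₀ | hD₀
    · exact h.apply_eq_zero_of_discriminant_nonpos (hD.trans_le hD₀)
    · refine hB _ _ (hD ▸ hram) (hD.trans_lt ?_)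
      exact hle.trans_lt (lt_mul_of_one_lt_left (hD₀.trans_le hle) hp)
  · rfl

-- Applying `heckeW` lowers the power of `p` in the index; its side terms involve only smaller
-- discriminants.
theorem apply_pow_mul_eq_zero {a : ℕ} (h : IsJacobiCuspForm (p ^ a * m) c) (hm0 : 0 < m)
    (hm : ¬ (p : ℤ) ∣ m)
    (hB : ∀ n' r', IsRamified p (4 * n' * (p ^ a * m) - r' ^ 2) →
      4 * n' * (p ^ a * m) - r' ^ 2 < p ^ (2 * a) * (4 * n * m - r ^ 2) → c n' r' = 0)
    (hram : IsRamified p (4 * n * m - r ^ 2)) : c (p ^ a * n) (p ^ a * r) = 0 := by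
  induction a generalizing c with
  | zero => simpa using apply_ray_eq_zero_of_isRamified (by simpa using h) hm0 hm hram 0
  | succ a ih =>
  have hpc : (p : ℂ) ≠ 0 := mod_cast NeZero.ne p
  rw [show (p : ℤ) ^ (2 * (a + 1)) * (4 * n * m - r ^ 2) =
    p ^ 2 * (p ^ (2 * a) * (4 * n * m - r ^ 2)) by ring, pow_succ', mul_assoc] at hB
  rw [pow_succ', mul_assoc] at h
  have hW {n' r' : ℤ} (hram' : IsRamified p (4 * n' * (p ^ a * m) - r' ^ 2))
      (hle : 4 * n' * (p ^ a * m) - r' ^ 2 ≤ p ^ (2 * a) * (4 * n * m - r ^ 2)) :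
      _root_.heckeW p (p ^ a * m) c n' r' = p * c (p * n') (p * r') := by
    rw [_root_.heckeW, h.sum_heckeWTerm_eq_zero hB hram' hle, add_zero]
  have hzero := ih h.heckeW fun n' r' hram' hlt => by
    have hD : 4 * (p * n') * (p * (p ^ a * m)) - (p * r') ^ 2 =
      (p : ℤ) ^ 2 * (4 * n' * (p ^ a * m) - r' ^ 2) := by ring
    rw [hW hram' hlt.le, hB, mul_zero]
    · rw [hD]
      simpa using hram'.pow_mul 1
    · rw [hD]
      exact mul_lt_mul_of_pos_left hlt (pow_pos (mod_cast NeZero.pos p) 2)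
  have hD : 4 * (p ^ a * n) * (p ^ a * m) - (p ^ a * r) ^ 2 =
    (p : ℤ) ^ (2 * a) * (4 * n * m - r ^ 2) := by ring
  rw [hW (hD ▸ hram.pow_mul a) hD.le, mul_eq_zero, or_iff_right hpc] at hzero
  rwa [pow_succ', mul_assoc, mul_assoc]

end IsJacobiCuspForm

end RamifiedCoefficients

section BinaryForms

lemma binaryForm_pos {R : Type*} [CommRing R] [LinearOrder R] [IsStrictOrderedRing R]
    {n r m c d : R} (hn : 0 < n) (hD : 0 < 4 * n * m - r ^ 2) (hcd : IsCoprime c d) :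
    0 < n * c ^ 2 + r * c * d + m * d ^ 2 := by
  rcases eq_or_ne d 0 with rfl | hd
  · have hc : c ≠ 0 := fun hc => not_isCoprime_zero_zero (hc ▸ hcd)
    simpa using mul_pos hn (pow_pos (abs_pos.mpr hc) 2)
  · have hsq : 4 * n * (n * c ^ 2 + r * c * d + m * d ^ 2) =
        (2 * n * c + r * d) ^ 2 + (4 * n * m - r ^ 2) * d ^ 2 := by ring
    exact pos_of_mul_pos_right (hsq ▸ by positivity) (by positivity : 0 ≤ 4 * n)

lemma dvd_quadratic_mul_add_iff (p n r m k e : ℤ) :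
    p ∣ n * (p * k + e) ^ 2 + r * (p * k + e) + m ↔ p ∣ n * e ^ 2 + r * e + m := by
  rw [show n * (p * k + e) ^ 2 + r * (p * k + e) + m =
    p * (n * p * k ^ 2 + 2 * n * k * e + r * k) + (n * e ^ 2 + r * e + m) by ring]
  exact dvd_add_right (dvd_mul_right _ _)

lemma exists_pow_mul_primitive {p : ℕ} (hp : p ≠ 1) {n : ℤ} (hn : n ≠ 0) (r m : ℤ) :
    ∃ (a : ℕ) (n' r' m' : ℤ), n = p ^ a * n' ∧ r = p ^ a * r' ∧ m = p ^ a * m' ∧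
      ¬ ((p : ℤ) ∣ n' ∧ (p : ℤ) ∣ r' ∧ (p : ℤ) ∣ m') := by
  let g := Int.gcd n (Int.gcd r m)
  have hg : g ≠ 0 := fun h => hn (Int.gcd_eq_zero_iff.mp h).1
  obtain ⟨a, g', hg', hga⟩ := Nat.exists_eq_pow_mul_and_not_dvd hg p hp
  have hdvd (x : ℤ) (hx : (g : ℤ) ∣ x) : (p : ℤ) ^ a ∣ x :=
    (Dvd.intro (g' : ℤ) (by exact_mod_cast hga.symm)).trans hx
  have hgrm := Int.gcd_dvd_right n (Int.gcd r m)
  obtain ⟨n', rfl⟩ := hdvd n (Int.gcd_dvd_left n _)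
  obtain ⟨r', rfl⟩ := hdvd r (hgrm.trans (Int.gcd_dvd_left _ _))
  obtain ⟨m', rfl⟩ := hdvd m (hgrm.trans (Int.gcd_dvd_right _ _))
  refine ⟨a, n', r', m', rfl, rfl, rfl, fun ⟨hn', hr', hm'⟩ => hg' ?_⟩
  have hpg : (p : ℤ) ^ a * p ∣ g := Int.dvd_coe_gcd (mul_dvd_mul_left _ hn')
    (Int.dvd_coe_gcd (mul_dvd_mul_left _ hr') (mul_dvd_mul_left _ hm'))
  have hppos : 0 < p ^ a := Nat.pos_of_ne_zero fun h => hg (by rw [hga, h, zero_mul])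
  rw [hga] at hpg
  exact Nat.dvd_of_mul_dvd_mul_left hppos (by exact_mod_cast hpg)

lemma eq_zero_of_forall_sum_pow_mul_pow_eq_zero {R : Type*} [CommRing R] [IsDomain R] [CharZero R]
    {p n r m : ℤ} (hp : p ≠ 0) (hprim : ¬ (p ∣ n ∧ p ∣ r ∧ p ∣ m)) {j : ℕ} {w : Fin (j + 1) → R}
    (h : ∀ c d : ℤ, IsCoprime c d → ¬ p ∣ n * c ^ 2 + r * c * d + m * d ^ 2 →
      ∑ l : Fin (j + 1), (c : R) ^ (j - (l : ℕ)) * (d : R) ^ (l : ℕ) * w l = 0) : w = 0 := by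
  have hinj (e : ℤ) : Function.Injective fun k : Fin (j + 1) => ((p * (k : ℕ) + e : ℤ) : R) :=
    fun k k' hk => Fin.ext (by simpa [hp] using hk)
  by_cases hn : p ∣ n
  · obtain ⟨e, he⟩ : ∃ e : ℤ, ¬ p ∣ n * e ^ 2 + r * e + m := by
      by_cases hm : p ∣ m
      · refine ⟨1, fun hd => hprim ⟨hn, ?_, hm⟩⟩
        rw [dvd_add_left hm] at hd
        simpa using (dvd_add_right (hn.mul_right _)).mp hd
      · exact ⟨0, by simpa using hm⟩
    have hrev := Matrix.eq_zero_of_forall_index_sum_pow_mul_eq_zero (v := w ∘ Fin.rev) (hinj e)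
      fun k => by
        rw [← h (p * (k : ℕ) + e) 1 isCoprime_one_right (by
          simpa using (dvd_quadratic_mul_add_iff p n r m (k : ℕ) e).not.mpr he),
          ← Equiv.sum_comp Fin.revPerm]
        refine Finset.sum_congr rfl fun l _ => ?_
        simp [Fin.val_rev]
    funext l
    simpa using congrFun hrev l.rev
  · refine Matrix.eq_zero_of_forall_index_sum_pow_mul_eq_zero (hinj 0) fun k => ?_
    rw [← h 1 (p * (k : ℕ) + 0) isCoprime_one_left fun hd => hn ?_]
    · simp
    · have hswap := (dvd_quadratic_mul_add_iff p m r n (k : ℕ) 0).mp (by convert hd using 1; ring)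
      simpa using hswap

lemma symAct_apply_last (j : ℕ) (M : Matrix (Fin 2) (Fin 2) ℂ) (w : Fin (j + 1) → ℂ) :
    symAct j M w (Fin.last j) =
      ∑ l : Fin (j + 1), M 1 0 ^ (j - (l : ℕ)) * M 1 1 ^ (l : ℕ) * w l := by
  refine Finset.sum_congr rfl fun l _ => ?_
  have hdeg (a b : ℂ) : (Polynomial.C a + Polynomial.C b * Polynomial.X).natDegree ≤ 1 := by
    rw [add_comm]
    exact Polynomial.natDegree_linear_le
  have hlast : ((Fin.last j : Fin (j + 1)) : ℕ) = (j - (l : ℕ)) * 1 + (l : ℕ) * 1 := by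
    simp only [Fin.val_last]
    omega
  rw [symCoeff, hlast, Polynomial.coeff_mul_add_eq_of_natDegree_le
      (Polynomial.natDegree_pow_le_of_le _ (hdeg _ _))
      (Polynomial.natDegree_pow_le_of_le _ (hdeg _ _)),
    Polynomial.coeff_pow_of_natDegree_le (hdeg _ _),
    Polynomial.coeff_pow_of_natDegree_le (hdeg _ _)]
  simp

end BinaryForms

section SiegelExpansions

/-- Equivariance `A (U T Uᵗ) = Sym^j(U) A(T)` for `U = (a b; c d)` in `SL₂(ℤ)`, where `A n r m` is
the value of `A` at the half-integral matrix `T` with diagonal `n, m` and off-diagonal entry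
`r / 2`. -/
def IsSL2Equivariant {j : ℕ} (A : ℤ → ℤ → ℤ → Fin (j + 1) → ℂ) : Prop :=
  ∀ a b c d : ℤ, a * d - b * c = 1 → ∀ n r m,
    A (n * a ^ 2 + r * a * b + m * b ^ 2) (2 * n * a * c + r * (a * d + b * c) + 2 * m * b * d)
      (n * c ^ 2 + r * c * d + m * d ^ 2) = symAct j !![(a : ℂ), b; c, d] (A n r m)

/-- The Fourier coefficients of a Siegel cusp form of weight `(j, 1)` on `Sp(4, ℤ)`. Only the last
coordinate has Jacobi forms as its Fourier–Jacobi coefficients. -/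
structure IsSiegelCuspExpansion {j : ℕ} (A : ℤ → ℤ → ℤ → Fin (j + 1) → ℂ) : Prop where
  isJacobiCuspForm (m : ℤ) : 0 < m → IsJacobiCuspForm m fun n r => A n r m (Fin.last j)
  isSL2Equivariant : IsSL2Equivariant A
  support (n r m : ℤ) : A n r m ≠ 0 → 0 < n ∧ 0 < 4 * n * m - r ^ 2

namespace IsSiegelCuspExpansion

variable {j : ℕ} {A : ℤ → ℤ → ℤ → Fin (j + 1) → ℂ} {p : ℕ} [Fact p.Prime]

lemma sum_pow_mul_pow_eq_zero (h : IsSiegelCuspExpansion A) {a : ℕ} {n r m c d : ℤ} (hn : 0 < n)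
    (hD : 0 < 4 * n * m - r ^ 2) (hram : IsRamified p (4 * n * m - r ^ 2))
    (hsmall : ∀ n' r' m' : ℤ, IsRamified p (4 * n' * m' - r' ^ 2) →
      4 * n' * m' - r' ^ 2 < p ^ (2 * a) * (4 * n * m - r ^ 2) → A n' r' m' = 0)
    (hcd : IsCoprime c d) (hdvd : ¬ (p : ℤ) ∣ n * c ^ 2 + r * c * d + m * d ^ 2) :
    ∑ l : Fin (j + 1), (c : ℂ) ^ (j - (l : ℕ)) * (d : ℂ) ^ (l : ℕ) *
      A (p ^ a * n) (p ^ a * r) (p ^ a * m) l = 0 := by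
  obtain ⟨u, v, huv⟩ := hcd
  set m₁ := n * c ^ 2 + r * c * d + m * d ^ 2 with hm₁
  set n₁ := n * v ^ 2 + r * v * (-u) + m * (-u) ^ 2 with hn₁
  set r₁ := 2 * n * v * c + r * (v * d + -u * c) + 2 * m * (-u) * d with hr₁
  have hm₁_pos : 0 < m₁ := binaryForm_pos hn hD ⟨u, v, huv⟩
  have hD₁ : 4 * n₁ * m₁ - r₁ ^ 2 = 4 * n * m - r ^ 2 := by
    calc _ = (4 * n * m - r ^ 2) * (u * c + v * d) ^ 2 := by rw [hm₁, hn₁, hr₁]; ring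
      _ = _ := by rw [huv, one_pow, mul_one]
  have hpa : (0 : ℤ) < p ^ a := pow_pos (mod_cast NeZero.pos p) a
  have hlast : A (p ^ a * n₁) (p ^ a * r₁) (p ^ a * m₁) (Fin.last j) = 0 :=
    (h.isJacobiCuspForm _ (mul_pos hpa hm₁_pos)).apply_pow_mul_eq_zero hm₁_pos hdvd
      (fun n' r' hram' hlt => by rw [hsmall n' r' _ hram' (hD₁ ▸ hlt), Pi.zero_apply]) (hD₁ ▸ hram)
  have hequiv := congrFun (h.isSL2Equivariant v (-u) c d (by linear_combination huv)
    (p ^ a * n) (p ^ a * r) (p ^ a * m)) (Fin.last j)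
  rw [symAct_apply_last] at hequiv
  calc _ = A (p ^ a * n₁) (p ^ a * r₁) (p ^ a * m₁) (Fin.last j) := by
        rw [hm₁, hn₁, hr₁]
        refine hequiv.symm.trans ?_
        ring_nf
    _ = 0 := hlast

theorem eq_zero_of_isRamified (h : IsSiegelCuspExpansion A) {n r m : ℤ}
    (hram : IsRamified p (4 * n * m - r ^ 2)) : A n r m = 0 := by
  induction hN : (4 * n * m - r ^ 2).toNat using Nat.strong_induction_on generalizing n r m with
  | _ N ih =>
  by_contra hne
  obtain ⟨hn, hD⟩ := h.support n r m hne
  have hp : p.Prime := Fact.out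
  obtain ⟨a, n', r', m', rfl, rfl, rfl, hprim⟩ := exists_pow_mul_primitive hp.ne_one hn.ne' r m
  have hDeq : 4 * (p ^ a * n') * (p ^ a * m') - (p ^ a * r') ^ 2 =
    (p : ℤ) ^ (2 * a) * (4 * n' * m' - r' ^ 2) := by ring
  rw [hDeq] at hram hN hD
  refine hne (eq_zero_of_forall_sum_pow_mul_pow_eq_zero (mod_cast hp.ne_zero) hprim
    fun c d hcd hdvd => h.sum_pow_mul_pow_eq_zero (pos_of_mul_pos_right hn (by positivity))
      (pos_of_mul_pos_right hD (by positivity)) (.of_pow_mul a hram)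
      (fun n₁ r₁ m₁ hram₁ hlt => ih _ ?_ hram₁ rfl) hcd hdvd)
  rwa [← hN, Int.toNat_lt_toNat hD]

theorem eq_zero (h : IsSiegelCuspExpansion A) (n r m : ℤ) : A n r m = 0 := by
  by_contra hne
  obtain ⟨p, hp, hram⟩ := exists_prime_isRamified (h.support n r m hne).2
  have := Fact.mk hp
  exact hne (h.eq_zero_of_isRamified hram)

end IsSiegelCuspExpansion

end SiegelExpansions

section TorusFourierSeries

open MeasureTheory UnitAddTorus

local instance : MeasureSpace UnitAddCircle := ⟨AddCircle.haarAddCircle⟩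

local instance : Measure.IsAddHaarMeasure (volume : Measure UnitAddCircle) :=
  inferInstanceAs (Measure.IsAddHaarMeasure AddCircle.haarAddCircle)

local instance : IsProbabilityMeasure (volume : Measure UnitAddCircle) :=
  inferInstanceAs (IsProbabilityMeasure AddCircle.haarAddCircle)

variable {ι : Type*}

/-- The projection `ℝⁿ → (ℝ/ℤ)ⁿ`. -/
def toUnitAddTorus (x : ι → ℝ) : UnitAddTorus ι := fun i => (x i : UnitAddCircle)

lemma toUnitAddTorus_add (x y : ι → ℝ) :
    toUnitAddTorus (x + y) = toUnitAddTorus x + toUnitAddTorus y := rfl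

lemma isOpenQuotientMap_toUnitAddTorus :
    IsOpenQuotientMap (toUnitAddTorus : (ι → ℝ) → UnitAddTorus ι) :=
  IsOpenQuotientMap.piMap fun _ => QuotientAddGroup.isOpenQuotientMap_mk

lemma surjective_toUnitAddTorus :
    Function.Surjective (toUnitAddTorus : (ι → ℝ) → UnitAddTorus ι) :=
  isOpenQuotientMap_toUnitAddTorus.surjective

lemma exists_eq_add_intCast_of_toUnitAddTorus_eq {x y : ι → ℝ}
    (h : toUnitAddTorus x = toUnitAddTorus y) : ∃ k : ι → ℤ, x = y + fun i => (k i : ℝ) := by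
  have hk (i : ι) : ∃ k : ℤ, (k : ℝ) = x i - y i := by
    have h0 : ((x i - y i : ℝ) : UnitAddCircle) = 0 := by
      rw [AddCircle.coe_sub, sub_eq_zero]
      exact congrFun h i
    simpa using (AddCircle.coe_eq_zero_iff (1 : ℝ)).mp h0
  choose k hk using hk
  exact ⟨k, funext fun i => by simp [hk i]⟩

/-- Invariance of a function on `ℂⁿ` under translation by `ℤⁿ`. -/
def IsIntPeriodic (g : (ι → ℂ) → ℂ) : Prop :=
  ∀ (w : ι → ℂ) (k : ι → ℤ), g (w + fun i => (k i : ℂ)) = g w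

/-- The function on the torus `(ℝ/ℤ)ⁿ` induced by `x ↦ g (w + x)`, for `g` invariant under `ℤⁿ`. -/
def torusSlice (g : (ι → ℂ) → ℂ) (w : ι → ℂ) (θ : UnitAddTorus ι) : ℂ :=
  g (w + ofReal ∘ Function.surjInv surjective_toUnitAddTorus θ)

namespace IsIntPeriodic

variable {g : (ι → ℂ) → ℂ}

lemma torusSlice_toUnitAddTorus (hg : IsIntPeriodic g) (w : ι → ℂ) (x : ι → ℝ) :
    torusSlice g w (toUnitAddTorus x) = g (w + ofReal ∘ x) := by
  obtain ⟨k, hk⟩ := exists_eq_add_intCast_of_toUnitAddTorus_eq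
    (Function.surjInv_eq surjective_toUnitAddTorus (toUnitAddTorus x))
  rw [torusSlice, hk, ← hg (w + ofReal ∘ x) k]
  congr 1
  funext i
  simp [add_assoc]

lemma torusSlice_add_ofReal (hg : IsIntPeriodic g) (w : ι → ℂ) (x : ι → ℝ) (θ : UnitAddTorus ι) :
    torusSlice g (w + ofReal ∘ x) θ = torusSlice g w (θ + toUnitAddTorus x) := by
  obtain ⟨y, rfl⟩ := surjective_toUnitAddTorus θ
  rw [← toUnitAddTorus_add, hg.torusSlice_toUnitAddTorus, hg.torusSlice_toUnitAddTorus]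
  congr 1
  funext i
  simp only [Pi.add_apply, Function.comp_apply, ofReal_add]
  ring

end IsIntPeriodic

/-- The tube domain `{w ∈ ℂⁿ | Im w ∈ C}`. -/
def tubeDomain (C : Set (ι → ℝ)) : Set (ι → ℂ) := {w | im ∘ w ∈ C}

lemma add_ofReal_mem_tubeDomain {C : Set (ι → ℝ)} {w : ι → ℂ} (hw : w ∈ tubeDomain C)
    (x : ι → ℝ) : w + ofReal ∘ x ∈ tubeDomain C := by
  have him : im ∘ (w + ofReal ∘ x) = im ∘ w := funext fun i => by simp
  rwa [tubeDomain, Set.mem_ofPred_eq, him]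

variable {C : Set (ι → ℝ)} {g : (ι → ℂ) → ℂ}

lemma mul_I_mem_tubeDomain {y : ι → ℝ} : (fun i => (y i * I : ℂ)) ∈ tubeDomain C ↔ y ∈ C := by
  simp [tubeDomain, Function.comp_def]

lemma IsIntPeriodic.continuous_torusSlice (hg : IsIntPeriodic g)
    (hd : DifferentiableOn ℂ g (tubeDomain C)) {w : ι → ℂ} (hw : w ∈ tubeDomain C) :
    Continuous (torusSlice g w) := by
  rw [← isOpenQuotientMap_toUnitAddTorus.continuous_comp_iff]
  simp only [Function.comp_def, hg.torusSlice_toUnitAddTorus]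
  refine hd.continuousOn.comp_continuous ?_ (add_ofReal_mem_tubeDomain hw)
  exact continuous_const.add (continuous_pi fun i => continuous_ofReal.comp (continuous_apply i))

lemma update_mem_tubeDomain [DecidableEq ι] {x y : ι → ℝ} {k : ι} {s : ℂ} :
    Function.update ((fun i => (y i * I : ℂ)) + ofReal ∘ x) k s ∈ tubeDomain C ↔
      Function.update y k s.im ∈ C := by
  rw [tubeDomain, Set.mem_ofPred_eq]
  convert! Iff.rfl
  funext i
  by_cases hi : i = k
  · subst hi
    simp
  · simp [hi]

lemma IsIntPeriodic.torusSlice_update_mul_I [DecidableEq ι] (hg : IsIntPeriodic g) (x y : ι → ℝ)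
    (k : ι) (r s : ℝ) :
    torusSlice g ((fun i => Function.update y k r i * I) + ofReal ∘ Pi.single k s)
        (toUnitAddTorus x) =
      g (Function.update ((fun i => (y i * I : ℂ)) + ofReal ∘ x) k (x k + (s + r * I))) := by
  rw [hg.torusSlice_toUnitAddTorus]
  congr 1
  funext i
  by_cases hi : i = k
  · subst hi
    simp
    ring
  · simp [hi]

variable [Fintype ι]

/-- The mean value of `g` over the real translates `w + x`, `x ∈ (ℝ/ℤ)ⁿ`, of a point. -/
def torusMean (g : (ι → ℂ) → ℂ) (w : ι → ℂ) : ℂ := ∫ θ, torusSlice g w θ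

lemma IsIntPeriodic.torusMean_add_ofReal (hg : IsIntPeriodic g) (w : ι → ℂ) (x : ι → ℝ) :
    torusMean g (w + ofReal ∘ x) = torusMean g w := by
  simp only [torusMean, hg.torusSlice_add_ofReal]
  exact integral_add_right_eq_self (torusSlice g w) _

/-- Averaging once more over the `k`-th coordinate isolates the variable in which a contour can be
moved. -/
lemma IsIntPeriodic.torusMean_eq_integral_integral [DecidableEq ι] (hg : IsIntPeriodic g)
    (hd : DifferentiableOn ℂ g (tubeDomain C)) {w : ι → ℂ} (hw : w ∈ tubeDomain C) (k : ι) :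
    torusMean g w =
      ∫ θ, ∫ s in (0 : ℝ)..1, torusSlice g (w + ofReal ∘ Pi.single k s) θ := by
  have hmean : torusMean g w =
      ∫ s in (0 : ℝ)..1, torusMean g (w + ofReal ∘ Pi.single k s) := by
    simp [hg.torusMean_add_ofReal]
  have hcont : Continuous fun p : ℝ × UnitAddTorus ι =>
      torusSlice g (w + ofReal ∘ Pi.single k p.1) p.2 := by
    simp only [hg.torusSlice_add_ofReal]
    refine (hg.continuous_torusSlice hd hw).comp (continuous_snd.add ?_)
    exact isOpenQuotientMap_toUnitAddTorus.continuous.comp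
      ((continuous_single k).comp continuous_fst)
  have h_integrable := (hcont.continuousOn.integrableOn_compact (μ := volume.prod volume)
    (isCompact_Icc.prod isCompact_univ)).mono_set
      (Set.prod_mono (Set.Ioc_subset_Icc_self (a := (0 : ℝ)) (b := 1)) subset_rfl)
  rw [IntegrableOn, ← Measure.prod_restrict, Measure.restrict_univ] at h_integrable
  rw [hmean]
  simp only [intervalIntegral.integral_of_le zero_le_one]
  exact integral_integral_swap h_integrable

lemma intervalIntegral_add_mul_I_eq {u : ℂ → ℂ} {a b : ℝ}
    (hd : DifferentiableOn ℂ u {s | s.im ∈ Set.uIcc a b}) (hp : ∀ s, u (s + 1) = u s) :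
    ∫ x in (0 : ℝ)..1, u (x + a * I) = ∫ x in (0 : ℝ)..1, u (x + b * I) := by
  have hsides (y : ℝ) : u (1 + y * I) = u (y * I) := by rw [add_comm, hp]
  have h := Complex.integral_boundary_rect_eq_zero_of_differentiableOn u (a * I) (1 + b * I)
    (hd.mono fun s hs => by simpa using hs.2)
  simp only [mul_re, mul_im, add_re, add_im, one_re, one_im, I_re, I_im, ofReal_re, ofReal_im,
    mul_zero, mul_one, sub_zero, add_zero, zero_add, ofReal_zero, ofReal_one, hsides,
    add_sub_cancel_right] at h
  exact sub_eq_zero.mp h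

lemma IsIntPeriodic.torusMean_update [DecidableEq ι] (hg : IsIntPeriodic g)
    (hd : DifferentiableOn ℂ g (tubeDomain C)) {y : ι → ℝ} {k : ι} {t : ℝ}
    (hy : ∀ s ∈ Set.uIcc (y k) t, Function.update y k s ∈ C) :
    torusMean g (fun i => Function.update y k t i * I) = torusMean g (fun i => y i * I) := by
  have hmem_y : y ∈ C := by simpa using hy _ Set.left_mem_uIcc
  rw [hg.torusMean_eq_integral_integral hd (mul_I_mem_tubeDomain.mpr (hy t Set.right_mem_uIcc)) k,
    hg.torusMean_eq_integral_integral hd (mul_I_mem_tubeDomain.mpr hmem_y) k]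
  congr 1 with θ
  obtain ⟨x, rfl⟩ := surjective_toUnitAddTorus θ
  have hslice_y := hg.torusSlice_update_mul_I x y k (y k)
  rw [Function.update_eq_self] at hslice_y
  simp only [hg.torusSlice_update_mul_I x y k t, hslice_y]
  set v : ι → ℂ := (fun i => y i * I) + ofReal ∘ x
  refine (intervalIntegral_add_mul_I_eq (u := fun s => g (Function.update v k (x k + s)))
    (hd.comp (Differentiable.differentiableOn fun s => ?_) fun s hs => ?_) fun s => ?_).symm
  · exact (hasDerivAt_update v k _).differentiableAt.comp s (differentiableAt_id.const_add _)
  · exact update_mem_tubeDomain.mpr (by simpa using hy s.im hs)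
  · refine Eq.trans ?_ (hg _ (Pi.single k 1))
    congr 1
    funext i
    by_cases hi : i = k
    · subst hi
      simp [add_assoc]
    · simp [hi]

lemma IsIntPeriodic.torusMean_mul_I_eq_of_mem_ball (hg : IsIntPeriodic g)
    (hd : DifferentiableOn ℂ g (tubeDomain C)) {y y' : ι → ℝ} {ε : ℝ}
    (hball : Metric.ball y ε ⊆ C) (hy' : y' ∈ Metric.ball y ε) :
    torusMean g (fun i => y' i * I) = torusMean g (fun i => y i * I) := by
  classical
  have hε : 0 < ε := Metric.pos_of_mem_ball hy'
  have hdist := (dist_pi_lt_iff hε).mp (Metric.mem_ball.mp hy')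
  have key (S : Finset ι) :
      torusMean g (fun i => S.piecewise y' y i * I) = torusMean g (fun i => y i * I) := by
    induction S using Finset.induction_on with
    | empty => simp
    | insert k S hk ih =>
      rw [Finset.piecewise_insert, ← ih]
      refine hg.torusMean_update hd fun s hs => hball (Metric.mem_ball.mpr ?_)
      refine (dist_pi_lt_iff hε).mpr fun i => ?_
      by_cases hi : i = k
      · subst hi
        rw [Finset.piecewise_eq_of_notMem _ _ _ hk, Set.uIcc_comm] at hs
        rw [Function.update_self]
        exact (Real.dist_right_le_of_mem_uIcc hs).trans_lt (hdist i)
      · rw [Function.update_of_ne hi]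
        by_cases hiS : i ∈ S
        · simpa [hiS] using hdist i
        · simpa [hiS] using hε
  simpa using key Finset.univ

lemma IsIntPeriodic.torusMean_eq (hg : IsIntPeriodic g) (hd : DifferentiableOn ℂ g (tubeDomain C))
    (hC : IsOpen C) (hC' : IsPreconnected C) {w w' : ι → ℂ} (hw : w ∈ tubeDomain C)
    (hw' : w' ∈ tubeDomain C) : torusMean g w = torusMean g w' := by
  have himag (w : ι → ℂ) : torusMean g w = torusMean g fun i => (w i).im * I := by
    rw [← hg.torusMean_add_ofReal (fun i => (w i).im * I) (re ∘ w)]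
    congr 1
    funext i
    simp [add_comm, re_add_im]
  rw [himag w, himag w']
  refine hC'.induction₂ (fun y y' => torusMean g (fun i => y i * I) = torusMean g fun i => y' i * I)
    (fun y hy => ?_) (fun _ _ _ _ _ _ h h' => h.trans h') (fun _ _ _ _ h => h.symm) hw hw'
  obtain ⟨ε, hε, hball⟩ := Metric.isOpen_iff.mp hC y hy
  filter_upwards [mem_nhdsWithin_of_mem_nhds (Metric.ball_mem_nhds y hε)] with y' hy'
  exact (hg.torusMean_mul_I_eq_of_mem_ball hd hball hy').symm

/-- The exponential `w ↦ e(T · w)` on `ℂⁿ` with frequency `T ∈ ℤⁿ`. -/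
def planeWave (T : ι → ℤ) (w : ι → ℂ) : ℂ := expTwoPiI (∑ i, T i * w i)

lemma planeWave_add (T : ι → ℤ) (w w' : ι → ℂ) :
    planeWave T (w + w') = planeWave T w * planeWave T w' := by
  simp [planeWave, mul_add, Finset.sum_add_distrib, expTwoPiI_add]

lemma planeWave_neg_mul_planeWave (T : ι → ℤ) (w : ι → ℂ) :
    planeWave (-T) w * planeWave T w = 1 := by
  simp [planeWave, ← expTwoPiI_add, expTwoPiI_zero]

lemma norm_planeWave (T : ι → ℤ) (w : ι → ℂ) :
    ‖planeWave T w‖ = Real.exp (-(2 * Real.pi * ∑ i, T i * (w i).im)) := by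
  simp [planeWave, norm_expTwoPiI]

lemma isIntPeriodic_planeWave (T : ι → ℤ) : IsIntPeriodic (planeWave T) := fun w k => by
  have hk : planeWave T (fun i => (k i : ℂ)) = 1 := by
    rw [planeWave, ← expTwoPiI_intCast (∑ i, T i * k i)]
    push_cast
    rfl
  rw [planeWave_add, hk, mul_one]

lemma differentiable_planeWave (T : ι → ℤ) : Differentiable ℂ (planeWave T) := by
  unfold planeWave expTwoPiI
  fun_prop

lemma mFourier_toUnitAddTorus (T : ι → ℤ) (x : ι → ℝ) :
    mFourier T (toUnitAddTorus x) = planeWave T (ofReal ∘ x) := by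
  simp only [mFourier, ContinuousMap.coe_mk, toUnitAddTorus, fourier_coe_apply, planeWave,
    expTwoPiI, ← Complex.exp_sum, Finset.mul_sum]
  simp [mul_assoc]

/-- The coefficient is the mean of the `ℤⁿ`-periodic holomorphic function `g · e(-T · w)`, which
does not depend on the base point. -/
lemma IsIntPeriodic.exists_mFourierCoeff_torusSlice_eq (hg : IsIntPeriodic g)
    (hd : DifferentiableOn ℂ g (tubeDomain C)) (hC : IsOpen C) (hC' : IsPreconnected C) :
    ∃ A : (ι → ℤ) → ℂ, ∀ T, ∀ w ∈ tubeDomain C,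
      mFourierCoeff (torusSlice g w) T = A T * planeWave T w := by
  rcases (tubeDomain C).eq_empty_or_nonempty with hempty | ⟨w₀, hw₀⟩
  · exact ⟨0, by simp [hempty]⟩
  refine ⟨fun T => torusMean (g * planeWave (-T)) w₀, fun T w hw => ?_⟩
  have hgT : IsIntPeriodic (g * planeWave (-T)) := fun w k => by
    rw [Pi.mul_apply, Pi.mul_apply, hg, isIntPeriodic_planeWave]
  have hdT : DifferentiableOn ℂ (g * planeWave (-T)) (tubeDomain C) :=
    hd.mul (differentiable_planeWave _).differentiableOn
  beta_reduce
  rw [hgT.torusMean_eq hdT hC hC' hw₀ hw, torusMean, ← integral_mul_const, mFourierCoeff]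
  congr 1 with θ
  obtain ⟨x, rfl⟩ := surjective_toUnitAddTorus θ
  rw [hgT.torusSlice_toUnitAddTorus, hg.torusSlice_toUnitAddTorus, mFourier_toUnitAddTorus,
    smul_eq_mul, Pi.mul_apply, planeWave_add]
  linear_combination (-(g (w + ofReal ∘ x) * planeWave (-T) (ofReal ∘ x))) *
    planeWave_neg_mul_planeWave T w

lemma norm_mFourierCoeff_le (f : C(UnitAddTorus ι, ℂ)) (T : ι → ℤ) :
    ‖mFourierCoeff f T‖ ≤ ‖f‖ := by
  have h := norm_integral_le_of_norm_le_const (μ := (volume : Measure (UnitAddTorus ι)))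
    (f := fun θ => mFourier (-T) θ • f θ) (C := ‖f‖) (Eventually.of_forall fun θ => ?_)
  · simpa [mFourierCoeff] using h
  · calc ‖mFourier (-T) θ • f θ‖ ≤ ‖(mFourier (-T) : C(UnitAddTorus ι, ℂ))‖ * ‖f‖ := by
          rw [norm_smul]
          gcongr
          exacts [ContinuousMap.norm_coe_le_norm _ _, ContinuousMap.norm_coe_le_norm _ _]
      _ = ‖f‖ := by rw [mFourier_norm, one_mul]

lemma summable_prod_comp {κ : Type*} {f : κ → ℝ} (hf : Summable f) (h0 : 0 ≤ f) :
    Summable fun T : ι → κ => ∏ i, f (T i) := by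
  classical
  refine summable_of_sum_le (c := ∏ _i : ι, ∑' n, f n)
    (fun T => Finset.prod_nonneg fun i _ => h0 _) fun u => ?_
  calc ∑ T ∈ u, ∏ i, f (T i)
      ≤ ∑ T ∈ Fintype.piFinset fun i => u.image fun T => T i, ∏ i, f (T i) :=
        Finset.sum_le_sum_of_subset_of_nonneg
          (fun T hT => Fintype.mem_piFinset.mpr fun i => Finset.mem_image_of_mem _ hT)
          fun T _ _ => Finset.prod_nonneg fun i _ => h0 _
    _ = ∏ i, ∑ n ∈ u.image fun T => T i, f n := (Finset.prod_univ_sum _ _).symm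
    _ ≤ ∏ _i : ι, ∑' n, f n := Finset.prod_le_prod
        (fun i _ => Finset.sum_nonneg fun n _ => h0 n) fun i _ => hf.sum_le_tsum _ fun n _ => h0 n

lemma summable_exp_neg_mul_sum_abs {c : ℝ} (hc : 0 < c) :
    Summable fun T : ι → ℤ => Real.exp (-(c * ∑ i, |(T i : ℝ)|)) := by
  have hs : Summable fun n : ℤ => Real.exp (-(c * |(n : ℝ)|)) := by
    have h := Real.summable_exp_nat_mul_iff.mpr (neg_lt_zero.mpr hc)
    rw [summable_int_iff_summable_nat_and_neg]
    constructor <;> refine h.congr fun n => ?_ <;> simp [mul_comm]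
  refine (summable_prod_comp hs fun n => Real.exp_nonneg _).congr fun T => ?_
  rw [← Real.exp_sum, Finset.sum_neg_distrib, Finset.mul_sum]

/-- Moving the imaginary part of `w` by `-δ sign T` gains the factor `exp (-2πδ ∑ |Tᵢ|)`. -/
lemma summable_mul_planeWave {A : (ι → ℤ) → ℂ} (hC : IsOpen C)
    (hA : ∀ w ∈ tubeDomain C, ∃ M, ∀ T, ‖A T * planeWave T w‖ ≤ M) {w : ι → ℂ}
    (hw : w ∈ tubeDomain C) : Summable fun T => A T * planeWave T w := by
  classical
  obtain ⟨ε, hε, hball⟩ := Metric.isOpen_iff.mp hC _ hw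
  set δ := ε / 2
  have hδ : 0 < δ := half_pos hε
  let shifted (s : ι → SignType) : ι → ℂ := w - fun i => ((δ * s i : ℝ) : ℂ) * I
  have him (s : ι → SignType) (i : ι) : (shifted s i).im = (w i).im - δ * s i := by simp [shifted]
  have hshifted (s : ι → SignType) : shifted s ∈ tubeDomain C := by
    refine hball (Metric.mem_ball.mpr (lt_of_le_of_lt ?_ (half_lt_self hε)))
    refine (dist_pi_le_iff hδ.le).mpr fun i => ?_
    rw [Function.comp_apply, Function.comp_apply, him, Real.dist_eq]
    cases s i <;> simp [abs_of_pos hδ, hδ.le]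
  choose M hM using fun s => hA (shifted s) (hshifted s)
  have hM0 (s : ι → SignType) : 0 ≤ M s := (norm_nonneg _).trans (hM s 0)
  have hgain (T : ι → ℤ) : ‖planeWave T w‖ =
      ‖planeWave T (shifted fun i => SignType.sign (T i : ℝ))‖ *
        Real.exp (-(2 * Real.pi * δ * ∑ i, |(T i : ℝ)|)) := by
    rw [norm_planeWave, norm_planeWave, ← Real.exp_add]
    simp only [him, mul_sub, Finset.sum_sub_distrib, mul_left_comm _ δ, self_mul_sign,
      ← Finset.mul_sum]
    ring_nf
  refine Summable.of_norm_bounded ((summable_exp_neg_mul_sum_abs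
    (by positivity : 0 < 2 * Real.pi * δ)).mul_left (∑ s, M s)) fun T => ?_
  rw [norm_mul, hgain, ← mul_assoc, ← norm_mul]
  gcongr
  exact (hM _ T).trans (Finset.single_le_sum (fun s _ => hM0 s) (Finset.mem_univ _))

theorem IsIntPeriodic.exists_hasSum_planeWave (hg : IsIntPeriodic g)
    (hd : DifferentiableOn ℂ g (tubeDomain C)) (hC : IsOpen C) (hC' : IsPreconnected C) :
    ∃ A : (ι → ℤ) → ℂ, ∀ w ∈ tubeDomain C, HasSum (fun T => A T * planeWave T w) (g w) := by
  obtain ⟨A, hA⟩ := hg.exists_mFourierCoeff_torusSlice_eq hd hC hC'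
  refine ⟨A, fun w hw => ?_⟩
  let slice {w : ι → ℂ} (hw : w ∈ tubeDomain C) : C(UnitAddTorus ι, ℂ) :=
    ⟨torusSlice g w, hg.continuous_torusSlice hd hw⟩
  have hcoeff {w : ι → ℂ} (hw : w ∈ tubeDomain C) :
      mFourierCoeff (slice hw) = fun T => A T * planeWave T w := funext fun T => hA T w hw
  have hsum : Summable (mFourierCoeff (slice hw)) := by
    rw [hcoeff hw]
    refine summable_mul_planeWave hC (fun w hw => ⟨‖slice hw‖, fun T => ?_⟩) hw
    rw [← hA T w hw]
    exact norm_mFourierCoeff_le (slice hw) T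
  have h := hasSum_mFourier_series_apply_of_summable hsum (toUnitAddTorus 0)
  have hval : slice hw (toUnitAddTorus 0) = g w :=
    (hg.torusSlice_toUnitAddTorus w 0).trans (by congr 1; funext i; simp)
  rw [hcoeff hw, hval] at h
  refine h.congr_fun fun T => ?_
  simp [mFourier_toUnitAddTorus, planeWave, expTwoPiI_zero]

end TorusFourierSeries

section Uniqueness

lemma eq_zero_of_hasSum_expTwoPiI {c : ℤ → ℂ}
    (h : ∀ x : ℝ, HasSum (fun n => c n * expTwoPiI (n * x)) 0) : c = 0 := by
  have hfourier (n : ℤ) (x : ℝ) : fourier n (x : UnitAddCircle) = expTwoPiI (n * x) := by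
    rw [fourier_coe_apply, expTwoPiI]
    simp [mul_assoc]
  have hsum : Summable fun n => c n • (fourier n : C(UnitAddCircle, ℂ)) := by
    refine .of_norm ?_
    simpa [norm_smul, expTwoPiI_zero, fourier_norm] using (h 0).summable.norm
  have hzero : HasSum (fun n => c n • (fourier n : C(UnitAddCircle, ℂ))) 0 := by
    convert hsum.hasSum
    ext θ
    obtain ⟨x, rfl⟩ := QuotientAddGroup.mk_surjective θ
    refine (h x).unique ?_
    exact (ContinuousMap.hasSum_apply hsum.hasSum _).congr_fun fun n => by simp [← hfourier]
  funext k
  have hk := (hzero.mapL (ContinuousMap.toLp (E := ℂ) 2 AddCircle.haarAddCircle ℂ)).mapL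
    (innerSL ℂ (fourierLp 2 k))
  simp only [map_smul, map_zero] at hk
  refine (hasSum_ite_eq k (c k)).unique (hk.congr_fun fun n => ?_)
  rcases eq_or_ne n k with rfl | hn
  · simp [orthonormal_fourier.norm_eq_one n]
  · simp [orthonormal_iff_ite.mp orthonormal_fourier, hn, hn.symm]

lemma hasSum_zero_of_hasSum_mul_expTwoPiI {β : Type*} {d : ℤ → β → ℂ}
    (h : ∀ x : ℝ, HasSum (fun p : ℤ × β => d p.1 p.2 * expTwoPiI (p.1 * x)) 0) (m : ℤ) :
    HasSum (d m) 0 := by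
  have hsum (m : ℤ) : Summable (d m) := by
    have hprod : Summable fun p : ℤ × β => d p.1 p.2 := by
      simpa [expTwoPiI_zero] using (h 0).summable
    exact hprod.prod_factor m
  have hzero : (fun m => ∑' q, d m q) = 0 := eq_zero_of_hasSum_expTwoPiI fun x =>
    (h x).prod_fiberwise fun m => (hsum m).hasSum.mul_right _
  rw [← show ∑' q, d m q = 0 from congrFun hzero m]
  exact (hsum m).hasSum

end Uniqueness

section SiegelUpperHalfSpace

/-- The symmetric matrix with diagonal `τ, τ'` and off-diagonal entry `z`. -/
def siegelPoint (τ z τ' : ℂ) : Fin 2 → Fin 2 → ℂ := ![![τ, z], ![z, τ']]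

lemma posDef_fin_two_iff {a b d : ℝ} :
    (!![a, b; b, d]).PosDef ↔ 0 < a ∧ b ^ 2 < a * d := by
  refine ⟨fun h => ⟨by simpa using h.diag_pos (i := 0), ?_⟩, fun ⟨ha, hb⟩ =>
    .of_dotProduct_mulVec_pos (IsHermitian.ext fun i j => by fin_cases i <;> fin_cases j <;> rfl)
      fun x hx => ?_⟩
  · have hdet := h.det_pos
    rw [det_fin_two_of] at hdet
    linarith
  · have hsq : a * (star x ⬝ᵥ !![a, b; b, d] *ᵥ x) =
        (a * x 0 + b * x 1) ^ 2 + (a * d - b ^ 2) * x 1 ^ 2 := by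
      simp [dotProduct, mulVec, Fin.sum_univ_two]
      ring
    refine pos_of_mul_pos_right (hsq ▸ ?_) ha.le
    by_cases hx₁ : x 1 = 0
    · have hx₀ : x 0 ≠ 0 := fun hx₀ => hx (by ext i; fin_cases i <;> simp [hx₀, hx₁])
      simpa [hx₁] using by positivity
    · have := sub_pos.mpr hb
      positivity

lemma siegelPoint_mem_H2_iff {τ z τ' : ℂ} :
    siegelPoint τ z τ' ∈ H2 ↔ 0 < τ.im ∧ z.im ^ 2 < τ.im * τ'.im := by
  have hsymm : (Matrix.of (siegelPoint τ z τ')).IsSymm :=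
    IsSymm.ext fun i j => by fin_cases i <;> fin_cases j <;> rfl
  have him : (Matrix.of fun i j => (siegelPoint τ z τ' i j).im) =
      !![τ.im, z.im; z.im, τ'.im] := by
    ext i j
    fin_cases i <;> fin_cases j <;> rfl
  rw [← posDef_fin_two_iff, ← him]
  exact and_iff_right hsymm

lemma eq_siegelPoint_of_mem_H2 {M : Fin 2 → Fin 2 → ℂ} (hM : M ∈ H2) :
    M = siegelPoint (M 0 0) (M 0 1) (M 1 1) := by
  have hsymm : M 1 0 = M 0 1 := hM.1.apply 0 1
  funext i j
  fin_cases i <;> fin_cases j <;> simp [siegelPoint, hsymm]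

lemma eventually_siegelPoint_mem_H2 {τ : ℂ} (hτ : 0 < τ.im) (z w : ℂ) :
    ∀ᶠ y : ℝ in atTop, ∀ x : ℝ, siegelPoint τ z (x + y * I + w) ∈ H2 := by
  filter_upwards [eventually_gt_atTop (z.im ^ 2 / τ.im - w.im)] with y hy x
  rw [sub_lt_iff_lt_add, div_lt_iff₀' hτ] at hy
  exact siegelPoint_mem_H2_iff.mpr ⟨hτ, by simpa using hy⟩

/-- The cone of `y ∈ ℝ³` for which the matrix with diagonal `y 0, y 2` and off-diagonal entry `y 1`
is positive definite. -/
def posDefCone : Set (Fin 3 → ℝ) := {y | (!![y 0, y 1; y 1, y 2]).PosDef}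

lemma convex_posDefCone : Convex ℝ posDefCone := by
  refine convex_iff_forall_pos.mpr fun y hy y' hy' s t hs ht _ => ?_
  change PosDef _
  convert (PosDef.smul hy hs).add (PosDef.smul hy' ht) using 1
  ext i j
  fin_cases i <;> fin_cases j <;> simp

lemma isOpen_posDefCone : IsOpen posDefCone := by
  simp only [posDefCone, posDef_fin_two_iff]
  exact (isOpen_lt continuous_const (continuous_apply 0)).inter
    (isOpen_lt ((continuous_apply 1).pow 2) ((continuous_apply 0).mul (continuous_apply 2)))

lemma mem_tubeDomain_posDefCone_iff {w : Fin 3 → ℂ} :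
    w ∈ tubeDomain posDefCone ↔ siegelPoint (w 0) (w 1) (w 2) ∈ H2 :=
  posDef_fin_two_iff.trans siegelPoint_mem_H2_iff.symm

lemma siegelPoint_unimodular_mem_H2 {a b c d : ℤ} (h : a * d - b * c = 1) {τ z τ' : ℂ}
    (hM : siegelPoint τ z τ' ∈ H2) :
    siegelPoint (d ^ 2 * τ - 2 * c * d * z + c ^ 2 * τ')
      (-(b * d) * τ + (a * d + b * c) * z - a * c * τ')
      (b ^ 2 * τ - 2 * a * b * z + a ^ 2 * τ') ∈ H2 := by
  obtain ⟨hτ, hdet⟩ := siegelPoint_mem_H2_iff.mp hM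
  have hR : (a * d - b * c : ℝ) = 1 := by exact_mod_cast h
  have h₁ : (d ^ 2 * τ - 2 * c * d * z + c ^ 2 * τ').im =
      τ.im * d ^ 2 + 2 * z.im * d * (-c) + τ'.im * (-c) ^ 2 := by
    simp [pow_two]
    ring
  have h₂ : (-(b * d) * τ + (a * d + b * c) * z - a * c * τ').im =
      -(b * d) * τ.im + (a * d + b * c) * z.im - a * c * τ'.im := by simp
  have h₃ : (b ^ 2 * τ - 2 * a * b * z + a ^ 2 * τ').im =
      b ^ 2 * τ.im - 2 * a * b * z.im + a ^ 2 * τ'.im := by simp [pow_two]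
  rw [siegelPoint_mem_H2_iff, h₁, h₂, h₃]
  refine ⟨binaryForm_pos hτ (by linarith) ⟨a, b, by linear_combination hR⟩, ?_⟩
  rw [← sub_pos] at hdet ⊢
  refine hdet.trans_eq ?_
  linear_combination -((τ.im * τ'.im - z.im ^ 2) * (a * d - b * c + 1)) * hR

end SiegelUpperHalfSpace

section SymplecticMatrices

/-- The translation `M ↦ M + (a b; b c)`. -/
def translationMatrix (a b c : ℤ) : Matrix (Fin 4) (Fin 4) ℤ :=
  !![1, 0, a, b; 0, 1, b, c; 0, 0, 1, 0; 0, 0, 0, 1]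

lemma translationMatrix_mem_Sp4Z (a b c : ℤ) : translationMatrix a b c ∈ Sp4Z := by
  change _ = _
  ext i j
  fin_cases i <;> fin_cases j <;> simp [translationMatrix, J4, Matrix.mul_apply, Fin.sum_univ_four]

lemma den_translationMatrix (a b c : ℤ) (M : Fin 2 → Fin 2 → ℂ) :
    den (translationMatrix a b c) M = 1 := by
  ext i j
  fin_cases i <;> fin_cases j <;>
    simp [den, blk, translationMatrix, Matrix.mul_apply, Fin.sum_univ_two]

lemma moeb_translationMatrix (a b c : ℤ) (τ z τ' : ℂ) :
    moeb (translationMatrix a b c) (siegelPoint τ z τ') = siegelPoint (τ + a) (z + b) (τ' + c) := by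
  funext i j
  simp only [moeb, den_translationMatrix, inv_one, mul_one]
  fin_cases i <;> fin_cases j <;>
    simp [blk, translationMatrix, siegelPoint, Matrix.mul_apply, Fin.sum_univ_two]

/-- The block diagonal matrix with blocks `U⁻ᵗ` and `U`, for `U = (a b; c d)` of determinant `1`. -/
def unimodularMatrix (a b c d : ℤ) : Matrix (Fin 4) (Fin 4) ℤ :=
  !![d, -c, 0, 0; -b, a, 0, 0; 0, 0, a, b; 0, 0, c, d]

lemma unimodularMatrix_mem_Sp4Z {a b c d : ℤ} (h : a * d - b * c = 1) :
    unimodularMatrix a b c d ∈ Sp4Z := by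
  change _ = _
  ext i j
  fin_cases i <;> fin_cases j <;>
    simp [unimodularMatrix, J4, Matrix.mul_apply, Fin.sum_univ_four] <;> linarith

lemma den_unimodularMatrix (a b c d : ℤ) (M : Fin 2 → Fin 2 → ℂ) :
    den (unimodularMatrix a b c d) M = !![(a : ℂ), b; c, d] := by
  ext i j
  fin_cases i <;> fin_cases j <;>
    simp [den, blk, unimodularMatrix, Matrix.mul_apply, Fin.sum_univ_two]

lemma moeb_unimodularMatrix {a b c d : ℤ} (h : a * d - b * c = 1) (τ z τ' : ℂ) :
    moeb (unimodularMatrix a b c d) (siegelPoint τ z τ') =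
      siegelPoint (d ^ 2 * τ - 2 * c * d * z + c ^ 2 * τ')
        (-(b * d) * τ + (a * d + b * c) * z - a * c * τ')
        (b ^ 2 * τ - 2 * a * b * z + a ^ 2 * τ') := by
  have hinv : (!![(a : ℂ), b; c, d])⁻¹ = !![(d : ℂ), -b; -c, a] := by
    rw [Matrix.inv_def, det_fin_two_of, adjugate_fin_two_of, show (a * d - b * c : ℂ) = 1 by
      exact_mod_cast h]
    simp
  funext i j
  simp only [moeb, den_unimodularMatrix, hinv]
  fin_cases i <;> fin_cases j <;>
    simp [blk, unimodularMatrix, siegelPoint, Matrix.mul_apply, Fin.sum_univ_two] <;> ring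

/-- The inversion in the first diagonal entry. -/
def inversionMatrix : Matrix (Fin 4) (Fin 4) ℤ :=
  !![0, 0, -1, 0; 0, 1, 0, 0; 1, 0, 0, 0; 0, 0, 0, 1]

lemma inversionMatrix_mem_Sp4Z : inversionMatrix ∈ Sp4Z := by
  change _ = _
  decide

lemma den_inversionMatrix (τ z τ' : ℂ) :
    den inversionMatrix (siegelPoint τ z τ') = !![τ, z; 0, 1] := by
  ext i j
  fin_cases i <;> fin_cases j <;>
    simp [den, blk, inversionMatrix, siegelPoint, Matrix.mul_apply, Fin.sum_univ_two]

lemma moeb_inversionMatrix {τ : ℂ} (hτ : τ ≠ 0) (z τ' : ℂ) :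
    moeb inversionMatrix (siegelPoint τ z τ') =
      siegelPoint (-1 / τ) (z / τ) (τ' - z ^ 2 / τ) := by
  have hinv : (!![τ, z; 0, 1])⁻¹ = !![1 / τ, -z / τ; 0, 1] := by
    rw [Matrix.inv_def, det_fin_two_of, adjugate_fin_two_of]
    ext i j
    fin_cases i <;> fin_cases j <;> simp <;> field_simp
  funext i j
  simp only [moeb, den_inversionMatrix, hinv]
  fin_cases i <;> fin_cases j <;>
    simp [blk, inversionMatrix, siegelPoint, Matrix.mul_apply, Fin.sum_univ_two]
  all_goals field_simp
  ring

lemma symAct_one (j : ℕ) (v : Fin (j + 1) → ℂ) : symAct j 1 v = v := by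
  funext i
  simp [symAct, symCoeff, Polynomial.coeff_X_pow, Fin.val_inj]

lemma symAct_apply_last_of_unipotent (j : ℕ) {M : Matrix (Fin 2) (Fin 2) ℂ} (h₀ : M 1 0 = 0)
    (h₁ : M 1 1 = 1) (v : Fin (j + 1) → ℂ) : symAct j M v (Fin.last j) = v (Fin.last j) := by
  rw [symAct_apply_last, h₀, h₁, Finset.sum_eq_single (Fin.last j)]
  · simp
  · intro l _ hl
    simp [(Nat.sub_pos_of_lt (Fin.val_lt_last hl)).ne']
  · simp

end SymplecticMatrices

namespace IsSiegelCuspForm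

variable {j : ℕ} {k : ℤ} {F : (Fin 2 → Fin 2 → ℂ) → Fin (j + 1) → ℂ}

lemma apply_add_intCast (hF : IsSiegelCuspForm j k Sp4Z (fun _ => 1) F) (a b c : ℤ) (τ z τ' : ℂ) :
    F (siegelPoint (τ + a) (z + b) (τ' + c)) = F (siegelPoint τ z τ') := by
  by_cases h : siegelPoint τ z τ' ∈ H2
  · rw [← moeb_translationMatrix, hF.2.1 _ (translationMatrix_mem_Sp4Z a b c) _ h,
      den_translationMatrix, wt]
    simp [symAct_one]
  · have h' : siegelPoint (τ + a) (z + b) (τ' + c) ∉ H2 := by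
      simpa [siegelPoint_mem_H2_iff] using h
    rw [hF.2.2.2 _ h, hF.2.2.2 _ h']

lemma apply_unimodular (hF : IsSiegelCuspForm j k Sp4Z (fun _ => 1) F) {a b c d : ℤ}
    (h : a * d - b * c = 1) {τ z τ' : ℂ} (hM : siegelPoint τ z τ' ∈ H2) :
    F (siegelPoint (d ^ 2 * τ - 2 * c * d * z + c ^ 2 * τ')
      (-(b * d) * τ + (a * d + b * c) * z - a * c * τ')
      (b ^ 2 * τ - 2 * a * b * z + a ^ 2 * τ')) =
    symAct j !![(a : ℂ), b; c, d] (F (siegelPoint τ z τ')) := by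
  rw [← moeb_unimodularMatrix h, hF.2.1 _ (unimodularMatrix_mem_Sp4Z h) _ hM, den_unimodularMatrix,
    wt, det_fin_two_of, show (a * d - b * c : ℂ) = 1 by exact_mod_cast h]
  simp

lemma apply_last_inversion (hF : IsSiegelCuspForm j k Sp4Z (fun _ => 1) F) {τ z τ' : ℂ}
    (hM : siegelPoint τ z τ' ∈ H2) :
    F (siegelPoint (-1 / τ) (z / τ) (τ' - z ^ 2 / τ)) (Fin.last j) =
      τ ^ k * F (siegelPoint τ z τ') (Fin.last j) := by
  have hτ : τ ≠ 0 := by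
    rintro rfl
    simp [siegelPoint_mem_H2_iff] at hM
  rw [← moeb_inversionMatrix hτ, hF.2.1 _ inversionMatrix_mem_Sp4Z _ hM, den_inversionMatrix, wt,
    one_smul, Pi.smul_apply, symAct_apply_last_of_unipotent j rfl rfl, det_fin_two_of]
  simp

lemma tendsto_siegelPoint (hF : IsSiegelCuspForm j k Sp4Z (fun _ => 1) F) {τ : ℂ} (hτ : 0 < τ.im) :
    Tendsto (fun t : ℝ => F (siegelPoint τ 0 (t * I))) atTop (𝓝 0) := by
  refine (hF.2.2.1 _ (translationMatrix_mem_Sp4Z 0 0 0) τ hτ).congr fun t => ?_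
  have hdiag : diagH τ (t * I) = siegelPoint τ 0 (t * I) := by
    funext i j
    fin_cases i <;> fin_cases j <;> simp [diagH, siegelPoint]
  rw [hdiag, slashS, den_translationMatrix, moeb_translationMatrix]
  simp [symAct_one]

end IsSiegelCuspForm

section FourierExpansion

variable {κ : Type*} {F : (Fin 2 → Fin 2 → ℂ) → κ → ℂ} {A B : ℤ → ℤ → ℤ → κ → ℂ}

/-- `F` has the Fourier expansion `∑ A(n, r, m) e(nτ + rz + mτ')` on the Siegel upper half space.
The sum runs over `(m, (n, r))`, so that the terms with a fixed first index make up the `m`-th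
Fourier–Jacobi coefficient. -/
def HasFourierExpansion (F : (Fin 2 → Fin 2 → ℂ) → κ → ℂ) (A : ℤ → ℤ → ℤ → κ → ℂ) : Prop :=
  ∀ τ z τ' : ℂ, siegelPoint τ z τ' ∈ H2 → ∀ i,
    HasSum (fun t : ℤ × ℤ × ℤ => jacobiTerm (fun n r => A n r t.1 i) τ z t.2 * expTwoPiI (t.1 * τ'))
      (F (siegelPoint τ z τ') i)

lemma IsSiegelCuspForm.exists_hasFourierExpansion {j : ℕ} {k : ℤ}
    {F : (Fin 2 → Fin 2 → ℂ) → Fin (j + 1) → ℂ}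
    (hF : IsSiegelCuspForm j k Sp4Z (fun _ => 1) F) : ∃ A, HasFourierExpansion F A := by
  let g (i : Fin (j + 1)) (w : Fin 3 → ℂ) : ℂ := F (siegelPoint (w 0) (w 1) (w 2)) i
  have hg (i) : IsIntPeriodic (g i) := fun w l =>
    congrFun (hF.apply_add_intCast (l 0) (l 1) (l 2) _ _ _) i
  have hd (i) : DifferentiableOn ℂ (g i) (tubeDomain posDefCone) := by
    have hpt : Differentiable ℂ fun w : Fin 3 → ℂ => siegelPoint (w 0) (w 1) (w 2) := by
      refine differentiable_pi.mpr fun a => differentiable_pi.mpr fun b => ?_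
      fin_cases a <;> fin_cases b <;> exact differentiable_apply _
    exact differentiableOn_pi.mp (hF.1.comp hpt.differentiableOn fun w hw =>
      mem_tubeDomain_posDefCone_iff.mp hw) i
  choose A hA using fun i => (hg i).exists_hasSum_planeWave (hd i) isOpen_posDefCone
    convex_posDefCone.isPreconnected
  let e : ℤ × ℤ × ℤ ≃ (Fin 3 → ℤ) :=
    ⟨fun t => ![t.2.1, t.2.2, t.1], fun T => (T 2, T 0, T 1), fun _ => rfl,
      fun T => funext fun i => by fin_cases i <;> rfl⟩
  have he (t) : e t = ![t.2.1, t.2.2, t.1] := rfl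
  refine ⟨fun n r m i => A i ![n, r, m], fun τ z τ' hM i => ?_⟩
  refine (e.hasSum_iff.mpr (hA i ![τ, z, τ'] (mem_tubeDomain_posDefCone_iff.mpr hM))).congr_fun
    fun t => ?_
  simp [he, jacobiTerm, planeWave, Fin.sum_univ_three, expTwoPiI_add, mul_assoc]

lemma eq_zero_of_hasSum_mul_expTwoPiI {c : ℤ → ℤ → ℤ → ℂ}
    (h : ∀ x y x' : ℝ, HasSum (fun t : ℤ × ℤ × ℤ => c t.1 t.2.1 t.2.2 * expTwoPiI (t.2.2 * y) *
      expTwoPiI (t.2.1 * x) * expTwoPiI (t.1 * x')) 0) : c = 0 := by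
  funext m n
  have hm (x y : ℝ) := hasSum_zero_of_hasSum_mul_expTwoPiI
    (d := fun (m : ℤ) (t : ℤ × ℤ) => c m t.1 t.2 * expTwoPiI (t.2 * y) * expTwoPiI (t.1 * x))
    (h x y) m
  have hn (y : ℝ) := hasSum_zero_of_hasSum_mul_expTwoPiI
    (d := fun n r => c m n r * expTwoPiI (r * y)) (fun x => hm x y) n
  exact eq_zero_of_hasSum_expTwoPiI (c := c m n) hn

namespace HasFourierExpansion

lemma unique (hA : HasFourierExpansion F A) (hB : HasFourierExpansion F B) : A = B := by
  funext n r m i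
  have hzero := eq_zero_of_hasSum_mul_expTwoPiI
    (c := fun m n r => (A n r m i - B n r m i) * expTwoPiI (n * I) * expTwoPiI (m * I))
    fun x y x' => by
      have hM : siegelPoint (x + I) y (x' + I) ∈ H2 := by simp [siegelPoint_mem_H2_iff]
      have hsub := (hA _ _ _ hM i).sub (hB _ _ _ hM i)
      rw [sub_self] at hsub
      refine hsub.congr_fun fun t => ?_
      simp only [jacobiTerm, mul_add, expTwoPiI_add]
      ring
  simpa [expTwoPiI_ne_zero, sub_eq_zero] using congrFun (congrFun (congrFun hzero m) n) r

lemma summable_jacobiTerm (hA : HasFourierExpansion F A) (m : ℤ) (i : κ) (τ z : ℂ)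
    (hτ : 0 < τ.im) : Summable (jacobiTerm (fun n r => A n r m i) τ z) := by
  obtain ⟨y, hy⟩ := (eventually_siegelPoint_mem_H2 hτ z 0).exists
  have hsum := (hA _ _ _ (hy 0) i).summable.prod_factor m
  exact (summable_mul_right_iff (expTwoPiI_ne_zero (m * ((0 : ℝ) + y * I + 0)))).mp hsum

lemma hasSum_jacobiSeries_mul (hA : HasFourierExpansion F A) {τ z τ' : ℂ}
    (hM : siegelPoint τ z τ' ∈ H2) (i : κ) :
    HasSum (fun m : ℤ => jacobiSeries (fun n r => A n r m i) τ z * expTwoPiI (m * τ'))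
      (F (siegelPoint τ z τ') i) :=
  (hA _ _ _ hM i).prod_fiberwise fun m =>
    (hA.summable_jacobiTerm m i τ z (siegelPoint_mem_H2_iff.mp hM).1).hasSum.mul_right _

end HasFourierExpansion

/-- The action of `U = (a b; c d)` on the exponents `(m, (n, r))` of a Fourier expansion, viewed as
half-integral matrices `T = (n r/2; r/2 m)` under `T ↦ U T Uᵗ`. -/
def unimodularShift {a b c d : ℤ} (h : a * d - b * c = 1) : ℤ × ℤ × ℤ ≃ ℤ × ℤ × ℤ where
  toFun t := (t.2.1 * c ^ 2 + t.2.2 * c * d + t.1 * d ^ 2,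
    t.2.1 * a ^ 2 + t.2.2 * a * b + t.1 * b ^ 2,
    2 * t.2.1 * a * c + t.2.2 * (a * d + b * c) + 2 * t.1 * b * d)
  invFun t := (t.2.1 * c ^ 2 - t.2.2 * c * a + t.1 * a ^ 2,
    t.2.1 * d ^ 2 - t.2.2 * d * b + t.1 * b ^ 2,
    -2 * t.2.1 * d * c + t.2.2 * (a * d + b * c) - 2 * t.1 * b * a)
  left_inv t := by
    ext <;> dsimp only
    · linear_combination (t.1 * (a * d - b * c + 1)) * h
    · linear_combination (t.2.1 * (a * d - b * c + 1)) * h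
    · linear_combination (t.2.2 * (a * d - b * c + 1)) * h
  right_inv t := by
    ext <;> dsimp only
    · linear_combination (t.1 * (a * d - b * c + 1)) * h
    · linear_combination (t.2.1 * (a * d - b * c + 1)) * h
    · linear_combination (t.2.2 * (a * d - b * c + 1)) * h

lemma HasFourierExpansion.isSL2Equivariant {j : ℕ} {k : ℤ}
    {F : (Fin 2 → Fin 2 → ℂ) → Fin (j + 1) → ℂ} {A : ℤ → ℤ → ℤ → Fin (j + 1) → ℂ}
    (hA : HasFourierExpansion F A) (hF : IsSiegelCuspForm j k Sp4Z (fun _ => 1) F) :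
    IsSL2Equivariant A := by
  intro a b c d h n r m
  have hdet : (a * d - b * c : ℂ) = 1 := by exact_mod_cast h
  have hmoved : HasFourierExpansion (fun M => symAct j !![(a : ℂ), b; c, d] (F M))
      fun n r m => A (unimodularShift h (m, n, r)).2.1 (unimodularShift h (m, n, r)).2.2
        (unimodularShift h (m, n, r)).1 := by
    intro τ z τ' hM i
    have hsum := (unimodularShift h).hasSum_iff.mpr
      (hA _ _ _ (siegelPoint_unimodular_mem_H2 h hM) i)
    rw [hF.apply_unimodular h hM] at hsum
    refine hsum.congr_fun fun t => ?_
    simp only [Function.comp, jacobiTerm, mul_assoc, ← expTwoPiI_add]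
    congr 2
    simp only [unimodularShift, Equiv.coe_fn_mk]
    push_cast
    linear_combination -(t.2.1 * τ + t.2.2 * z + t.1 * τ') * (a * d - b * c + 1) * hdet
  have hsymAct : HasFourierExpansion (fun M => symAct j !![(a : ℂ), b; c, d] (F M))
      fun n r m => symAct j !![(a : ℂ), b; c, d] (A n r m) := by
    intro τ z τ' hM i
    refine (hasSum_sum fun l (_ : l ∈ Finset.univ) => (hA _ _ _ hM l).mul_left
      (symCoeff j !![(a : ℂ), b; c, d] l i)).congr_fun fun t => ?_
    simp only [jacobiTerm, symAct, Finset.sum_mul, mul_assoc]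
  exact congrFun (congrFun (congrFun (hmoved.unique hsymAct) n) r) m

end FourierExpansion

section SupportOfExpansion

lemma exists_unimodular_of_discriminant_nonpos {n r m : ℤ} (hm : 0 < m)
    (hD : 4 * n * m - r ^ 2 ≤ 0) :
    ∃ a b c d : ℤ, a * d - b * c = 1 ∧ (n * c ^ 2 + r * c * d + m * d ^ 2 < 0 ∨
      n * c ^ 2 + r * c * d + m * d ^ 2 = 0 ∧
        2 * n * a * c + r * (a * d + b * c) + 2 * m * b * d = 0) := by
  obtain ⟨c, d, hcd, hc, hd⟩ := Int.exists_gcd_one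
    (Int.gcd_pos_of_ne_zero_left (-r) (by positivity : 2 * m ≠ 0))
  set g : ℤ := (Int.gcd (2 * m) (-r) : ℤ)
  obtain ⟨u, v, huv⟩ := Int.isCoprime_iff_gcd_eq_one.mpr hcd
  have hdet : v * d - -u * c = 1 := by linarith
  have hg : 0 < g := (Int.natCast_nonneg _).lt_of_ne' fun (hg : g = 0) => by
    rw [hg, mul_zero] at hc
    omega
  have hm' : g ^ 2 * (n * c ^ 2 + r * c * d + m * d ^ 2) = m * (4 * n * m - r ^ 2) := by
    linear_combination -(n * (2 * m + c * g) + r * d * g) * hc - m * (d * g + r) * hd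
  refine ⟨v, -u, c, d, hdet, hD.lt_or_eq.imp (fun hlt => ?_) fun heq => ?_⟩
  · exact (pos_iff_neg_of_mul_neg (hm'.trans_lt (mul_neg_of_pos_of_neg hm hlt))).mp (pow_pos hg 2)
  · have hzero : n * c ^ 2 + r * c * d + m * d ^ 2 = 0 := by
      simpa [heq, hg.ne'] using hm'
    refine ⟨hzero, pow_eq_zero_iff two_ne_zero |>.mp ?_⟩
    linear_combination 4 * (n * v ^ 2 + r * v * -u + m * (-u) ^ 2) * hzero -
      (v * d - -u * c) ^ 2 * heq

lemma exists_forall_quadratic_le (n : ℤ) {r m : ℤ} (h : m < 0 ∨ m = 0 ∧ r ≠ 0) :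
    ∃ s : ℤ, s ≠ 0 ∧ ∀ t : ℕ, n + r * (s * t) + m * (s * t) ^ 2 ≤ n - t := by
  obtain ⟨s, hs, hrs⟩ : ∃ s : ℤ, s ^ 2 = 1 ∧ r * s = -|r| := by
    rcases le_total 0 r with hr | hr
    · exact ⟨-1, rfl, by simp [abs_of_nonneg hr]⟩
    · exact ⟨1, rfl, by simp [abs_of_nonpos hr]⟩
  refine ⟨s, by rintro rfl; simp at hs, fun t => ?_⟩
  have hquad : n + r * (s * t) + m * (s * t) ^ 2 = n - |r| * t + m * (t : ℤ) ^ 2 := by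
    linear_combination t * hrs + m * t ^ 2 * hs
  rw [hquad]
  rcases h with hm | ⟨rfl, hr⟩
  · have ht : (t : ℤ) ≤ t ^ 2 := mod_cast Nat.le_self_pow two_ne_zero t
    nlinarith [mul_nonneg (abs_nonneg r) (Int.natCast_nonneg t)]
  · nlinarith [Int.one_le_abs hr, Int.natCast_nonneg t]

section Equivariance

variable {j : ℕ} {A : ℤ → ℤ → ℤ → Fin (j + 1) → ℂ}

lemma IsSL2Equivariant.eq_zero_of_unimodular (hE : IsSL2Equivariant A) {a b c d : ℤ}
    (h : a * d - b * c = 1) {n r m : ℤ}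
    (h0 : A (n * a ^ 2 + r * a * b + m * b ^ 2)
      (2 * n * a * c + r * (a * d + b * c) + 2 * m * b * d)
      (n * c ^ 2 + r * c * d + m * d ^ 2) = 0) : A n r m = 0 := by
  have hinv := hE d (-b) (-c) a (by linarith) (n * a ^ 2 + r * a * b + m * b ^ 2)
    (2 * n * a * c + r * (a * d + b * c) + 2 * m * b * d) (n * c ^ 2 + r * c * d + m * d ^ 2)
  rw [h0, symAct_zero] at hinv
  convert hinv using 1
  congr 1
  · linear_combination -(n * (a * d - b * c + 1)) * h
  · linear_combination -(r * (a * d - b * c + 1)) * h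
  · linear_combination -(m * (a * d - b * c + 1)) * h

lemma IsSL2Equivariant.apply_translate_last (hE : IsSL2Equivariant A) (n r m b : ℤ) :
    A (n + r * b + m * b ^ 2) (r + 2 * m * b) m (Fin.last j) = A n r m (Fin.last j) := by
  have h := congrFun (hE 1 b 0 1 (by ring) n r m) (Fin.last j)
  rw [symAct_apply_last_of_unipotent j (by simp) (by simp)] at h
  rw [← h]
  ring_nf

end Equivariance

lemma norm_expTwoPiI_intCast_mul_I (m : ℤ) (t : ℝ) :
    ‖expTwoPiI (m * (t * I))‖ = Real.exp (-(2 * Real.pi * m * t)) := by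
  simp [norm_expTwoPiI, mul_assoc]

lemma tendsto_expTwoPiI_intCast_mul_I {m : ℤ} (hm : 0 < m) :
    Tendsto (fun t : ℝ => expTwoPiI (m * (t * I))) atTop (𝓝 0) := by
  have hm' : (0 : ℝ) < 2 * Real.pi * m := mul_pos Real.two_pi_pos (mod_cast hm)
  rw [tendsto_zero_iff_norm_tendsto_zero]
  simp only [norm_expTwoPiI_intCast_mul_I]
  exact Real.tendsto_exp_neg_atTop_nhds_zero.comp (tendsto_id.const_mul_atTop hm')

namespace HasFourierExpansion

variable {j : ℕ} {F : (Fin 2 → Fin 2 → ℂ) → Fin (j + 1) → ℂ}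
  {A : ℤ → ℤ → ℤ → Fin (j + 1) → ℂ}

lemma apply_last_eq_zero (hA : HasFourierExpansion F A) (hE : IsSL2Equivariant A) (n : ℤ)
    {r m : ℤ} (h : m < 0 ∨ m = 0 ∧ r ≠ 0) : A n r m (Fin.last j) = 0 := by
  obtain ⟨s, -, hs⟩ := exists_forall_quadratic_le n h
  have hM : siegelPoint I 0 I ∈ H2 := by simp [siegelPoint_mem_H2_iff]
  have hsum := (hA _ _ _ hM (Fin.last j)).summable.norm
  have hbound (t : ℕ) : ‖A n r m (Fin.last j)‖ * Real.exp (2 * Real.pi * (t - n - m)) ≤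
      ∑' t : ℤ × ℤ × ℤ, ‖jacobiTerm (fun n r => A n r t.1 (Fin.last j)) I 0 t.2 *
        expTwoPiI (t.1 * I)‖ := by
    refine le_trans ?_ (hsum.le_tsum
      (m, n + r * (s * t) + m * (s * t) ^ 2, r + 2 * m * (s * t)) fun _ _ => norm_nonneg _)
    have hle : ((n + r * (s * t) + m * (s * t) ^ 2 : ℤ) : ℝ) ≤ n - t := by exact_mod_cast hs t
    dsimp only [jacobiTerm]
    rw [hE.apply_translate_last, mul_assoc (A n r m _), ← expTwoPiI_add, norm_mul, norm_expTwoPiI]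
    gcongr
    simp only [mul_zero, add_zero, add_im, mul_im, intCast_re, intCast_im, I_re, I_im, mul_one]
    nlinarith [Real.pi_pos]
  by_contra hne
  have htendsto : Tendsto (fun t : ℕ => ‖A n r m (Fin.last j)‖ *
      Real.exp (2 * Real.pi * (t - n - m))) atTop atTop :=
    (Real.tendsto_exp_atTop.comp <| ((tendsto_natCast_atTop_atTop.atTop_add
      tendsto_const_nhds).atTop_add tendsto_const_nhds).const_mul_atTop Real.two_pi_pos
      ).const_mul_atTop (norm_pos_iff.mpr hne)
  obtain ⟨t, ht⟩ := (htendsto.eventually_gt_atTop _).exists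
  exact ht.not_ge (hbound t)

lemma koecher_principle (hA : HasFourierExpansion F A) (hE : IsSL2Equivariant A) (n : ℤ) {r m : ℤ}
    (h : m < 0 ∨ m = 0 ∧ r ≠ 0) : A n r m = 0 := by
  obtain ⟨s, hs0, hs⟩ := exists_forall_quadratic_le n h
  refine Matrix.eq_zero_of_forall_index_sum_pow_mul_eq_zero
    (f := fun k : Fin (j + 1) => (s * (k + n.natAbs + 1 : ℕ) : ℂ))
    (fun k k' hk => Fin.ext (by simpa [hs0] using hk)) fun k => ?_
  set t := (k : ℕ) + n.natAbs + 1
  have hneg : n * 1 ^ 2 + r * 1 * (s * t) + m * (s * t) ^ 2 < 0 := by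
    have hst := hs t
    rw [one_pow, mul_one, mul_one]
    omega
  have hlast := congrFun (hE 0 (-1) 1 (s * t) (by ring) n r m) (Fin.last j)
  rw [hA.apply_last_eq_zero hE _ (.inl hneg), symAct_apply_last] at hlast
  simpa using hlast.symm

/-- The limit is the Siegel `Φ`-operator, here expressed by the Fourier expansion. -/
lemma tendsto_siegelPoint {κ : Type*} {F : (Fin 2 → Fin 2 → ℂ) → κ → ℂ}
    {A : ℤ → ℤ → ℤ → κ → ℂ} (hA : HasFourierExpansion F A) {i : κ}
    (hneg : ∀ n r m, m < 0 → A n r m i = 0) {τ : ℂ} (hτ : 0 < τ.im) (z : ℂ) :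
    Tendsto (fun t : ℝ => F (siegelPoint τ z (t * I)) i) atTop
      (𝓝 (jacobiSeries (fun n r => A n r 0 i) τ z)) := by
  let f (t : ℝ) (p : ℤ × ℤ × ℤ) : ℂ :=
    jacobiTerm (fun n r => A n r p.1 i) τ z p.2 * expTwoPiI (p.1 * (t * I))
  let g : ℤ × ℤ × ℤ → ℂ :=
    fun p => if p.1 = 0 then jacobiTerm (fun n r => A n r p.1 i) τ z p.2 else 0
  have hfneg (t : ℝ) (p : ℤ × ℤ × ℤ) (hp : p.1 < 0) : f t p = 0 := by
    simp [f, jacobiTerm, hneg _ _ _ hp]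
  have hf (p) : Tendsto (fun t => f t p) atTop (𝓝 (g p)) := by
    rcases lt_trichotomy p.1 0 with hp | hp | hp
    · simp [hfneg _ p hp, g, hp.ne]
    · simp [f, g, hp, expTwoPiI_zero]
    · simpa [f, g, hp.ne'] using (tendsto_expTwoPiI_intCast_mul_I hp).const_mul
        (jacobiTerm (fun n r => A n r p.1 i) τ z p.2)
  have hmem : ∀ᶠ t : ℝ in atTop, siegelPoint τ z (t * I) ∈ H2 := by
    filter_upwards [eventually_siegelPoint_mem_H2 hτ z 0] with t ht
    simpa using ht 0
  obtain ⟨t₀, ht₀⟩ := hmem.exists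
  have hle : ∀ᶠ t : ℝ in atTop, ∀ p, ‖f t p‖ ≤ ‖f t₀ p‖ := by
    filter_upwards [eventually_ge_atTop t₀] with t ht p
    rcases lt_or_ge p.1 0 with hp | hp
    · rw [hfneg t p hp, hfneg t₀ p hp]
    · have _ : (0 : ℝ) ≤ p.1 := mod_cast hp
      simp only [f, norm_mul, norm_expTwoPiI_intCast_mul_I]
      gcongr
  have htsum : ∑' p, g p = jacobiSeries (fun n r => A n r 0 i) τ z := by
    rw [← (Prod.mk_right_injective (0 : ℤ)).tsum_eq fun p hp => ?_]
    · simp [g, jacobiSeries]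
    · have hp₀ : p.1 = 0 := by_contra fun h => hp (if_neg h)
      exact ⟨p.2, by simp [← hp₀]⟩
  rw [← htsum]
  refine (tendsto_tsum_of_dominated_convergence (hA _ _ _ ht₀ i).summable.norm hf hle).congr' ?_
  filter_upwards [hmem] with t ht using (hA _ _ _ ht i).tsum_eq

lemma apply_zero_zero (hA : HasFourierExpansion F A) (hE : IsSL2Equivariant A)
    (hlim : ∀ τ : ℂ, 0 < τ.im → Tendsto (fun t : ℝ => F (siegelPoint τ 0 (t * I))) atTop (𝓝 0))
    (n : ℤ) : A n 0 0 = 0 := by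
  funext i
  have hsum (x : ℝ) :
      HasSum (fun n : ℤ => A n 0 0 i * expTwoPiI (n * I) * expTwoPiI (n * x)) 0 := by
    have him : 0 < ((x : ℂ) + I).im := by simp
    have hjac : jacobiSeries (fun n r => A n r 0 i) (x + I) 0 = 0 :=
      tendsto_nhds_unique
        (hA.tendsto_siegelPoint (fun n r m hm => congrFun (hA.koecher_principle hE n (.inl hm)) i)
          him 0)
        (tendsto_pi_nhds.mp (hlim _ him) i)
    have hsum := (hA.summable_jacobiTerm 0 i (x + I) 0 him).hasSum_iff.mpr hjac
    rw [← (Prod.mk_left_injective (0 : ℤ)).hasSum_iff fun t ht => ?_] at hsum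
    · refine hsum.congr_fun fun n => ?_
      simp only [jacobiTerm, Function.comp_apply, mul_zero, add_zero, mul_add, expTwoPiI_add]
      ring
    · have ht₂ : t.2 ≠ 0 := fun h => ht ⟨t.1, by simp [← h]⟩
      simp [jacobiTerm, hA.koecher_principle hE t.1 (.inr ⟨rfl, ht₂⟩)]
  simpa [expTwoPiI_ne_zero] using congrFun (eq_zero_of_hasSum_expTwoPiI hsum) n

lemma pos_of_ne_zero (hA : HasFourierExpansion F A) (hE : IsSL2Equivariant A)
    (hlim : ∀ τ : ℂ, 0 < τ.im → Tendsto (fun t : ℝ => F (siegelPoint τ 0 (t * I))) atTop (𝓝 0))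
    {n r m : ℤ} (h : A n r m ≠ 0) : 0 < n ∧ 0 < 4 * n * m - r ^ 2 := by
  have hm : 0 < m := by
    by_contra! hm
    refine h (hm.lt_or_eq.elim (fun hm => hA.koecher_principle hE n (.inl hm)) fun hm => ?_)
    rcases eq_or_ne r 0 with rfl | hr
    · exact hm ▸ hA.apply_zero_zero hE hlim n
    · exact hA.koecher_principle hE n (.inr ⟨hm, hr⟩)
  have hD : 0 < 4 * n * m - r ^ 2 := by
    by_contra! hD
    obtain ⟨a, b, c, d, hdet, hmov⟩ := exists_unimodular_of_discriminant_nonpos hm hD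
    refine h (hE.eq_zero_of_unimodular hdet ?_)
    rcases hmov with hneg | ⟨hm₀, hr₀⟩
    · exact hA.koecher_principle hE _ (.inl hneg)
    · rw [hm₀, hr₀]
      exact hA.apply_zero_zero hE hlim _
  exact ⟨by nlinarith [sq_nonneg r], hD⟩

end HasFourierExpansion

end SupportOfExpansion

namespace IsSiegelCuspForm

variable {j : ℕ} {F : (Fin 2 → Fin 2 → ℂ) → Fin (j + 1) → ℂ} {A : ℤ → ℤ → ℤ → Fin (j + 1) → ℂ}

lemma jacobiSeries_slash_S {k : ℤ} (hF : IsSiegelCuspForm j k Sp4Z (fun _ => 1) F)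
    (hA : HasFourierExpansion F A) {τ : ℂ} (hτ : 0 < τ.im) (z : ℂ) (m : ℤ) :
    jacobiSeries (fun n r => A n r m (Fin.last j)) (-1 / τ) (z / τ) =
      τ ^ k * expTwoPiI (m * z ^ 2 / τ) * jacobiSeries (fun n r => A n r m (Fin.last j)) τ z := by
  let J (m : ℤ) : ℂ → ℂ → ℂ := jacobiSeries fun n r => A n r m (Fin.last j)
  obtain ⟨y, hy, hy'⟩ := ((eventually_siegelPoint_mem_H2 hτ z 0).and
    (eventually_siegelPoint_mem_H2 (neg_one_div_im_pos hτ) (z / τ) (-(z ^ 2 / τ)))).exists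
  have hsum (x : ℝ) : HasSum (fun m : ℤ =>
      (J m (-1 / τ) (z / τ) * expTwoPiI (m * (y * I - z ^ 2 / τ)) -
        τ ^ k * (J m τ z * expTwoPiI (m * (y * I)))) * expTwoPiI (m * x)) 0 := by
    have hsum₁ := hA.hasSum_jacobiSeries_mul (hy' x) (Fin.last j)
    have hsum₂ := (hA.hasSum_jacobiSeries_mul (hy x) (Fin.last j)).mul_left (τ ^ k)
    rw [add_zero] at hsum₂
    rw [← sub_eq_add_neg, hF.apply_last_inversion (by simpa using hy x)] at hsum₁
    have hsub := hsum₁.sub hsum₂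
    rw [sub_self] at hsub
    refine hsub.congr_fun fun m => ?_
    simp only [J, add_sub_assoc, mul_add, expTwoPiI_add]
    ring
  have hzero := congrFun (eq_zero_of_hasSum_expTwoPiI hsum) m
  rw [Pi.zero_apply] at hzero
  have hexp : expTwoPiI (m * (y * I)) =
      expTwoPiI (m * z ^ 2 / τ) * expTwoPiI (m * (y * I - z ^ 2 / τ)) := by
    rw [← expTwoPiI_add]
    ring_nf
  rw [hexp] at hzero
  refine mul_right_cancel₀ (expTwoPiI_ne_zero (m * (y * I - z ^ 2 / τ))) ?_
  linear_combination hzero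

lemma isSiegelCuspExpansion (hF : IsSiegelCuspForm j 1 Sp4Z (fun _ => 1) F)
    (hA : HasFourierExpansion F A) : IsSiegelCuspExpansion A := by
  have hE := hA.isSL2Equivariant hF
  have hsupp (n r m : ℤ) (h : A n r m ≠ 0) :=
    hA.pos_of_ne_zero hE (fun _ hτ => hF.tendsto_siegelPoint hτ) h
  refine ⟨fun m _ => ⟨fun n r h => ?_, hA.summable_jacobiTerm m _, fun n r => ?_,
    fun τ z hτ => ?_⟩, hE, hsupp⟩
  · exact sub_pos.mp (hsupp n r m fun h₀ => h (congrFun h₀ _)).2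
  · simpa using hE.apply_translate_last n r m 1
  · simpa using hF.jacobiSeries_slash_S hA hτ z m

theorem eq_zero (hF : IsSiegelCuspForm j 1 Sp4Z (fun _ => 1) F) : F = 0 := by
  obtain ⟨A, hA⟩ := hF.exists_hasFourierExpansion
  have hA₀ := (hF.isSiegelCuspExpansion hA).eq_zero
  funext M
  by_cases hM : M ∈ H2
  · funext i
    have hM' := eq_siegelPoint_of_mem_H2 hM
    rw [hM'] at hM ⊢
    have hsum := hA _ _ _ hM i
    simp only [jacobiTerm, hA₀, Pi.zero_apply, zero_mul] at hsum
    exact hsum.unique hasSum_zero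
  · exact hF.2.2.2 M hM

end IsSiegelCuspForm

/-- For every integer `j ≥ 0`, the space `S_{j,1}(Γ₂)` of Siegel cusp forms of degree 2 and
weight `(j,1)` on `Γ₂ = Sp(4,ℤ)` is zero. -/
theorem vanishing_Sj1_level_one (j : ℕ) :
    SiegelCusp j 1 Sp4Z (fun _ => 1) = ⊥ :=
  (Submodule.eq_bot_iff _).mpr fun _ hF => IsSiegelCuspForm.eq_zero hF
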